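/- arXiv:0804.3032 — 3 statements merged into one kernel-verified Lean document; each statement's English description precedes it below -/
import Mathlib

section
/- Let β > 0 and let m ≥ 1 be an integer. There exists K > 0 depending only on m and β such that for all integers n ≥ 1 and all 1 ≤ a < b < c ≤ n, E[m(a,b)·m(a,c)] = (m(1+β)/(2+β) + m(m−1)(1+β)²/(2+β)²) · (a²·b^{1+β}·c^{1+β})^{−1/(2+β)} · (1+θ) for some real θ with |θ| ≤ K/a. -/
open Finset

/-- A parent sequence of length `N`: for each `t ∈ {2,…,N}` an index `f t ∈ {1,…,t-1}`. -/
def ParentSeq (N : ℕ) : Type :=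
  ∀ t : Set.Icc 2 N, Set.Icc 1 ((t : ℕ) - 1)

noncomputable instance (N : ℕ) : Fintype (ParentSeq N) := by
  unfold ParentSeq
  classical
  infer_instance

/-- The value of a parent sequence at `j` (junk value `0` outside `{2,…,N}`). -/
def pval {N : ℕ} (f : ParentSeq N) (j : ℕ) : ℕ :=
  if h : 2 ≤ j ∧ j ≤ N then (f ⟨j, Set.mem_Icc.mpr h⟩ : ℕ) else 0

/-- The degree `d_t(v_i)` of vertex `i` at time `t` in the tree determined by `f`. -/
def deg {N : ℕ} (f : ParentSeq N) (t i : ℕ) : ℕ :=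
  ((Finset.Icc 2 t).filter (fun j => pval f j = i)).card + (if 2 ≤ i then 1 else 0)

/-- The Móri probability of the parent sequence `f`. -/
noncomputable def moriP {N : ℕ} (β : ℝ) (f : ParentSeq N) : ℝ :=
  ∏ t ∈ Finset.Icc 2 N, ((deg f (t - 1) (pval f t) : ℝ) + β) / ((2 + β) * ((t : ℝ) - 1) - 2)

/-- Expectation of `X` under the Móri measure on parent sequences of length `N`. -/
noncomputable def moriE (N : ℕ) (β : ℝ) (X : ParentSeq N → ℝ) : ℝ :=
  ∑ f : ParentSeq N, moriP β f * X f

open Classical in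
/-- Probability of an event under the Móri measure on parent sequences of length `N`. -/
noncomputable def moriPr (N : ℕ) (β : ℝ) (p : ParentSeq N → Prop) : ℝ :=
  ∑ f : ParentSeq N, if p f then moriP β f else 0

/-- The index of the merged vertex containing tree vertex `t` when merging in blocks of `m`. -/
def blk (m t : ℕ) : ℕ := (t - 1) / m + 1

/-- The number `m(a,b)` of edges joining `u_a` and `u_b` in the Móri graph `G^n_{m,β}`. -/
def mult (n m : ℕ) (f : ParentSeq (n * m)) (a b : ℕ) : ℕ :=
  ((Finset.Icc 2 (n * m)).filter (fun t =>
    (blk m t = a ∧ blk m (pval f t) = b) ∨ (blk m t = b ∧ blk m (pval f t) = a))).card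

/-- The degree `d(u_i)` of the merged vertex `u_i` in the Móri graph `G^n_{m,β}`
(a loop contributes `2`). -/
def degU (n m : ℕ) (f : ParentSeq (n * m)) (i : ℕ) : ℕ :=
  ((Finset.Icc 2 (n * m)).filter (fun t => blk m t = i)).card +
  ((Finset.Icc 2 (n * m)).filter (fun t => blk m (pval f t) = i)).card


namespace Mori

theorem pval_inj {N : ℕ} {f g : ParentSeq N} (h : ∀ j, pval f j = pval g j) : f = g := by
  funext t
  apply Subtype.ext
  have := h t.1
  have ht : 2 ≤ t.1 ∧ t.1 ≤ N := Set.mem_Icc.mp t.2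
  simpa [pval, ht] using this

theorem pval_pos {N : ℕ} (f : ParentSeq N) {j : ℕ} (h1 : 2 ≤ j) (h2 : j ≤ N) :
    1 ≤ pval f j ∧ pval f j ≤ j - 1 := by
  have h : 2 ≤ j ∧ j ≤ N := ⟨h1, h2⟩
  have := (f ⟨j, Set.mem_Icc.mpr h⟩).2
  simp only [pval, h, and_self, dif_pos]
  exact Set.mem_Icc.mp this

/-- extension of a parent sequence -/
def ext {N : ℕ} (p : ParentSeq N × Set.Icc 1 N) : ParentSeq (N + 1) := fun t =>
  if h : t.1 ≤ N then p.1 ⟨t.1, Set.mem_Icc.mpr ⟨(Set.mem_Icc.mp t.2).1, h⟩⟩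
  else ⟨p.2.1, by
    have h1 := Set.mem_Icc.mp t.2
    have h2 := Set.mem_Icc.mp p.2.2
    exact Set.mem_Icc.mpr ⟨h2.1, by omega⟩⟩

theorem pval_ext {N : ℕ} (hN : 1 ≤ N) (p : ParentSeq N × Set.Icc 1 N) :
    pval (ext p) = Function.update (pval p.1) (N + 1) p.2.1 := by
  funext j
  by_cases hj : j = N + 1
  · subst hj
    simp [pval, ext, hN]
  · rw [Function.update_of_ne hj]
    by_cases h : 2 ≤ j ∧ j ≤ N
    · have h' : 2 ≤ j ∧ j ≤ N + 1 := ⟨h.1, by omega⟩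
      simp [pval, ext, h, h']
    · have h' : ¬ (2 ≤ j ∧ j ≤ N + 1) := by omega
      simp [pval, h, h']

theorem ext_bij {N : ℕ} (hN : 1 ≤ N) : Function.Bijective (ext (N := N)) := by
  constructor
  · rintro ⟨f, i⟩ ⟨f', i'⟩ h
    have h1 := pval_ext hN (f, i)
    rw [h, pval_ext hN] at h1
    have h2 : i = i' := by
      have := congrFun h1 (N + 1)
      simp at this
      exact Subtype.ext this.symm
    have h3 : f = f' := by
      apply pval_inj
      intro j
      by_cases hj : j = N + 1
      · subst hj; simp [pval]
      · have := congrFun h1 j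
        simp [hj] at this
        exact this.symm
    rw [h2, h3]
  · intro f
    refine ⟨(fun t => f ⟨t.1, Set.mem_Icc.mpr ⟨(Set.mem_Icc.mp t.2).1, by
      have := (Set.mem_Icc.mp t.2).2; omega⟩⟩, ⟨pval f (N+1), ?_⟩), ?_⟩
    · have := pval_pos f (j := N+1) (by omega) le_rfl
      exact Set.mem_Icc.mpr (by simpa using this)
    · apply pval_inj
      intro j
      rw [pval_ext hN]
      by_cases hj : j = N + 1
      · subst hj; simp
      · rw [Function.update_of_ne hj]
        by_cases h : 2 ≤ j ∧ j ≤ N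
        · have h' : 2 ≤ j ∧ j ≤ N + 1 := ⟨h.1, by omega⟩
          simp [pval, h, h']
        · have h' : ¬ (2 ≤ j ∧ j ≤ N + 1) := by omega
          simp [pval, h, h']

/-- degree as a function of the parent function -/
def degg (g : ℕ → ℕ) (t i : ℕ) : ℕ :=
  ((Finset.Icc 2 t).filter (fun j => g j = i)).card + (if 2 ≤ i then 1 else 0)

theorem degg_update (g : ℕ → ℕ) {N t : ℕ} (i k : ℕ) (h : t ≤ N) :
    degg (Function.update g (N + 1) k) t i = degg g t i := by
  unfold degg
  congr 2
  apply Finset.filter_congr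
  intro j hj
  rw [Function.update_of_ne (by have := Finset.mem_Icc.mp hj; omega)]

/-- the expectation functional -/
noncomputable def W (β : ℝ) (N : ℕ) (X : (ℕ → ℕ) → ℝ) : ℝ :=
  ∑ f : ParentSeq N, moriP β f * X (pval f)

/-- normalisation -/
noncomputable def D (β : ℝ) (N : ℕ) : ℝ := (2 + β) * (N : ℝ) - 2

theorem D_pos {β : ℝ} (hβ : 0 < β) {N : ℕ} (hN : 1 ≤ N) : 0 < D β N := by
  unfold D
  have : (1:ℝ) ≤ N := by exact_mod_cast hN
  nlinarith

theorem moriP_ext {β : ℝ} {N : ℕ} (hN : 1 ≤ N) (p : ParentSeq N × Set.Icc 1 N) :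
    moriP β (ext p) = moriP β p.1 * ((deg p.1 N p.2.1 + β) / D β N) := by
  have hd : ∀ t i, deg (ext p) t i = degg (pval (ext p)) t i := fun _ _ => rfl
  have hd' : ∀ t i, deg p.1 t i = degg (pval p.1) t i := fun _ _ => rfl
  unfold moriP
  rw [← Finset.insert_Icc_right_eq_Icc_add_one (by omega : 2 ≤ N + 1), Finset.prod_insert (by simp), mul_comm]
  congr 1
  · apply Finset.prod_congr rfl
    intro t ht
    have ht := Finset.mem_Icc.mp ht
    rw [hd, hd', pval_ext hN, degg_update _ _ _ (by omega), Function.update_of_ne (by omega)]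
  · rw [hd, hd', pval_ext hN, Nat.add_sub_cancel, degg_update _ _ _ le_rfl, Function.update_self]
    unfold D
    push_cast
    congr 1
    ring

theorem step_raw {β : ℝ} {N : ℕ} (hN : 1 ≤ N) (X : (ℕ → ℕ) → ℝ) :
    W β (N + 1) X = ∑ f : ParentSeq N, moriP β f *
      ∑ i ∈ Finset.Icc 1 N, ((deg f N i + β) / D β N) * X (Function.update (pval f) (N + 1) i) := by
  unfold W
  rw [← Function.Bijective.sum_comp (ext_bij hN), Fintype.sum_prod_type]
  apply Finset.sum_congr rfl
  intro f _
  rw [Finset.mul_sum, ← Finset.sum_coe_sort (Finset.Icc 1 N)]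
  refine Fintype.sum_equiv (Equiv.subtypeEquivRight (by simp)) _ _ ?_
  intro i
  rw [moriP_ext hN, pval_ext hN]
  simp [mul_assoc]

/-- number of hits of A -/
def cnt (A : Finset ℕ) (t : ℕ) (g : ℕ → ℕ) : ℕ := ((Finset.Icc 2 t).filter (fun j => g j ∈ A)).card

/-- constant part of weight -/
noncomputable def y0 (β : ℝ) (A : Finset ℕ) : ℝ := ((A.filter (fun i => 2 ≤ i)).card : ℝ) + β * A.card

/-- weight -/
noncomputable def Yg (β : ℝ) (A : Finset ℕ) (t : ℕ) (g : ℕ → ℕ) : ℝ := (cnt A t g : ℝ) + y0 β A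

theorem sum_deg {β : ℝ} {N : ℕ} (A : Finset ℕ) (f : ParentSeq N) (t : ℕ) :
    ∑ i ∈ A, ((deg f t i : ℝ) + β) = Yg β A t (pval f) := by
  unfold Yg y0
  rw [Finset.sum_add_distrib, ← add_assoc]
  congr 1
  · unfold deg
    push_cast
    rw [Finset.sum_add_distrib]
    congr 1
    · unfold cnt
      rw [Finset.card_eq_sum_card_fiberwise (f := pval f) (t := A)]
      · push_cast
        apply Finset.sum_congr rfl
        intro i hi
        rw [Finset.filter_filter]
        congr 2
        apply Finset.filter_congr
        intro j _
        constructor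
        · intro h; exact ⟨h ▸ hi, h⟩
        · exact fun h => h.2
      · intro j hj
        exact (Finset.mem_filter.mp hj).2
    · simp
  · simp [mul_comm]

theorem Yg_full {β : ℝ} {N : ℕ} (hN : 1 ≤ N) (f : ParentSeq N) :
    Yg β (Finset.Icc 1 N) N (pval f) = D β N := by
  have h1 : cnt (Finset.Icc 1 N) N (pval f) = N - 1 := by
    unfold cnt
    rw [Finset.filter_true_of_mem]
    · simp
    · intro j hj
      have hj := Finset.mem_Icc.mp hj
      have := pval_pos f hj.1 hj.2
      exact Finset.mem_Icc.mpr (by omega)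
  have h2 : (Finset.Icc 1 N).filter (fun i => 2 ≤ i) = Finset.Icc 2 N := by
    ext i; simp only [Finset.mem_filter, Finset.mem_Icc]; omega
  unfold Yg y0 D
  rw [h1, h2]
  simp only [Nat.card_Icc]
  have : N + 1 - 2 = N - 1 := by omega
  rw [this, Nat.cast_sub hN]
  simp
  ring

theorem step_A {β : ℝ} (hβ : 0 < β) {N : ℕ} (hN : 1 ≤ N) (A : Finset ℕ) (hA : A ⊆ Finset.Icc 1 N)
    (X P Q : (ℕ → ℕ) → ℝ)
    (hX : ∀ f : ParentSeq N, ∀ i ∈ Finset.Icc 1 N,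
      X (Function.update (pval f) (N + 1) i) = if i ∈ A then P (pval f) else Q (pval f)) :
    W β (N + 1) X = W β N (fun g => Yg β A N g / D β N * P g + (1 - Yg β A N g / D β N) * Q g) := by
  rw [step_raw hN]
  unfold W
  apply Finset.sum_congr rfl
  intro f _
  congr 1
  have hD := D_pos hβ hN
  rw [Finset.sum_congr rfl (fun i hi => by rw [hX f i hi])]
  have e : ∀ i, ((deg f N i : ℝ) + β) / D β N * (if i ∈ A then P (pval f) else Q (pval f)) =
     ((deg f N i : ℝ) + β) * (Q (pval f) / D β N) +
      (if i ∈ A then ((deg f N i : ℝ) + β) * ((P (pval f) - Q (pval f)) / D β N) else 0) := by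
    intro i
    split_ifs <;> ring
  rw [Finset.sum_congr rfl (fun i _ => e i), Finset.sum_add_distrib, ← Finset.sum_mul, sum_deg,
    ← Finset.sum_filter, Finset.filter_mem_eq_inter, Finset.inter_eq_right.mpr hA, ← Finset.sum_mul,
    sum_deg, Yg_full hN]
  field_simp
  ring

theorem stable1 {β : ℝ} (hβ : 0 < β) {N : ℕ} (hN : 1 ≤ N) (X : (ℕ → ℕ) → ℝ)
    (hX : ∀ g i, X (Function.update g (N + 1) i) = X g) : W β (N + 1) X = W β N X := by
  rw [step_A hβ hN ∅ (by simp) X X X (by intro f i _; simp [hX])]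
  congr 1
  funext g
  ring

theorem stable {β : ℝ} (hβ : 0 < β) {N M : ℕ} (hN : 1 ≤ N) (hM : N ≤ M) (X : (ℕ → ℕ) → ℝ)
    (hX : ∀ g i t, N < t → X (Function.update g t i) = X g) : W β M X = W β N X := by
  induction M, hM using Nat.le_induction with
  | base => rfl
  | succ M hM ih => rw [stable1 hβ (by omega) X (fun g i => hX g i _ (by omega)), ih]

theorem W_one {β : ℝ} (hβ : 0 < β) {N : ℕ} (hN : 1 ≤ N) (c : ℝ) : W β N (fun _ => c) = c := by
  rw [stable hβ le_rfl hN _ (by simp)]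
  have hu : ∀ f g : ParentSeq 1, f = g := by
    intro f g
    funext t
    have := Set.mem_Icc.mp t.2
    omega
  let f0 : ParentSeq 1 := fun t => ⟨1, by have := Set.mem_Icc.mp t.2; omega⟩
  unfold W
  rw [Fintype.sum_eq_single f0 (fun f hf => absurd (hu f f0) hf)]
  simp [moriP]

theorem moriP_nonneg {β : ℝ} (hβ : 0 < β) {N : ℕ} (f : ParentSeq N) : 0 ≤ moriP β f := by
  unfold moriP
  apply Finset.prod_nonneg
  intro t ht
  have h2 : 2 ≤ t := (Finset.mem_Icc.mp ht).1
  have h3 : (2:ℝ) ≤ t := by exact_mod_cast h2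
  apply div_nonneg
  · positivity
  · nlinarith

theorem W_mono {β : ℝ} (hβ : 0 < β) {N : ℕ} (X Y : (ℕ → ℕ) → ℝ)
    (h : ∀ f : ParentSeq N, X (pval f) ≤ Y (pval f)) : W β N X ≤ W β N Y := by
  unfold W
  exact Finset.sum_le_sum (fun f _ => mul_le_mul_of_nonneg_left (h f) (moriP_nonneg hβ f))

theorem W_mul {β : ℝ} {N : ℕ} (X : (ℕ → ℕ) → ℝ) (c : ℝ) :
    W β N (fun g => c * X g) = c * W β N X := by
  unfold W
  rw [Finset.mul_sum]
  exact Finset.sum_congr rfl (fun f _ => by ring)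

theorem W_sum {β : ℝ} {N : ℕ} {ι : Type} (s : Finset ι) (X : ι → (ℕ → ℕ) → ℝ) :
    W β N (fun g => ∑ i ∈ s, X i g) = ∑ i ∈ s, W β N (X i) := by
  unfold W
  rw [Finset.sum_comm]
  exact Finset.sum_congr rfl (fun f _ => by rw [Finset.mul_sum])

theorem W_sub {β : ℝ} {N : ℕ} (X Y : (ℕ → ℕ) → ℝ) :
    W β N (fun g => X g - Y g) = W β N X - W β N Y := by
  unfold W
  rw [← Finset.sum_sub_distrib]
  exact Finset.sum_congr rfl (fun f _ => by ring)

end Mori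

namespace Mori

/-- indicator of a hit -/
noncomputable def ind (A : Finset ℕ) (j : ℕ) (g : ℕ → ℕ) : ℝ := if g j ∈ A then 1 else 0

theorem cnt_update (A : Finset ℕ) {N : ℕ} (hN : 1 ≤ N) (g : ℕ → ℕ) (i : ℕ) :
    cnt A (N + 1) (Function.update g (N + 1) i) = cnt A N g + if i ∈ A then 1 else 0 := by
  unfold cnt
  rw [← Finset.insert_Icc_right_eq_Icc_add_one (by omega : 2 ≤ N + 1), Finset.filter_insert]
  have : (Finset.Icc 2 N).filter (fun j => Function.update g (N + 1) i j ∈ A) =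
      (Finset.Icc 2 N).filter (fun j => g j ∈ A) := by
    apply Finset.filter_congr
    intro j hj
    rw [Function.update_of_ne (by have := Finset.mem_Icc.mp hj; omega)]
  rw [this, Function.update_self]
  split_ifs
  · rw [Finset.card_insert_of_notMem (by simp)]
  · simp

theorem Yg_update (β : ℝ) (A : Finset ℕ) {N : ℕ} (hN : 1 ≤ N) (g : ℕ → ℕ) (i : ℕ) :
    Yg β A (N + 1) (Function.update g (N + 1) i) = Yg β A N g + if i ∈ A then 1 else 0 := by
  unfold Yg
  rw [cnt_update A hN]
  push_cast
  ring

theorem ind_update_ne (A : Finset ℕ) {j t : ℕ} (h : j ≠ t) (g : ℕ → ℕ) (i : ℕ) :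
    ind A j (Function.update g t i) = ind A j g := by
  unfold ind
  rw [Function.update_of_ne h]

theorem ind_update_self (A : Finset ℕ) {t : ℕ} (g : ℕ → ℕ) (i : ℕ) :
    ind A t (Function.update g t i) = if i ∈ A then 1 else 0 := by
  unfold ind
  rw [Function.update_self]

/-- second rising moment -/
noncomputable def U (β : ℝ) (A : Finset ℕ) (t : ℕ) : ℝ :=
  W β t (fun g => Yg β A t g * (Yg β A t g + 1))

theorem U_succ {β : ℝ} (hβ : 0 < β) {A : Finset ℕ} {t : ℕ} (ht : 1 ≤ t) (hA : A ⊆ Finset.Icc 1 t) :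
    U β A (t + 1) = U β A t * (1 + 2 / D β t) := by
  unfold U
  rw [step_A hβ ht A hA _ (fun g => (Yg β A t g + 1) * (Yg β A t g + 2))
    (fun g => Yg β A t g * (Yg β A t g + 1)), mul_comm, ← W_mul]
  · congr 1
    funext g
    ring
  · intro f i _
    rw [Yg_update β A ht]
    split_ifs <;> ring

theorem U_eq {β : ℝ} (hβ : 0 < β) {A : Finset ℕ} {s t : ℕ} (hs : 1 ≤ s) (hA : A ⊆ Finset.Icc 1 s)
    (ht : s ≤ t) : U β A t = U β A s * ∏ x ∈ Finset.Ico s t, (1 + 2 / D β x) := by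
  induction t, ht using Nat.le_induction with
  | base => simp
  | succ t ht ih =>
    rw [U_succ hβ (by omega) (hA.trans (Finset.Icc_subset_Icc_right ht)), ih,
      Finset.prod_Ico_succ_top ht]
    ring

theorem V_succ {β : ℝ} (hβ : 0 < β) {A : Finset ℕ} {j t : ℕ} (ht : 1 ≤ t) (hA : A ⊆ Finset.Icc 1 t)
    (hj : j ≤ t) :
    W β (t + 1) (fun g => ind A j g * Yg β A (t + 1) g) =
      W β t (fun g => ind A j g * Yg β A t g) * (1 + 1 / D β t) := by
  rw [step_A hβ ht A hA _ (fun g => ind A j g * (Yg β A t g + 1))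
    (fun g => ind A j g * Yg β A t g), mul_comm, ← W_mul]
  · congr 1
    funext g
    ring
  · intro f i _
    rw [Yg_update β A ht, ind_update_ne _ (by omega)]
    split_ifs <;> ring

theorem V_base {β : ℝ} (hβ : 0 < β) {A : Finset ℕ} {t : ℕ} (ht : 1 ≤ t) (hA : A ⊆ Finset.Icc 1 t) :
    W β (t + 1) (fun g => ind A (t + 1) g * Yg β A (t + 1) g) = U β A t / D β t := by
  rw [step_A hβ ht A hA _ (fun g => (Yg β A t g + 1)) (fun g => 0), div_eq_inv_mul, U, ← W_mul]
  · congr 1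
    funext g
    ring
  · intro f i _
    rw [Yg_update β A ht, ind_update_self]
    split_ifs <;> ring

theorem V_eq {β : ℝ} (hβ : 0 < β) {A : Finset ℕ} {N t : ℕ} (hN : 1 ≤ N) (hA : A ⊆ Finset.Icc 1 N)
    (ht : N + 1 ≤ t) :
    W β t (fun g => ind A (N + 1) g * Yg β A t g) =
      U β A N / D β N * ∏ x ∈ Finset.Ico (N + 1) t, (1 + 1 / D β x) := by
  induction t, ht using Nat.le_induction with
  | base => simp [V_base hβ hN hA]
  | succ t ht ih =>
    rw [V_succ hβ (by omega) (hA.trans (Finset.Icc_subset_Icc_right (by omega))) ht, ih,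
      Finset.prod_Ico_succ_top ht]
    ring

/-- deterministic factor -/
noncomputable def T (β : ℝ) (s N M : ℕ) : ℝ :=
  (∏ x ∈ Finset.Ico s N, (1 + 2 / D β x)) * (∏ x ∈ Finset.Ico (N + 1) M, (1 + 1 / D β x))
    / (D β N * D β M)

theorem Z_eq {β : ℝ} (hβ : 0 < β) {A : Finset ℕ} {s N M n : ℕ} (hs : 1 ≤ s)
    (hA : A ⊆ Finset.Icc 1 s) (hN : s ≤ N) (hM : N + 1 ≤ M) (hn : M + 1 ≤ n) :
    W β n (fun g => ind A (N + 1) g * ind A (M + 1) g) = U β A s * T β s N M := by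
  rw [stable hβ (by omega) hn]
  · have hAN := hA.trans (Finset.Icc_subset_Icc_right hN)
    have hAM := hAN.trans (Finset.Icc_subset_Icc_right (by omega : N ≤ M))
    rw [step_A hβ (by omega) A hAM _ (fun g => ind A (N + 1) g) (fun g => 0)]
    · have : W β M (fun g => Yg β A M g / D β M * ind A (N + 1) g + (1 - Yg β A M g / D β M) * 0) =
        (D β M)⁻¹ * W β M (fun g => ind A (N + 1) g * Yg β A M g) := by
        rw [← W_mul]
        congr 1
        funext g
        ring
      rw [this, V_eq hβ (by omega) hAN hM, U_eq hβ hs hA hN]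
      unfold T
      have := D_pos hβ (by omega : 1 ≤ N)
      have := D_pos hβ (by omega : 1 ≤ M)
      field_simp
    · intro f i _
      rw [ind_update_self, ind_update_ne _ (by omega)]
      split_ifs <;> simp
  · intro g i t ht
    rw [ind_update_ne _ (by omega), ind_update_ne _ (by omega)]

/-- block -/
def Bl (m a : ℕ) : Finset ℕ := Finset.Icc (a * m + 1) ((a + 1) * m)

theorem Bl_card (m a : ℕ) : (Bl m a).card = m := by
  unfold Bl
  rw [Nat.card_Icc, add_mul]
  omega

theorem Bl_sub (m a : ℕ) : Bl m a ⊆ Finset.Icc 1 ((a + 1) * m) :=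
  Finset.Icc_subset_Icc_left (by omega)

theorem cnt_le {m a N : ℕ} (hN : N ≤ (a + 1) * m) (B : Finset ℕ) (hB : B ⊆ Bl m a)
    (f : ParentSeq N) :
    cnt B N (pval f) ≤ m ∧ (cnt B N (pval f) : ℝ) ≤ ∑ j ∈ Bl m a, ind B j (pval f) := by
  have h : (Finset.Icc 2 N).filter (fun j => pval f j ∈ B) ⊆
      (Bl m a).filter (fun j => pval f j ∈ B) := by
    intro j hj
    have hj := Finset.mem_filter.mp hj
    have hj1 := Finset.mem_Icc.mp hj.1
    refine Finset.mem_filter.mpr ⟨?_, hj.2⟩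
    have h1 := Finset.mem_Icc.mp (hB hj.2)
    have h2 := pval_pos f hj1.1 hj1.2
    exact Finset.mem_Icc.mpr (by omega)
  have h2 := Finset.card_le_card h
  constructor
  · exact h2.trans ((Finset.card_filter_le _ _).trans (Bl_card m a).le)
  · unfold ind
    rw [Finset.sum_boole]
    exact_mod_cast h2

theorem Yg_le {β : ℝ} (hβ : 0 < β) {m a N : ℕ} (hN : N ≤ (a + 1) * m) (B : Finset ℕ)
    (hB : B ⊆ Bl m a) (f : ParentSeq N) :
    0 ≤ Yg β B N (pval f) ∧ Yg β B N (pval f) ≤ 2 * (m * (1 + β)) := by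
  have h1 := (cnt_le hN B hB f).1
  have h2 := (Finset.card_le_card hB).trans (Bl_card m a).le
  have h3 := (Finset.card_filter_le B (fun i => 2 ≤ i)).trans h2
  have h1' : (cnt B N (pval f) : ℝ) ≤ m := by exact_mod_cast h1
  have h2' : (B.card : ℝ) ≤ m := by exact_mod_cast h2
  have h3' : ((B.filter (fun i => 2 ≤ i)).card : ℝ) ≤ m := by exact_mod_cast h3
  have h4 := mul_le_mul_of_nonneg_left h2' hβ.le
  have h5 : 0 ≤ β * m := by positivity
  unfold Yg y0
  constructor
  · positivity
  · linarith

theorem W_ind_le {β : ℝ} (hβ : 0 < β) {m a j : ℕ} (hm : 1 ≤ m) (ha : 1 ≤ a) (hj : j ∈ Bl m a) :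
    W β ((a + 1) * m) (ind (Bl m a) j) ≤ 4 * (m * (1 + β)) / β / ((a : ℝ) + 1) := by
  have hj := Finset.mem_Icc.mp hj
  have ham : a ≤ a * m := Nat.le_mul_of_pos_right a hm
  obtain ⟨N, rfl⟩ : ∃ N, j = N + 1 := ⟨j - 1, by omega⟩
  have hN : 1 ≤ N := by omega
  rw [stable hβ (by omega : 1 ≤ N + 1) hj.2 _ (fun g i t ht => ind_update_ne _ (by omega) _ _)]
  rw [step_A hβ hN (Bl m a ∩ Finset.Icc 1 N) Finset.inter_subset_right _ (fun _ => 1) (fun _ => 0)]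
  · rw [← W_one hβ hN (4 * (m * (1 + β)) / β / ((a : ℝ) + 1))]
    apply W_mono hβ
    intro f
    have h := Yg_le hβ (by omega : N ≤ (a + 1) * m) (Bl m a ∩ Finset.Icc 1 N)
      Finset.inter_subset_left f
    have hD := D_pos hβ hN
    have hD2 : β * ((a : ℝ) + 1) / 2 ≤ D β N := by
      unfold D
      have e1 : (a : ℝ) ≤ N := by exact_mod_cast (by omega : a ≤ N)
      have e2 : (1 : ℝ) ≤ a := by exact_mod_cast ha
      nlinarith
    simp only [mul_one, mul_zero, add_zero]
    have hp : 0 < β * ((a : ℝ) + 1) / 2 := by positivity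
    calc _ ≤ 2 * (m * (1 + β)) / (β * ((a : ℝ) + 1) / 2) :=
          div_le_div₀ (by positivity) h.2 hp hD2
      _ = _ := by field_simp; ring
  · intro f i hi
    rw [ind_update_self]
    simp only [Finset.mem_inter, hi, and_true]

theorem U_est {β : ℝ} (hβ : 0 < β) {m : ℕ} (hm : 1 ≤ m) :
    ∃ C : ℝ, 0 < C ∧ ∀ a : ℕ, |U β (Bl m a) ((a + 1) * m) -
      (m * (1 + β)) * (m * (1 + β) + 1)| ≤ C / ((a : ℝ) + 1) := by
  have hm' : (0 : ℝ) < m := by exact_mod_cast hm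
  set y : ℝ := m * (1 + β) with hy
  have hyp : 0 < y := by positivity
  refine ⟨2 * y * (2 * y + 1) + (3 * y + 1) * (4 * m * y / β), by positivity, ?_⟩
  intro a
  have hs : 1 ≤ (a + 1) * m := Nat.mul_pos (by omega) hm
  rcases Nat.eq_zero_or_pos a with rfl | ha
  · have h0 : 0 ≤ U β (Bl m 0) ((0 + 1) * m) := by
      rw [← W_one hβ hs 0]
      apply W_mono hβ
      intro f
      have := (Yg_le hβ le_rfl _ (Finset.Subset.refl (Bl m 0)) f).1
      positivity
    have h1 : U β (Bl m 0) ((0 + 1) * m) ≤ 2 * y * (2 * y + 1) := by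
      rw [← W_one hβ hs (2 * y * (2 * y + 1))]
      apply W_mono hβ
      intro f
      have := (Yg_le hβ le_rfl _ (Finset.Subset.refl (Bl m 0)) f)
      apply mul_le_mul this.2 (by linarith [this.2]) (by linarith [this.1]) (by positivity)
    have h2 : 0 ≤ (3 * y + 1) * (4 * m * y / β) := by positivity
    simp only [Nat.cast_zero, zero_add, div_one]
    simp only [zero_add] at h0 h1
    rw [abs_le]
    constructor <;> nlinarith
  · have hY : ∀ g, Yg β (Bl m a) ((a + 1) * m) g = cnt (Bl m a) ((a + 1) * m) g + y := by
      intro g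
      unfold Yg y0
      rw [Finset.filter_true_of_mem, Bl_card]
      · rw [hy]; ring
      · intro i hi
        have hi := Finset.mem_Icc.mp hi
        have : 1 ≤ a * m := Nat.mul_pos ha hm
        omega
    have e : U β (Bl m a) ((a + 1) * m) - y * (y + 1) = W β ((a + 1) * m) (fun g =>
        (cnt (Bl m a) ((a + 1) * m) g : ℝ) * (cnt (Bl m a) ((a + 1) * m) g + 2 * y + 1)) := by
      conv_lhs => rw [← W_one hβ hs (y * (y + 1)), U, ← W_sub]
      congr 1
      funext g
      rw [hY]
      ring
    rw [e, abs_of_nonneg]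
    · have h1 : W β ((a + 1) * m) (fun g =>
        (cnt (Bl m a) ((a + 1) * m) g : ℝ) * (cnt (Bl m a) ((a + 1) * m) g + 2 * y + 1)) ≤
          W β ((a + 1) * m) (fun g => (3 * y + 1) * ∑ j ∈ Bl m a, ind (Bl m a) j g) := by
        apply W_mono hβ
        intro f
        have h := cnt_le le_rfl _ (Finset.Subset.refl (Bl m a)) f
        have h' : (cnt (Bl m a) ((a + 1) * m) (pval f) : ℝ) ≤ m := by exact_mod_cast h.1
        have h'' : (m : ℝ) ≤ y := by rw [hy]; nlinarith
        rw [mul_comm]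
        exact mul_le_mul (by linarith) h.2 (by positivity) (by positivity)
      refine h1.trans ?_
      rw [W_mul, W_sum]
      have h2 : ∑ j ∈ Bl m a, W β ((a + 1) * m) (ind (Bl m a) j) ≤
          ∑ j ∈ Bl m a, 4 * y / β / ((a : ℝ) + 1) :=
        Finset.sum_le_sum (fun j hj => W_ind_le hβ hm ha hj)
      rw [Finset.sum_const, Bl_card, nsmul_eq_mul] at h2
      calc _ ≤ (3 * y + 1) * ((m : ℝ) * (4 * y / β / ((a : ℝ) + 1))) :=
            mul_le_mul_of_nonneg_left h2 (by positivity)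
        _ = ((3 * y + 1) * (4 * m * y / β)) / ((a : ℝ) + 1) := by ring
        _ ≤ _ := by
          apply div_le_div_of_nonneg_right _ (by positivity)
          have : 0 < 2 * y * (2 * y + 1) := by positivity
          linarith
    · rw [← W_one hβ hs 0]
      apply W_mono hβ
      intro f
      positivity

end Mori

namespace Mori

theorem log_term {δ : ℝ} (h0 : 0 < δ) (h1 : δ < 1) {x : ℝ} (hx : 1 ≤ x) :
    |-Real.log (1 - δ / x)| ≤ δ / (1 - δ) / x ∧
    |-Real.log (1 - δ / x) - δ * (Real.log (x + 1) - Real.log x)| ≤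
      2 / (1 - δ) * (1 / x - 1 / (x + 1)) := by
  have hx0 : 0 < x := by linarith
  have hxd : 0 < x - δ := by linarith
  have h1d : 0 < 1 - δ := by linarith
  have hd : (1 - δ) * x ≤ x - δ := by nlinarith
  have e : 1 - δ / x = (x - δ) / x := by field_simp
  have hu : 0 < 1 - δ / x := by rw [e]; positivity
  have l1 : δ / x ≤ -Real.log (1 - δ / x) := by
    have := Real.log_le_sub_one_of_pos hu
    linarith
  have l2 : -Real.log (1 - δ / x) ≤ δ / (x - δ) := by
    have := Real.one_sub_inv_le_log_of_pos hu
    rw [e, inv_div] at this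
    have e2 : x / (x - δ) = 1 + δ / (x - δ) := by field_simp; ring
    rw [e]
    linarith
  have l3 : Real.log (x + 1) - Real.log x ≤ 1 / x := by
    rw [← Real.log_div (by positivity) (by positivity)]
    have := Real.log_le_sub_one_of_pos (show 0 < (x + 1) / x by positivity)
    have e2 : (x + 1) / x = 1 + 1 / x := by field_simp
    linarith
  have l4 : 1 / (x + 1) ≤ Real.log (x + 1) - Real.log x := by
    rw [← Real.log_div (by positivity) (by positivity)]
    have := Real.one_sub_inv_le_log_of_pos (show 0 < (x + 1) / x by positivity)
    have e2 : ((x + 1) / x)⁻¹ = 1 - 1 / (x + 1) := by field_simp; ring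
    linarith
  have hp : 0 < δ / x := by positivity
  constructor
  · rw [abs_of_nonneg (by linarith)]
    refine l2.trans ?_
    rw [div_div]
    exact div_le_div_of_nonneg_left h0.le (by positivity) hd
  · have l3' := mul_le_mul_of_nonneg_left l3 h0.le
    have l4' := mul_le_mul_of_nonneg_left l4 h0.le
    have e3 : δ * (1 / x) = δ / x := by ring
    rw [abs_of_nonneg (by linarith)]
    have : δ / (x - δ) ≤ δ / (x + 1) + 2 / (1 - δ) * (1 / x - 1 / (x + 1)) := by
      have e4 : δ / (x - δ) - δ / (x + 1) = δ * (1 + δ) / ((x - δ) * (x + 1)) := by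
        field_simp; ring
      have e5 : 2 / (1 - δ) * (1 / x - 1 / (x + 1)) = 2 / (((1 - δ) * x) * (x + 1)) := by
        field_simp; ring
      have : δ * (1 + δ) / ((x - δ) * (x + 1)) ≤ 2 / (((1 - δ) * x) * (x + 1)) := by
        apply div_le_div₀ (by norm_num) (by nlinarith) (by positivity)
        exact mul_le_mul_of_nonneg_right hd (by positivity)
      linarith
    have e6 : δ * (1 / (x + 1)) = δ / (x + 1) := by ring
    linarith

theorem log_sum {δ : ℝ} (h0 : 0 < δ) (h1 : δ < 1) {p q : ℕ} (hp : 1 ≤ p) (hq : p ≤ q) :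
    |(∑ x ∈ Finset.Ico p q, -Real.log (1 - δ / x)) - δ * (Real.log q - Real.log p)| ≤
      2 / (1 - δ) / p := by
  have h1d : 0 < 1 - δ := by linarith
  have key : |(∑ x ∈ Finset.Ico p q, -Real.log (1 - δ / x)) - δ * (Real.log q - Real.log p)| ≤
      2 / (1 - δ) * (1 / p - 1 / q) := by
    induction q, hq using Nat.le_induction with
    | base => simp
    | succ q hq ih =>
      rw [Finset.sum_Ico_succ_top hq]
      have hq1 : (1 : ℝ) ≤ q := by exact_mod_cast hp.trans hq
      have := (log_term h0 h1 hq1).2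
      push_cast
      rw [abs_le] at *
      constructor <;> nlinarith
  refine key.trans ?_
  have : (0 : ℝ) ≤ 1 / q := by positivity
  calc _ ≤ 2 / (1 - δ) * (1 / p) := mul_le_mul_of_nonneg_left (by linarith) (by positivity)
    _ = _ := by ring

theorem log_near {x y d : ℝ} (hx : 0 < x) (h1 : x ≤ y) (h2 : y ≤ x + d) :
    |Real.log y - Real.log x| ≤ d / x := by
  have hy : 0 < y := by linarith
  have h3 := Real.log_le_log hx h1
  rw [abs_of_nonneg (by linarith), ← Real.log_div (by positivity) (by positivity)]
  have := Real.log_le_sub_one_of_pos (show 0 < y / x by positivity)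
  refine this.trans ?_
  rw [div_sub_one hx.ne']
  exact div_le_div_of_nonneg_right (by linarith) hx.le

theorem D_eq {β : ℝ} (hβ : 0 < β) {x : ℕ} (hx : 1 ≤ x) :
    D β x = (2 + β) * x * (1 - 2 / (2 + β) / x) := by
  have : (1:ℝ) ≤ x := by exact_mod_cast hx
  unfold D
  field_simp

theorem log_D {β : ℝ} (hβ : 0 < β) {x : ℕ} (hx : 1 ≤ x) :
    Real.log (D β x) = Real.log (2 + β) + Real.log x + Real.log (1 - 2 / (2 + β) / x) := by
  have hD := D_pos hβ hx
  have h1 : (1:ℝ) ≤ x := by exact_mod_cast hx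
  rw [D_eq hβ hx] at *
  have h2 : 0 < (1 - 2 / (2 + β) / (x:ℝ)) := by
    rcases (mul_pos_iff.mp hD) with h | h
    · exact h.2
    · have : 0 < (2 + β) * x := by positivity
      linarith [h.1]
  rw [Real.log_mul (by positivity) h2.ne', Real.log_mul (by positivity) (by positivity)]

theorem fac2 {β : ℝ} (hβ : 0 < β) {x : ℕ} (hx : 1 ≤ x) :
    0 < 1 + 2 / D β x ∧ Real.log (1 + 2 / D β x) = -Real.log (1 - 2 / (2 + β) / x) := by
  have hD := D_pos hβ hx
  have h1 : (1:ℝ) ≤ x := by exact_mod_cast hx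
  refine ⟨by positivity, ?_⟩
  rw [← Real.log_inv]
  congr 1
  have e := D_eq hβ hx
  have h2 : (1 - 2 / (2 + β) / (x:ℝ)) = D β x / ((2 + β) * x) := by
    rw [e]; field_simp
  rw [h2, inv_div]
  unfold D at *
  field_simp
  ring

theorem fac1 {β : ℝ} (hβ : 0 < β) {x : ℕ} (hx : 1 ≤ x) :
    0 < 1 + 1 / D β x ∧ Real.log (1 + 1 / D β x) =
      -Real.log (1 - 2 / (2 + β) / x) - -Real.log (1 - 1 / (2 + β) / x) := by
  have hD := D_pos hβ hx
  have h1 : (1:ℝ) ≤ x := by exact_mod_cast hx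
  refine ⟨by positivity, ?_⟩
  have h2 : (1 - 2 / (2 + β) / (x:ℝ)) = D β x / ((2 + β) * x) := by
    rw [D_eq hβ hx]; field_simp
  have h3 : (1 - 1 / (2 + β) / (x:ℝ)) = (D β x + 1) / ((2 + β) * x) := by
    unfold D; field_simp; ring
  rw [h2, h3, Real.log_div hD.ne' (by positivity), Real.log_div (by positivity) (by positivity)]
  have : 1 + 1 / D β x = (D β x + 1) / D β x := by field_simp
  rw [this, Real.log_div (by positivity) hD.ne']
  ring

theorem T_pos {β : ℝ} (hβ : 0 < β) {s N M : ℕ} (hs : 1 ≤ s) (hN : s ≤ N) (hM : N + 1 ≤ M) :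
    0 < T β s N M := by
  unfold T
  have h1 : 0 < ∏ x ∈ Finset.Ico s N, (1 + 2 / D β x) :=
    Finset.prod_pos (fun x hx => (fac2 hβ (hs.trans (Finset.mem_Ico.mp hx).1)).1)
  have h2 : 0 < ∏ x ∈ Finset.Ico (N+1) M, (1 + 1 / D β x) :=
    Finset.prod_pos (fun x hx => (fac1 hβ (le_trans (by omega) (Finset.mem_Ico.mp hx).1)).1)
  have := D_pos hβ (by omega : 1 ≤ N)
  have := D_pos hβ (by omega : 1 ≤ M)
  positivity

theorem T_log {β : ℝ} (hβ : 0 < β) {s N M : ℕ} (hs : 1 ≤ s) (hN : s ≤ N) (hM : N + 1 ≤ M) :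
    Real.log (T β s N M) =
      (∑ x ∈ Finset.Ico s N, -Real.log (1 - 2 / (2 + β) / x)) +
      ((∑ x ∈ Finset.Ico (N+1) M, -Real.log (1 - 2 / (2 + β) / x)) -
      ∑ x ∈ Finset.Ico (N+1) M, -Real.log (1 - 1 / (2 + β) / x))
      - Real.log (D β N) - Real.log (D β M) := by
  have h1 : ∀ x ∈ Finset.Ico s N, 1 + 2 / D β x ≠ 0 :=
    (fun x hx => (fac2 hβ (hs.trans (Finset.mem_Ico.mp hx).1)).1.ne')
  have h2 : ∀ x ∈ Finset.Ico (N+1) M, 1 + 1 / D β x ≠ 0 :=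
    (fun x hx => (fac1 hβ (le_trans (by omega) (Finset.mem_Ico.mp hx).1)).1.ne')
  have h3 := D_pos hβ (by omega : 1 ≤ N)
  have h4 := D_pos hβ (by omega : 1 ≤ M)
  unfold T
  rw [Real.log_div (mul_ne_zero (Finset.prod_ne_zero_iff.mpr h1) (Finset.prod_ne_zero_iff.mpr h2))
    (by positivity), Real.log_mul (Finset.prod_ne_zero_iff.mpr h1) (Finset.prod_ne_zero_iff.mpr h2),
    Real.log_mul h3.ne' h4.ne', Real.log_prod h1, Real.log_prod h2, ← Finset.sum_sub_distrib,
    Finset.sum_congr rfl (fun x hx => (fac2 hβ (hs.trans (Finset.mem_Ico.mp hx).1)).2),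
    Finset.sum_congr rfl (fun x hx =>
      (fac1 hβ (le_trans (by omega) (Finset.mem_Ico.mp hx).1 : 1 ≤ x)).2)]
  ring

theorem T_est {β : ℝ} (hβ : 0 < β) : ∃ C : ℝ, 0 < C ∧ ∀ s N M : ℕ, 1 ≤ s → s ≤ N → N + 1 ≤ M →
    |Real.log (T β s N M) - (-(2 / (2 + β)) * Real.log s + (1 / (2 + β) - 1) * Real.log N
      + (1 / (2 + β) - 1) * Real.log M - 2 * Real.log (2 + β))| ≤ C / s := by
  set γ := 1 / (2 + β) with hγ
  have e2 : 2 / (2 + β) = 2 * γ := by rw [hγ]; ring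
  have g0 : 0 < γ := by positivity
  have g1 : 2 * γ < 1 := by rw [← e2, div_lt_one (by positivity)]; linarith
  have i1 : 0 < 1 - 2 * γ := by linarith
  have i2 : 0 < 1 - γ := by linarith
  refine ⟨2 * (2 / (1 - 2 * γ)) + 2 / (1 - γ) + 2 * (2 * γ / (1 - 2 * γ)) + 1,
    by positivity, ?_⟩
  intro s N M hs hN hM
  rw [T_log hβ hs hN hM, log_D hβ (by omega : 1 ≤ N), log_D hβ (by omega : 1 ≤ M), ← hγ, e2]
  have hs' : (1:ℝ) ≤ s := by exact_mod_cast hs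
  have hN' : (s:ℝ) ≤ N := by exact_mod_cast hN
  have hM' : (s:ℝ) ≤ M := by exact_mod_cast (by omega : s ≤ M)
  have hN1 : (s:ℝ) ≤ (N + 1 : ℕ) := by push_cast; linarith
  have mono : ∀ {c z : ℝ}, 0 ≤ c → (s : ℝ) ≤ z → c / z ≤ c / s := fun hc hz =>
    div_le_div_of_nonneg_left hc (by linarith) hz
  have b1 := log_sum (δ := 2 * γ) (by positivity) g1 hs hN
  have b2 := (log_sum (δ := 2 * γ) (by positivity) g1 (by omega) hM).trans (mono (by positivity) hN1)
  have b3 := (log_sum (δ := γ) g0 (by linarith) (by omega) hM).trans (mono (by positivity) hN1)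
  have b4 := (log_term (δ := 2 * γ) (by positivity) g1 (hs'.trans hN')).1.trans (mono (by positivity) hN')
  have b5 := (log_term (δ := 2 * γ) (by positivity) g1 (hs'.trans hM')).1.trans (mono (by positivity) hM')
  have b6 := (log_near (x := N) (y := (N+1:ℕ)) (d := 1) (by linarith) (by push_cast; linarith)
    (by push_cast; linarith)).trans (mono (by positivity) hN')
  have b7 : |γ * (Real.log (N+1:ℕ) - Real.log N)| ≤ 1 / s := by
    rw [abs_mul, abs_of_pos g0]
    refine le_trans ?_ b6
    exact mul_le_of_le_one_left (abs_nonneg _) (by linarith)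
  have e : (2 * (2 / (1 - 2 * γ)) + 2 / (1 - γ) + 2 * (2 * γ / (1 - 2 * γ)) + 1) / (s:ℝ) =
    2 / (1 - 2 * γ) / s + 2 / (1 - 2 * γ) / s + 2 / (1 - γ) / s + 2 * γ / (1 - 2 * γ) / s
     + 2 * γ / (1 - 2 * γ) / s + 1 / s := by ring
  rw [e]
  rw [abs_le] at *
  constructor <;> nlinarith

end Mori

namespace Mori

theorem exp_near {x C : ℝ} (h : |x| ≤ C) : |Real.exp x - 1| ≤ |x| * Real.exp C := by
  have hC : 0 ≤ C := (abs_nonneg x).trans h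
  have h1 := Real.add_one_le_exp x
  have h2 := Real.add_one_le_exp (-x)
  have h3 : Real.exp x * Real.exp (-x) = 1 := by rw [← Real.exp_add]; simp
  have h4 : Real.exp x ≤ Real.exp C := Real.exp_le_exp.mpr ((le_abs_self x).trans h)
  have h5 : 1 ≤ Real.exp C := Real.one_le_exp hC
  have h6 : 0 < Real.exp x := Real.exp_pos x
  have h7 : Real.exp x - 1 ≤ x * Real.exp x := by nlinarith
  have h8 : x * Real.exp x ≤ |x| * Real.exp C :=
    (mul_le_mul_of_nonneg_right (le_abs_self x) h6.le).trans
      (mul_le_mul_of_nonneg_left h4 (abs_nonneg x))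
  have h9 : -|x| ≤ x := neg_abs_le x
  have h10 : |x| ≤ |x| * Real.exp C := le_mul_of_one_le_right (abs_nonneg x) h5
  rw [abs_le]
  constructor <;> linarith

/-- main asymptotic factor -/
noncomputable def R (β a b c : ℝ) : ℝ := (a ^ 2 * b ^ (1 + β) * c ^ (1 + β)) ^ (-(1 / (2 + β)))

theorem R_log {β a b c : ℝ} (ha : 0 < a) (hb : 0 < b) (hc : 0 < c) :
    0 < R β a b c ∧ Real.log (R β a b c) =
      -(1 / (2 + β)) * (2 * Real.log a + (1 + β) * Real.log b + (1 + β) * Real.log c) := by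
  unfold R
  refine ⟨by positivity, ?_⟩
  rw [Real.log_rpow (by positivity), Real.log_mul (by positivity) (by positivity),
    Real.log_mul (by positivity) (by positivity), Real.log_rpow hb, Real.log_rpow hc, Real.log_pow]
  push_cast
  ring

theorem T_ratio {β : ℝ} (hβ : 0 < β) {m : ℕ} (hm : 1 ≤ m) : ∃ C : ℝ, 0 < C ∧
    ∀ a b c N M : ℕ, a < b → b < c → N + 1 ∈ Bl m b → M + 1 ∈ Bl m c →
    |T β ((a + 1) * m) N M / (1 / ((2 + β) ^ 2 * m ^ 2) * R β (a + 1) (b + 1) (c + 1)) - 1|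
      ≤ C / ((a : ℝ) + 1) := by
  obtain ⟨C, hC, hT⟩ := T_est hβ
  refine ⟨(C + 2) * Real.exp (C + 2), by positivity, ?_⟩
  intro a b c N M hab hbc hN hM
  have hN := Finset.mem_Icc.mp hN
  have hM := Finset.mem_Icc.mp hM
  have h1 : (a + 1) * m ≤ b * m := Nat.mul_le_mul_right m hab
  have h2 : (b + 1) * m ≤ c * m := Nat.mul_le_mul_right m hbc
  have hs : 1 ≤ (a + 1) * m := Nat.mul_pos (by omega) hm
  have hsN : (a + 1) * m ≤ N := by omega
  have hNM : N + 1 ≤ M := by omega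
  have key := hT _ N M hs hsN hNM
  have Tp := T_pos hβ hs hsN hNM
  have hm1 : (1 : ℝ) ≤ m := by exact_mod_cast hm
  have hm0 : (0 : ℝ) < m := by linarith
  have ha0 : (0 : ℝ) < (a : ℝ) + 1 := by positivity
  have hb0 : (0 : ℝ) < (b : ℝ) + 1 := by positivity
  have hc0 : (0 : ℝ) < (c : ℝ) + 1 := by positivity
  obtain ⟨Rp, Rl⟩ := R_log (β := β) ha0 hb0 hc0
  have hsR : ((((a + 1) * m : ℕ)) : ℝ) = ((a : ℝ) + 1) * m := by push_cast; ring
  rw [hsR] at key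
  have hsN' : ((a : ℝ) + 1) * m ≤ N := by rw [← hsR]; exact_mod_cast hsN
  have hsM' : ((a : ℝ) + 1) * m ≤ M := by rw [← hsR]; exact_mod_cast (by omega)
  have hs0 : 0 < ((a : ℝ) + 1) * m := by positivity
  have hbN : (N : ℝ) ≤ ((b : ℝ) + 1) * m := by exact_mod_cast (by omega : N ≤ (b + 1) * m)
  have hbN2 : ((b : ℝ) + 1) * m ≤ N + m := by
    have : ((b * m : ℕ) : ℝ) ≤ N := by exact_mod_cast (by omega : b * m ≤ N)
    push_cast at this
    linarith
  have hcM : (M : ℝ) ≤ ((c : ℝ) + 1) * m := by exact_mod_cast (by omega : M ≤ (c + 1) * m)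
  have hcM2 : ((c : ℝ) + 1) * m ≤ M + m := by
    have : ((c * m : ℕ) : ℝ) ≤ M := by exact_mod_cast (by omega : c * m ≤ M)
    push_cast at this
    linarith
  have em : (m : ℝ) / (((a : ℝ) + 1) * m) = 1 / ((a : ℝ) + 1) := by field_simp
  have n1 : |Real.log (((b : ℝ) + 1) * m) - Real.log N| ≤ 1 / ((a : ℝ) + 1) :=
    (log_near (by linarith) hbN hbN2).trans
      ((div_le_div_of_nonneg_left hm0.le hs0 hsN').trans em.le)
  have n2 : |Real.log (((c : ℝ) + 1) * m) - Real.log M| ≤ 1 / ((a : ℝ) + 1) :=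
    (log_near (by linarith) hcM hcM2).trans
      ((div_le_div_of_nonneg_left hm0.le hs0 hsM').trans em.le)
  have key2 := key.trans (div_le_div_of_nonneg_left hC.le ha0
    (le_mul_of_one_le_right ha0.le hm1))
  set γ := 1 / (2 + β) with hγ
  have g0 : 0 < γ := by positivity
  have g1 : γ < 1 := by rw [hγ, div_lt_one (by positivity)]; linarith
  have e2 : 2 / (2 + β) = 2 * γ := by rw [hγ]; ring
  have e3 : γ * (1 + β) = 1 - γ := by rw [hγ]; field_simp; ring
  have n1' : |(1 - γ) * (Real.log (((b : ℝ) + 1) * m) - Real.log N)| ≤ 1 / ((a : ℝ) + 1) := by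
    rw [abs_mul, abs_of_pos (by linarith : 0 < 1 - γ)]
    exact (mul_le_of_le_one_left (abs_nonneg _) (by linarith)).trans n1
  have n2' : |(1 - γ) * (Real.log (((c : ℝ) + 1) * m) - Real.log M)| ≤ 1 / ((a : ℝ) + 1) := by
    rw [abs_mul, abs_of_pos (by linarith : 0 < 1 - γ)]
    exact (mul_le_of_le_one_left (abs_nonneg _) (by linarith)).trans n2
  have τp : 0 < 1 / ((2 + β) ^ 2 * (m : ℝ) ^ 2) * R β (a + 1) (b + 1) (c + 1) := by positivity
  have lτ : Real.log (1 / ((2 + β) ^ 2 * (m : ℝ) ^ 2) * R β (a + 1) (b + 1) (c + 1)) =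
      -2 * Real.log (2 + β) - 2 * Real.log m + (-2 * γ * Real.log ((a : ℝ) + 1)
        - (1 - γ) * Real.log ((b : ℝ) + 1) - (1 - γ) * Real.log ((c : ℝ) + 1)) := by
    rw [Real.log_mul (by positivity) Rp.ne', Rl, one_div, Real.log_inv,
      Real.log_mul (by positivity) (by positivity), Real.log_pow, Real.log_pow, ← e3]
    push_cast
    ring
  have fin : |Real.log (T β ((a + 1) * m) N M /
      (1 / ((2 + β) ^ 2 * m ^ 2) * R β (a + 1) (b + 1) (c + 1)))| ≤ (C + 2) / ((a : ℝ) + 1) := by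
    rw [Real.log_div Tp.ne' τp.ne', lτ]
    rw [Real.log_mul ha0.ne' hm0.ne', e2] at key2
    rw [Real.log_mul hb0.ne' hm0.ne'] at n1'
    rw [Real.log_mul hc0.ne' hm0.ne'] at n2'
    have e : (C + 2) / ((a : ℝ) + 1) = C / ((a : ℝ) + 1) + 1 / ((a : ℝ) + 1) + 1 / ((a : ℝ) + 1) := by
      ring
    rw [e]
    rw [abs_le] at *
    constructor <;> linarith
  have ha1 : (1 : ℝ) ≤ (a : ℝ) + 1 := by
    have : (0 : ℝ) ≤ a := by positivity
    linarith
  have fin2 := exp_near (fin.trans (div_le_self (by positivity) ha1))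
  rw [Real.exp_log (by positivity)] at fin2
  refine fin2.trans ?_
  calc _ ≤ (C + 2) / ((a : ℝ) + 1) * Real.exp (C + 2) :=
        mul_le_mul_of_nonneg_right fin (Real.exp_pos _).le
    _ = _ := by ring

theorem blk_iff {m : ℕ} (hm : 1 ≤ m) {t a : ℕ} (ht : 1 ≤ t) :
    blk m t = a + 1 ↔ t ∈ Bl m a := by
  unfold blk Bl
  rw [Finset.mem_Icc]
  have h1 := Nat.le_div_iff_mul_le (x := a) (y := t - 1) (by omega : 0 < m)
  have h2 := Nat.div_lt_iff_lt_mul (x := t - 1) (y := a + 1) (by omega : 0 < m)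
  constructor
  · intro h
    have := h1.mp (by omega)
    have := h2.mp (by omega)
    omega
  · intro h
    have := h1.mpr (by omega)
    have := h2.mpr (by omega)
    omega

theorem mult_eq {n m : ℕ} (hm : 1 ≤ m) (f : ParentSeq (n * m)) {a b : ℕ} (hab : a < b)
    (hb : b + 1 ≤ n) :
    (mult n m f (a + 1) (b + 1) : ℝ) = ∑ j ∈ Bl m b, ind (Bl m a) j (pval f) := by
  unfold ind mult
  rw [Finset.sum_boole]
  congr 2
  have h1 : (a + 1) * m ≤ b * m := Nat.mul_le_mul_right m hab
  have h2 : (b + 1) * m ≤ n * m := Nat.mul_le_mul_right m hb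
  have hs : 1 ≤ (a + 1) * m := Nat.mul_pos (by omega) hm
  ext t
  simp only [Finset.mem_filter]
  constructor
  · rintro ⟨ht, h⟩
    have ht := Finset.mem_Icc.mp ht
    have hp := pval_pos f ht.1 ht.2
    rw [blk_iff hm (by omega), blk_iff hm (by omega), blk_iff hm (by omega),
      blk_iff hm (by omega)] at h
    rcases h with h | h
    · have := Finset.mem_Icc.mp h.1
      have := Finset.mem_Icc.mp h.2
      omega
    · exact h
  · rintro ⟨ht, h⟩
    have ht' := Finset.mem_Icc.mp ht
    have h0 : 2 ≤ t ∧ t ≤ n * m := by omega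
    have hp := pval_pos f h0.1 h0.2
    refine ⟨Finset.mem_Icc.mpr h0, Or.inr ?_⟩
    rw [blk_iff hm (by omega), blk_iff hm (by omega)]
    exact ⟨ht, h⟩

theorem main {β : ℝ} (hβ : 0 < β) {m : ℕ} (hm : 1 ≤ m) :
    ∃ K : ℝ, 0 < K ∧ ∀ n a b c : ℕ, a < b → b < c → c + 1 ≤ n →
      |moriE (n * m) β (fun f => (mult n m f (a + 1) (b + 1) : ℝ) * (mult n m f (a + 1) (c + 1) : ℝ))
        / (((m * (1 + β)) * (m * (1 + β) + 1)) / (2 + β) ^ 2 * R β (a + 1) (b + 1) (c + 1)) - 1|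
        ≤ K / ((a : ℝ) + 1) := by
  obtain ⟨C1, hC1, hU⟩ := U_est hβ hm
  obtain ⟨C2, hC2, hT⟩ := T_ratio hβ hm
  have hm1 : (1 : ℝ) ≤ m := by exact_mod_cast hm
  have hm0 : (0 : ℝ) < m := by linarith
  set q : ℝ := (m * (1 + β)) * (m * (1 + β) + 1) with hq
  have hq0 : 0 < q := by positivity
  refine ⟨C1 / q + C2 + C1 / q * C2, by positivity, ?_⟩
  intro n a b c hab hbc hc
  have ha0 : (0 : ℝ) < (a : ℝ) + 1 := by positivity
  have ha1 : (1 : ℝ) ≤ (a : ℝ) + 1 := by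
    have : (0 : ℝ) ≤ a := by positivity
    linarith
  obtain ⟨Rp, -⟩ := R_log (β := β) ha0 (show (0:ℝ) < (b:ℝ) + 1 by positivity)
    (show (0:ℝ) < (c:ℝ) + 1 by positivity)
  set r := R β (a + 1) (b + 1) (c + 1) with hr
  set u := U β (Bl m a) ((a + 1) * m) with hu
  have h1 : (a + 1) * m ≤ b * m := Nat.mul_le_mul_right m hab
  have h2 : (b + 1) * m ≤ c * m := Nat.mul_le_mul_right m hbc
  have h3 : (c + 1) * m ≤ n * m := Nat.mul_le_mul_right m hc
  have hs : 1 ≤ (a + 1) * m := Nat.mul_pos (by omega) hm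
  have E1 : moriE (n * m) β (fun f => (mult n m f (a + 1) (b + 1) : ℝ) *
      (mult n m f (a + 1) (c + 1) : ℝ)) =
      ∑ j ∈ Bl m b, ∑ k ∈ Bl m c, u * T β ((a + 1) * m) (j - 1) (k - 1) := by
    have : moriE (n * m) β (fun f => (mult n m f (a + 1) (b + 1) : ℝ) *
      (mult n m f (a + 1) (c + 1) : ℝ)) = W β (n * m) (fun g => ∑ j ∈ Bl m b, ∑ k ∈ Bl m c,
        ind (Bl m a) j g * ind (Bl m a) k g) := by
      unfold moriE W
      apply Finset.sum_congr rfl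
      intro f _
      beta_reduce
      rw [mult_eq hm f hab (by omega), mult_eq hm f (by omega) hc, Finset.sum_mul_sum]
    rw [this, W_sum]
    apply Finset.sum_congr rfl
    intro j hj
    rw [W_sum]
    apply Finset.sum_congr rfl
    intro k hk
    have hj := Finset.mem_Icc.mp hj
    have hk := Finset.mem_Icc.mp hk
    obtain ⟨N, rfl⟩ : ∃ N, j = N + 1 := ⟨j - 1, by omega⟩
    obtain ⟨M, rfl⟩ : ∃ M, k = M + 1 := ⟨k - 1, by omega⟩
    rw [Z_eq hβ hs (Bl_sub m a) (by omega) (by omega) (by omega)]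
    rfl
  set τ := 1 / ((2 + β) ^ 2 * (m : ℝ) ^ 2) * r with hτ
  have τp : 0 < τ := by positivity
  set S := ∑ j ∈ Bl m b, ∑ k ∈ Bl m c, (T β ((a + 1) * m) (j - 1) (k - 1) / τ - 1) with hS
  have hSb : |S| ≤ (m : ℝ) ^ 2 * (C2 / ((a : ℝ) + 1)) := by
    calc |S| ≤ ∑ j ∈ Bl m b, ∑ k ∈ Bl m c, (C2 / ((a : ℝ) + 1)) := by
          refine (Finset.abs_sum_le_sum_abs _ _).trans (Finset.sum_le_sum fun j hj => ?_)
          refine (Finset.abs_sum_le_sum_abs _ _).trans (Finset.sum_le_sum fun k hk => ?_)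
          have hj' := Finset.mem_Icc.mp hj
          have hk' := Finset.mem_Icc.mp hk
          apply hT a b c _ _ hab hbc
          · rwa [Nat.sub_add_cancel (by omega)]
          · rwa [Nat.sub_add_cancel (by omega)]
      _ = _ := by
          simp only [Finset.sum_const, Bl_card, nsmul_eq_mul]
          ring
  have E2 : ∑ j ∈ Bl m b, ∑ k ∈ Bl m c, u * T β ((a + 1) * m) (j - 1) (k - 1) =
      u * τ * (S + m ^ 2) := by
    have : (S + (m : ℝ) ^ 2) = ∑ j ∈ Bl m b, ∑ k ∈ Bl m c, T β ((a + 1) * m) (j - 1) (k - 1) / τ := by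
      rw [hS]
      simp only [Finset.sum_sub_distrib, Finset.sum_const, Bl_card, nsmul_eq_mul]
      ring
    rw [this, Finset.mul_sum]
    apply Finset.sum_congr rfl
    intro j _
    rw [Finset.mul_sum]
    apply Finset.sum_congr rfl
    intro k _
    field_simp
  have hSb2 : |S / m ^ 2| ≤ C2 / ((a : ℝ) + 1) := by
    rw [abs_div, abs_of_pos (by positivity : (0:ℝ) < m ^ 2), div_le_iff₀ (by positivity)]
    linarith
  have hub : |(u - q) / q| ≤ C1 / q / ((a : ℝ) + 1) := by
    rw [abs_div, abs_of_pos hq0, div_right_comm]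
    exact div_le_div_of_nonneg_right (hU a) hq0.le
  rw [E1, E2]
  have E3 : u * τ * (S + m ^ 2) / (q / (2 + β) ^ 2 * r) - 1 =
      (u - q) / q + S / m ^ 2 + (u - q) / q * (S / m ^ 2) := by
    rw [hτ]
    field_simp
    ring
  rw [E3]
  refine (abs_add_three _ _ _).trans ?_
  rw [abs_mul]
  have h4 : C2 / ((a : ℝ) + 1) ≤ C2 := div_le_self hC2.le ha1
  have h5 : |(u - q) / q| * |S / m ^ 2| ≤ C1 / q / ((a : ℝ) + 1) * C2 :=
    mul_le_mul hub (hSb2.trans h4) (abs_nonneg _) (by positivity)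
  have e : (C1 / q + C2 + C1 / q * C2) / ((a : ℝ) + 1) =
    C1 / q / ((a : ℝ) + 1) + C2 / ((a : ℝ) + 1) + C1 / q / ((a : ℝ) + 1) * C2 := by ring
  rw [e]
  linarith

end Mori

/-- Expected number of pairs `(v_b,v_a), (v_c,v_a)` of adjacent half-edges in `G^n_{m,β}`
(common vertex of smallest index). -/
theorem expected_adjacent_pairs_smallest_index (β : ℝ) (hβ : 0 < β) (m : ℕ) (hm : 1 ≤ m) :
    ∃ K : ℝ, 0 < K ∧ ∀ n : ℕ, 1 ≤ n → ∀ a b c : ℕ, 1 ≤ a → a < b → b < c → c ≤ n →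
      ∃ θ : ℝ, |θ| ≤ K / (a : ℝ) ∧
        moriE (n * m) β (fun f => (mult n m f a b : ℝ) * (mult n m f a c : ℝ)) =
          ((m : ℝ) * (1 + β) / (2 + β)
              + (m : ℝ) * ((m : ℝ) - 1) * (1 + β) ^ 2 / (2 + β) ^ 2)
            * ((a : ℝ) ^ 2 * (b : ℝ) ^ (1 + β) * (c : ℝ) ^ (1 + β)) ^ (-(1 / (2 + β)))
            * (1 + θ) := by
  obtain ⟨K, hK, h⟩ := Mori.main hβ hm
  refine ⟨K, hK, ?_⟩
  intro n _ a b c ha hab hbc hc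
  obtain ⟨a, rfl⟩ : ∃ x, a = x + 1 := ⟨a - 1, by omega⟩
  obtain ⟨b, rfl⟩ : ∃ x, b = x + 1 := ⟨b - 1, by omega⟩
  obtain ⟨c, rfl⟩ : ∃ x, c = x + 1 := ⟨c - 1, by omega⟩
  have h' := h n a b c (by omega) (by omega) hc
  refine ⟨_, by simpa using h', ?_⟩
  have hm0 : (0 : ℝ) < m := by exact_mod_cast hm
  obtain ⟨Rp, -⟩ := Mori.R_log (β := β) (show (0:ℝ) < (a:ℝ) + 1 by positivity)
    (show (0:ℝ) < (b:ℝ) + 1 by positivity) (show (0:ℝ) < (c:ℝ) + 1 by positivity)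
  have e : ((m : ℝ) * (1 + β) / (2 + β) + (m : ℝ) * ((m : ℝ) - 1) * (1 + β) ^ 2 / (2 + β) ^ 2)
      = ((m * (1 + β)) * (m * (1 + β) + 1)) / (2 + β) ^ 2 := by
    field_simp
    ring
  have hR : ((((a + 1 : ℕ) : ℝ)) ^ 2 * ((b + 1 : ℕ) : ℝ) ^ (1 + β) *
      ((c + 1 : ℕ) : ℝ) ^ (1 + β)) ^ (-(1 / (2 + β))) = Mori.R β (a + 1) (b + 1) (c + 1) := by
    unfold Mori.R
    push_cast
    rfl
  rw [e, hR]
  have hp : 0 < ((m * (1 + β)) * (m * (1 + β) + 1)) / (2 + β) ^ 2 *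
      Mori.R β (a + 1) (b + 1) (c + 1) := by positivity
  rw [add_sub_cancel, mul_div_cancel₀ _ hp.ne']
end

section
/- Let β > 0 and let m ≥ 1 be an integer. There exists K > 0 depending only on m and β such that for all integers n ≥ 1, |E[Σ_{1≤a<b<c≤n} m(a,b)·m(a,c)] − (m(2+β)/β + m(m−1)(1+β)/β) · n| ≤ K · n^{2/(2+β)}. -/
open Finset

namespace MA

lemma blk_mono {m a b : ℕ} (h : a ≤ b) : blk m a ≤ blk m b := by
  unfold blk
  have : (a-1)/m ≤ (b-1)/m := Nat.div_le_div_right (by omega)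
  omega

lemma blk_mem {n m v : ℕ} (hv : 1 ≤ v) (h : v ≤ n * m) : blk m v ∈ Finset.Icc 1 n := by
  unfold blk
  rw [Finset.mem_Icc]
  refine ⟨Nat.le_add_left _ _, ?_⟩
  have : (v-1)/m < n := Nat.div_lt_of_lt_mul (by rw [mul_comm m n]; omega)
  exact this

noncomputable def bI (m j a : ℕ) : ℝ := if blk m j = a then 1 else 0

lemma bI_nonneg (m j a : ℕ) : 0 ≤ bI m j a := by unfold bI; split_ifs <;> norm_num
lemma bI_le (m j a : ℕ) : bI m j a ≤ 1 := by unfold bI; split_ifs <;> norm_num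
lemma bI_sq (m j a : ℕ) : bI m j a * bI m j a = bI m j a := by unfold bI; split_ifs <;> norm_num

lemma sum_bI {n m j : ℕ} (h : blk m j ∈ Finset.Icc 1 n) (φ : ℕ → ℝ) :
    ∑ a ∈ Finset.Icc 1 n, bI m j a * φ a = φ (blk m j) := by
  unfold bI
  simp only [ite_mul, one_mul, zero_mul]
  rw [Finset.sum_ite_eq]
  simp [h]

def Valid (t : ℕ) (p : ℕ → ℕ) : Prop := ∀ j, 2 ≤ j → j ≤ t → 1 ≤ p j ∧ p j < j

def degp (p : ℕ → ℕ) (t i : ℕ) : ℕ :=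
  ((Finset.Icc 2 t).filter (fun j => p j = i)).card + (if 2 ≤ i then 1 else 0)

noncomputable def S (β : ℝ) (t : ℕ) : ℝ := (2 + β) * (t : ℝ) - 2

lemma S_pos {β : ℝ} (hβ : 0 < β) {t : ℕ} (ht : 1 ≤ t) : 0 < S β t := by
  unfold S
  have : (1:ℝ) ≤ t := by exact_mod_cast ht
  nlinarith

lemma S_ge {β : ℝ} {t : ℕ} (ht : 1 ≤ t) : β * t ≤ S β t := by
  unfold S
  have : (1:ℝ) ≤ t := by exact_mod_cast ht
  nlinarith

lemma S_succ (β : ℝ) (t : ℕ) : S β (t+1) = S β t + (2 + β) := by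
  unfold S; push_cast; ring

lemma valid_pval {N : ℕ} (f : ParentSeq N) : Valid N (pval f) := by
  intro j h1 h2
  unfold pval
  rw [dif_pos ⟨h1, h2⟩]
  have := (f ⟨j, Set.mem_Icc.mpr ⟨h1, h2⟩⟩).2
  rw [Set.mem_Icc] at this
  simp only at this
  omega

lemma pval_inj {N : ℕ} {f g : ParentSeq N} (h : pval f = pval g) : f = g := by
  funext t
  have h1 := congrFun h t.1
  have ht := Set.mem_Icc.mp t.2
  unfold pval at h1
  rw [dif_pos ht, dif_pos ht] at h1
  exact Subtype.ext h1

def ext {N : ℕ} (f : ParentSeq N) (i : Set.Icc 1 N) : ParentSeq (N+1) := fun t =>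
  if h : (t : ℕ) ≤ N then f ⟨t.1, Set.mem_Icc.mpr ⟨(Set.mem_Icc.mp t.2).1, h⟩⟩
  else ⟨i.1, by
    have h1 := Set.mem_Icc.mp i.2
    have h2 := Set.mem_Icc.mp t.2
    rw [Set.mem_Icc]; omega⟩

def restr {N : ℕ} (f : ParentSeq (N+1)) : ParentSeq N := fun t =>
  f ⟨t.1, Set.mem_Icc.mpr ⟨(Set.mem_Icc.mp t.2).1, (Set.mem_Icc.mp t.2).2.trans (Nat.le_succ N)⟩⟩

lemma pval_ext {N : ℕ} (hN : 1 ≤ N) (f : ParentSeq N) (i : Set.Icc 1 N) :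
    pval (ext f i) = Function.update (pval f) (N+1) i.1 := by
  funext j
  by_cases hj : j = N+1
  · subst hj
    rw [Function.update_self]
    unfold pval ext
    rw [dif_pos (by omega)]
    simp
  · rw [Function.update_of_ne hj]
    unfold pval ext
    by_cases h : 2 ≤ j ∧ j ≤ N
    · rw [dif_pos (by omega), dif_pos h]
      simp [h.2]
    · rw [dif_neg (by omega), dif_neg h]

lemma ext_restr {N : ℕ} (hN : 1 ≤ N) (f : ParentSeq (N+1)) (h : pval f (N+1) ∈ Set.Icc 1 N) :
    ext (restr f) ⟨pval f (N+1), h⟩ = f := by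
  apply pval_inj
  rw [pval_ext hN]
  funext j
  by_cases hj : j = N+1
  · subst hj; simp
  · rw [Function.update_of_ne hj]
    unfold pval restr
    by_cases h : 2 ≤ j ∧ j ≤ N
    · rw [dif_pos h, dif_pos (show 2 ≤ j ∧ j ≤ N + 1 by omega)]
    · rw [dif_neg h, dif_neg (show ¬ (2 ≤ j ∧ j ≤ N + 1) by omega)]

lemma pval_last {N : ℕ} (hN : 1 ≤ N) (f : ParentSeq (N+1)) : pval f (N+1) ∈ Set.Icc 1 N := by
  have := valid_pval f (N+1) (by omega) le_rfl
  rw [Set.mem_Icc]; omega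

noncomputable def extEquiv {N : ℕ} (hN : 1 ≤ N) : ParentSeq N × Set.Icc 1 N ≃ ParentSeq (N+1) where
  toFun x := ext x.1 x.2
  invFun f := (restr f, ⟨pval f (N+1), pval_last hN f⟩)
  left_inv := by
    rintro ⟨f, i⟩
    refine Prod.ext ?_ ?_
    · funext t
      have ht := Set.mem_Icc.mp t.2
      simp only [restr, ext]
      rw [dif_pos ht.2]
    · apply Subtype.ext
      simp [pval_ext hN]
  right_inv := by
    intro f
    exact ext_restr hN f _

lemma degp_update {p : ℕ → ℕ} {t N i k : ℕ} (h : t ≤ N) :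
    degp (Function.update p (N+1) i) t k = degp p t k := by
  unfold degp
  congr 2
  apply Finset.filter_congr
  intro j hj
  rw [Finset.mem_Icc] at hj
  rw [Function.update_of_ne (by omega)]

noncomputable def Ev (β : ℝ) (t : ℕ) (F : (ℕ → ℕ) → ℝ) : ℝ := moriE t β (fun f => F (pval f))

lemma moriP_ext (β : ℝ) {N : ℕ} (hN : 1 ≤ N) (f : ParentSeq N) (i : Set.Icc 1 N) :
    moriP β (ext f i) = moriP β f * (((degp (pval f) N i.1 : ℝ) + β) / S β N) := by
  have hd : ∀ {N : ℕ} (f : ParentSeq N) (t i : ℕ), deg f t i = degp (pval f) t i := fun _ _ _ => rfl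
  unfold moriP
  rw [Finset.prod_Icc_succ_top (by omega)]
  congr 1
  · apply Finset.prod_congr rfl
    intro t ht
    rw [Finset.mem_Icc] at ht
    rw [hd, hd, pval_ext hN, degp_update (by omega), Function.update_of_ne (by omega)]
  · rw [hd, pval_ext hN, degp_update (by omega), Function.update_self]
    unfold S
    push_cast
    simp

lemma moriP_nonneg {β : ℝ} (hβ : 0 < β) {N : ℕ} (f : ParentSeq N) : 0 ≤ moriP β f := by
  unfold moriP
  apply Finset.prod_nonneg
  intro t ht
  rw [Finset.mem_Icc] at ht
  apply div_nonneg (by positivity)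
  have : (2:ℝ) ≤ t := by exact_mod_cast ht.1
  nlinarith

lemma Ev_step (β : ℝ) {t : ℕ} (ht : 1 ≤ t) (F : (ℕ → ℕ) → ℝ) :
    Ev β (t+1) F = Ev β t (fun p =>
      (∑ i ∈ Finset.Icc 1 t, ((degp p t i : ℝ) + β) * F (Function.update p (t+1) i)) / S β t) := by
  unfold Ev moriE
  rw [← (extEquiv ht).sum_comp, Fintype.sum_prod_type]
  apply Finset.sum_congr rfl
  intro f _
  have h1 : ∀ i : Set.Icc 1 t, moriP β ((extEquiv ht) (f, i)) * F (pval ((extEquiv ht) (f, i)))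
      = moriP β f * ((((degp (pval f) t i.1 : ℝ) + β) * F (Function.update (pval f) (t+1) i.1)) / S β t) := by
    intro i
    change moriP β (ext f i) * F (pval (ext f i)) = _
    rw [moriP_ext β ht, pval_ext ht]
    ring
  simp_rw [h1]
  rw [← Finset.mul_sum, ← Finset.sum_div]
  congr 2
  symm
  exact Finset.sum_subtype (Finset.Icc 1 t) (p := fun x => x ∈ Set.Icc 1 t) (by simp)
    (fun i => ((degp (pval f) t i : ℝ) + β) * F (Function.update (pval f) (t+1) i))

lemma Ev_congr (β : ℝ) {t : ℕ} {F G : (ℕ → ℕ) → ℝ} (h : ∀ p, Valid t p → F p = G p) :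
    Ev β t F = Ev β t G := by
  unfold Ev moriE
  exact Finset.sum_congr rfl fun f _ => by simp only [h _ (valid_pval f)]

lemma Ev_mono {β : ℝ} (hβ : 0 < β) {t : ℕ} {F G : (ℕ → ℕ) → ℝ} (h : ∀ p, Valid t p → F p ≤ G p) :
    Ev β t F ≤ Ev β t G := by
  unfold Ev moriE
  exact Finset.sum_le_sum fun f _ => mul_le_mul_of_nonneg_left (h _ (valid_pval f)) (moriP_nonneg hβ f)

lemma Ev_add (β : ℝ) (t : ℕ) (F G : (ℕ → ℕ) → ℝ) :
    Ev β t (fun p => F p + G p) = Ev β t F + Ev β t G := by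
  unfold Ev moriE
  simp only [mul_add, Finset.sum_add_distrib]

lemma Ev_smul (β : ℝ) (t : ℕ) (c : ℝ) (F : (ℕ → ℕ) → ℝ) :
    Ev β t (fun p => c * F p) = c * Ev β t F := by
  unfold Ev moriE
  rw [Finset.mul_sum]
  exact Finset.sum_congr rfl fun f _ => by ring

lemma Ev_one (β : ℝ) (F : (ℕ → ℕ) → ℝ) (c : ℝ) (h : ∀ p, F p = c) : Ev β 1 F = c := by
  unfold Ev moriE
  have : IsEmpty (Set.Icc 2 1) := by simp
  have : Unique (ParentSeq 1) := by unfold ParentSeq; infer_instance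
  rw [Fintype.sum_unique]
  simp [moriP, h]

noncomputable def W (β : ℝ) (m t : ℕ) (p : ℕ → ℕ) (a : ℕ) : ℝ :=
  (if a = 1 then β else 0) + ∑ j ∈ Finset.Icc 2 t, (bI m (p j) a + (1 + β) * bI m j a)

lemma sumW (β : ℝ) {n m t : ℕ} (ht1 : 1 ≤ t) (ht : t ≤ n * m) {p : ℕ → ℕ} (hp : Valid t p) (φ : ℕ → ℝ) :
    ∑ a ∈ Finset.Icc 1 n, W β m t p a * φ a =
      β * φ 1 + ∑ j ∈ Finset.Icc 2 t, (φ (blk m (p j)) + (1 + β) * φ (blk m j)) := by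
  have hn : 1 ≤ n := by
    rcases Nat.eq_zero_or_pos n with h | h
    · subst h; omega
    · exact h
  unfold W
  generalize 1 + β = γ
  simp only [add_mul, Finset.sum_add_distrib, Finset.sum_mul, ite_mul, zero_mul]
  rw [Finset.sum_ite_eq', if_pos (by simp [hn])]
  rw [Finset.sum_comm, Finset.sum_comm (s := Finset.Icc 1 n)]
  congr 2
  · apply Finset.sum_congr rfl
    intro j hj
    rw [Finset.mem_Icc] at hj
    have := hp j hj.1 hj.2
    exact sum_bI (blk_mem (by omega) (by omega)) φ
  · apply Finset.sum_congr rfl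
    intro j hj
    rw [Finset.mem_Icc] at hj
    simp only [mul_assoc]
    rw [← Finset.mul_sum, sum_bI (blk_mem (by omega) (by omega)) φ]

lemma sumDeg (β : ℝ) {n m t : ℕ} (ht1 : 1 ≤ t) (ht : t ≤ n * m) {p : ℕ → ℕ} (hp : Valid t p) (φ : ℕ → ℝ) :
    ∑ i ∈ Finset.Icc 1 t, ((degp p t i : ℝ) + β) * φ (blk m i) =
      ∑ a ∈ Finset.Icc 1 n, W β m t p a * φ a := by
  rw [sumW β ht1 ht hp]
  unfold degp
  have h1 : ∀ i, (((Finset.Icc 2 t).filter (fun j => p j = i)).card : ℝ)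
      = ∑ j ∈ Finset.Icc 2 t, if p j = i then (1:ℝ) else 0 := by
    intro i
    rw [Finset.card_filter]; push_cast; rfl
  push_cast
  simp only [h1, add_mul, Finset.sum_add_distrib, Finset.sum_mul, ite_mul, zero_mul, one_mul]
  rw [Finset.sum_comm]
  have h2 : ∑ j ∈ Finset.Icc 2 t, ∑ i ∈ Finset.Icc 1 t, (if p j = i then φ (blk m i) else 0)
      = ∑ j ∈ Finset.Icc 2 t, φ (blk m (p j)) := by
    apply Finset.sum_congr rfl
    intro j hj
    rw [Finset.mem_Icc] at hj
    have := hp j hj.1 hj.2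
    rw [Finset.sum_ite_eq, if_pos (by rw [Finset.mem_Icc]; omega)]
  rw [h2]
  have h3 : Finset.Icc 1 t = insert 1 (Finset.Icc 2 t) := by
    ext x; simp only [Finset.mem_insert, Finset.mem_Icc]; omega
  rw [h3, Finset.sum_insert (by simp), Finset.sum_insert (by simp)]
  have h4 : ∑ i ∈ Finset.Icc 2 t, (if 2 ≤ i then φ (blk m i) else 0) = ∑ i ∈ Finset.Icc 2 t, φ (blk m i) := by
    apply Finset.sum_congr rfl
    intro j hj
    rw [Finset.mem_Icc] at hj
    rw [if_pos hj.1]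
  rw [h4]
  have h5 : blk m 1 = 1 := by simp [blk]
  rw [h5, ← Finset.mul_sum]
  norm_num
  ring

lemma sumW_one (β : ℝ) {n m t : ℕ} (ht1 : 1 ≤ t) (ht : t ≤ n * m) {p : ℕ → ℕ} (hp : Valid t p) :
    ∑ a ∈ Finset.Icc 1 n, W β m t p a = S β t := by
  have := sumW β ht1 ht hp (fun _ => 1)
  simp only [mul_one] at this
  rw [this]
  simp only [Finset.sum_const, Nat.card_Icc, nsmul_eq_mul, S]
  rw [Nat.cast_sub (by omega)]
  push_cast; ring

lemma Ev_step' {β : ℝ} (hβ : 0 < β) {n m t : ℕ} (ht1 : 1 ≤ t) (ht : t ≤ n * m) (F A : (ℕ → ℕ) → ℝ)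
    (φ : (ℕ → ℕ) → ℕ → ℝ)
    (h : ∀ p, Valid t p → ∀ i ∈ Finset.Icc 1 t, F (Function.update p (t+1) i) = A p + φ p (blk m i)) :
    Ev β (t+1) F = Ev β t (fun p => A p + (∑ a ∈ Finset.Icc 1 n, W β m t p a * φ p a) / S β t) := by
  rw [Ev_step β ht1]
  apply Ev_congr
  intro p hp
  have hS := S_pos hβ ht1
  have h1 : ∑ i ∈ Finset.Icc 1 t, ((degp p t i : ℝ) + β) * F (Function.update p (t+1) i)
     = ∑ i ∈ Finset.Icc 1 t, ((degp p t i : ℝ) + β) * (fun a => A p + φ p a) (blk m i) :=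
    Finset.sum_congr rfl fun i hi => by rw [h p hp i hi]
  rw [h1, sumDeg β ht1 ht hp (fun a => A p + φ p a)]
  simp only [mul_add, Finset.sum_add_distrib]
  rw [← Finset.sum_mul, sumW_one β ht1 ht hp]
  field_simp

lemma Ev_const {β : ℝ} (hβ : 0 < β) {t : ℕ} (ht : 1 ≤ t) (c : ℝ) : Ev β t (fun _ => c) = c := by
  induction t, ht using Nat.le_induction with
  | base => exact Ev_one β _ c (fun _ => rfl)
  | succ t ht ih =>
    rw [Ev_step' (n := t) (m := 1) hβ ht (by simp) _ (fun _ => c) (fun _ _ => 0) (by simp)]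
    simpa using ih

/-! sequence bound -/

lemma step_factor {β : ℝ} (hβ : 0 < β) {t : ℕ} (ht : 1 ≤ t) :
    (t:ℝ) ^ (2 / (2 + β)) * (1 + 2 / S β (t+1)) ≤ ((t+1 : ℕ):ℝ) ^ (2 / (2 + β)) := by
  have ht' : (1:ℝ) ≤ t := by exact_mod_cast ht
  have hb := rpow_one_add_le_one_add_mul_self (s := -(1/((t:ℝ)+1))) (p := 2/(2+β))
    (by rw [neg_le_neg_iff, div_le_one (by linarith)]; linarith) (by positivity)
    (by rw [div_le_one (by linarith)]; linarith)
  have e1 : 1 + -(1/((t:ℝ)+1)) = t / (t+1) := by field_simp; ring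
  rw [e1, Real.div_rpow (by linarith) (by linarith)] at hb
  have hp : 0 < ((t:ℝ)+1) ^ (2/(2+β)) := Real.rpow_pos_of_pos (by linarith) _
  rw [div_le_iff₀ hp] at hb
  have hS := S_pos hβ (t := t+1) (by omega)
  have e2 : (1 + 2 / (2+β) * -(1/((t:ℝ)+1))) * (1 + 2 / S β (t+1)) = 1 := by
    have : S β (t+1) = (2+β) * ((t:ℝ)+1) - 2 := by unfold S; push_cast; ring
    rw [this] at hS ⊢
    have h3 : (2+β) ≠ 0 := by linarith
    have h4 : (t:ℝ)+1 ≠ 0 := by linarith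
    field_simp
    ring
  push_cast
  calc (t:ℝ) ^ (2 / (2 + β)) * (1 + 2 / S β (t+1))
      ≤ ((1 + 2 / (2+β) * -(1/((t:ℝ)+1))) * ((t:ℝ)+1) ^ (2/(2+β))) * (1 + 2 / S β (t+1)) :=
        mul_le_mul_of_nonneg_right hb (by positivity)
    _ = ((1 + 2 / (2+β) * -(1/((t:ℝ)+1))) * (1 + 2 / S β (t+1))) * ((t:ℝ)+1) ^ (2/(2+β)) := by ring
    _ = _ := by rw [e2, one_mul]

lemma seq_bound {β : ℝ} (hβ : 0 < β) (C X : ℝ) (hC : 0 ≤ C) (hX : 0 ≤ X) :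
    ∃ K : ℝ, 0 < K ∧ ∀ (N : ℕ) (x : ℕ → ℝ), x 1 ≤ X →
      (∀ t, 1 ≤ t → t < N → x (t+1) ≤ x t * (1 + 2 / S β t) + C / t) →
      ∀ t, 1 ≤ t → t ≤ N → x t ≤ K * (t:ℝ) ^ (2 / (2 + β)) := by
  set C0 := C * (2+β) / 2 + 1 with hC0
  have hC0p : 0 < C0 := by positivity
  have hS1 := S_pos hβ (t := 1) le_rfl
  have hK : 0 < (X + C0) * (1 + 2 / S β 1) := by positivity
  refine ⟨(X + C0) * (1 + 2 / S β 1), hK, ?_⟩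
  intro N x hx1 hstep
  have hstep' : ∀ t, 1 ≤ t → t < N → x (t+1) + C0 ≤ (x t + C0) * (1 + 2 / S β t) := by
    intro t h1 h2
    have := hstep t h1 h2
    have hS := S_pos hβ h1
    have ht' : (1:ℝ) ≤ t := by exact_mod_cast h1
    have h3 : C / t ≤ C0 * (2 / S β t) := by
      rw [mul_div_assoc', div_le_div_iff₀ (by linarith) hS]
      unfold S
      rw [hC0]
      nlinarith [mul_nonneg hC hβ.le]
    linarith [add_mul (x t) C0 (1 + 2 / S β t), mul_add C0 1 (2 / S β t)]
  have key : ∀ t, 1 ≤ t → t + 1 ≤ N →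
      x (t+1) + C0 ≤ (X + C0) * (1 + 2 / S β 1) * (t:ℝ) ^ (2 / (2 + β)) := by
    intro t ht
    induction t, ht using Nat.le_induction with
    | base =>
      intro h
      have := hstep' 1 le_rfl (by omega)
      simp only [Nat.cast_one, Real.one_rpow, mul_one]
      refine this.trans (mul_le_mul_of_nonneg_right (by linarith) (by positivity))
    | succ t ht ih =>
      intro h
      have h1 := ih (by omega)
      have h2 := hstep' (t+1) (by omega) (by omega)
      have hS := S_pos hβ (t := t+1) (by omega)
      refine h2.trans ((mul_le_mul_of_nonneg_right h1 (by positivity)).trans ?_)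
      rw [mul_assoc]
      exact mul_le_mul_of_nonneg_left (step_factor hβ ht) hK.le
  intro t h1 h2
  rcases Nat.lt_or_ge t 2 with h | h
  · have : t = 1 := by omega
    subst this
    simp only [Nat.cast_one, Real.one_rpow, mul_one]
    have : 0 ≤ 2 / S β 1 := by positivity
    nlinarith
  · obtain ⟨s, rfl⟩ : ∃ s, t = s + 1 := ⟨t-1, by omega⟩
    have h3 := key s (by omega) h2
    have h4 : (s:ℝ) ^ (2 / (2 + β)) ≤ ((s+1:ℕ):ℝ) ^ (2 / (2 + β)) :=
      Real.rpow_le_rpow (by positivity) (by push_cast; linarith) (by positivity)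
    have := mul_le_mul_of_nonneg_left h4 hK.le
    linarith

/-! state functionals -/

noncomputable def L (m t : ℕ) (p : ℕ → ℕ) (a : ℕ) : ℝ :=
  (if a = 1 then 1 else 0) + ∑ j ∈ Finset.Icc 2 t, bI m (p j) a * bI m j a

noncomputable def y (m t : ℕ) (p : ℕ → ℕ) (a b : ℕ) : ℝ :=
  ∑ j ∈ Finset.Icc 2 t, bI m (p j) a * bI m j b

lemma sum_upd {t i : ℕ} (ht : 1 ≤ t) (p : ℕ → ℕ) (g : ℕ → ℕ → ℝ) :
    ∑ j ∈ Finset.Icc 2 (t+1), g (Function.update p (t+1) i j) j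
      = ∑ j ∈ Finset.Icc 2 t, g (p j) j + g i (t+1) := by
  rw [Finset.sum_Icc_succ_top (by omega), Function.update_self]
  congr 1
  apply Finset.sum_congr rfl
  intro j hj
  rw [Finset.mem_Icc] at hj
  rw [Function.update_of_ne (by omega)]

lemma W_upd (β : ℝ) (m : ℕ) {t i : ℕ} (ht : 1 ≤ t) (p : ℕ → ℕ) (a : ℕ) :
    W β m (t+1) (Function.update p (t+1) i) a
      = W β m t p a + bI m i a + (1+β) * bI m (t+1) a := by
  unfold W
  rw [sum_upd ht p (fun x j => bI m x a + (1+β) * bI m j a)]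
  ring

lemma L_upd (m : ℕ) {t i : ℕ} (ht : 1 ≤ t) (p : ℕ → ℕ) (a : ℕ) :
    L m (t+1) (Function.update p (t+1) i) a = L m t p a + bI m i a * bI m (t+1) a := by
  unfold L
  rw [sum_upd ht p (fun x j => bI m x a * bI m j a)]
  ring

lemma y_upd (m : ℕ) {t i : ℕ} (ht : 1 ≤ t) (p : ℕ → ℕ) (a b : ℕ) :
    y m (t+1) (Function.update p (t+1) i) a b = y m t p a b + bI m i a * bI m (t+1) b := by
  unfold y
  rw [sum_upd ht p (fun x j => bI m x a * bI m j b)]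

lemma W_nonneg {β : ℝ} (hβ : 0 < β) (m t : ℕ) (p : ℕ → ℕ) (a : ℕ) : 0 ≤ W β m t p a := by
  unfold W
  refine add_nonneg (by split_ifs <;> linarith) (Finset.sum_nonneg fun j _ => ?_)
  have := bI_nonneg m (p j) a
  have := bI_nonneg m j a
  positivity

lemma y_nonneg (m t : ℕ) (p : ℕ → ℕ) (a b : ℕ) : 0 ≤ y m t p a b :=
  Finset.sum_nonneg fun j _ => mul_nonneg (bI_nonneg _ _ _) (bI_nonneg _ _ _)

lemma L_nonneg (m t : ℕ) (p : ℕ → ℕ) (a : ℕ) : 0 ≤ L m t p a := by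
  unfold L
  refine add_nonneg (by split_ifs <;> norm_num)
    (Finset.sum_nonneg fun j _ => mul_nonneg (bI_nonneg _ _ _) (bI_nonneg _ _ _))

lemma Icc_one_insert {t : ℕ} (ht : 1 ≤ t) : Finset.Icc 1 t = insert 1 (Finset.Icc 2 t) := by
  ext x; simp only [Finset.mem_insert, Finset.mem_Icc]; omega

lemma sum_Icc_two {t : ℕ} (ht : 1 ≤ t) (m a : ℕ) :
    ∑ j ∈ Finset.Icc 1 t, bI m j a = (if a = 1 then 1 else 0) + ∑ j ∈ Finset.Icc 2 t, bI m j a := by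
  rw [Icc_one_insert ht, Finset.sum_insert (by simp)]
  congr 1
  unfold bI blk
  simp [eq_comm]

/-- number of earlier vertices in the current block -/
lemma count_cur {m t : ℕ} (hm : 1 ≤ m) :
    ∑ j ∈ Finset.Icc 1 t, bI m j (blk m (t+1)) = ((t % m : ℕ) : ℝ) := by
  unfold bI
  rw [← Finset.sum_filter, Finset.sum_const, nsmul_eq_mul, mul_one]
  congr 1
  have : (Finset.Icc 1 t).filter (fun j => blk m j = blk m (t+1)) = Finset.Ioc (m * (t/m)) t := by
    ext j
    simp only [Finset.mem_filter, Finset.mem_Icc, Finset.mem_Ioc, blk, Nat.add_sub_cancel]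
    have h0 := Nat.div_add_mod t m
    have h1 := Nat.mod_lt t hm
    constructor
    · rintro ⟨⟨h2, h3⟩, h4⟩
      have h5 : (j-1)/m = t/m := by omega
      have := Nat.div_mul_le_self (j-1) m
      rw [h5, mul_comm] at this
      omega
    · rintro ⟨h2, h3⟩
      refine ⟨⟨by omega, h3⟩, ?_⟩
      have : (j-1)/m = t/m := by
        apply le_antisymm
        · exact Nat.div_le_div_right (by omega)
        · rw [Nat.le_div_iff_mul_le hm, mul_comm]; omega
      omega
  rw [this, Nat.card_Ioc]
  have h0 := Nat.div_add_mod t m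
  omega

lemma count_blk {n m a : ℕ} (hm : 1 ≤ m) (ha : a ∈ Finset.Icc 1 n) :
    ∑ j ∈ Finset.Icc 1 (n*m), bI m j a = (m : ℝ) := by
  rw [Finset.mem_Icc] at ha
  unfold bI
  rw [← Finset.sum_filter, Finset.sum_const, nsmul_eq_mul, mul_one]
  congr 1
  obtain ⟨k, rfl⟩ : ∃ k, a = k + 1 := ⟨a-1, by omega⟩
  have hk : k * m + m ≤ n * m := by
    have := Nat.mul_le_mul_right m ha.2
    rwa [Nat.succ_mul] at this
  have : (Finset.Icc 1 (n*m)).filter (fun j => blk m j = k+1) = Finset.Ioc (k*m) (k*m+m) := by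
    ext j
    rw [Finset.mem_filter, Finset.mem_Icc, Finset.mem_Ioc]
    unfold blk
    have hdiv := Nat.div_eq_iff (x := j-1) (k := m) (y := k) hm
    rw [Nat.add_right_cancel_iff, hdiv]
    omega
  rw [this, Nat.card_Ioc]
  omega

lemma bI_cur {m t j : ℕ} {p : ℕ → ℕ} (hp : Valid t p) (hj : j ∈ Finset.Icc 2 t) :
    bI m (p j) (blk m (t+1)) = bI m (p j) (blk m (t+1)) * bI m j (blk m (t+1)) := by
  rw [Finset.mem_Icc] at hj
  have h := hp j hj.1 hj.2
  have h1 : blk m (p j) ≤ blk m j := blk_mono h.2.le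
  have h2 : blk m j ≤ blk m (t+1) := blk_mono (by omega)
  unfold bI
  split_ifs with h3 h4
  · norm_num
  · omega
  · norm_num
  · norm_num

lemma W_cur (β : ℝ) {m t : ℕ} (hm : 1 ≤ m) (ht : 1 ≤ t) {p : ℕ → ℕ} (hp : Valid t p) :
    W β m t p (blk m (t+1)) = (1+β) * ((t % m : ℕ):ℝ) + L m t p (blk m (t+1))
      - 2 * (if blk m (t+1) = 1 then 1 else 0) := by
  have h := count_cur (t := t) hm
  rw [sum_Icc_two ht] at h
  unfold W L
  rw [← h, Finset.sum_add_distrib, ← Finset.mul_sum,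
    Finset.sum_congr rfl (fun j hj => bI_cur (m := m) hp hj)]
  split_ifs <;> ring

lemma L_cur_le {m t : ℕ} (hm : 1 ≤ m) (ht : 1 ≤ t) {p : ℕ → ℕ} :
    L m t p (blk m (t+1)) ≤ ((t % m : ℕ):ℝ) := by
  have h := count_cur (t := t) hm
  rw [sum_Icc_two ht] at h
  rw [← h]
  unfold L
  gcongr with j hj
  exact mul_le_of_le_one_left (bI_nonneg _ _ _) (bI_le _ _ _)

lemma y_cur_le {m t : ℕ} (hm : 1 ≤ m) (ht : 1 ≤ t) {p : ℕ → ℕ} (a : ℕ) :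
    y m t p a (blk m (t+1)) ≤ ((t % m : ℕ):ℝ) := by
  have h := count_cur (t := t) hm
  rw [sum_Icc_two ht] at h
  rw [← h]
  unfold y
  have : (0:ℝ) ≤ if blk m (t+1) = 1 then 1 else 0 := by split_ifs <;> norm_num
  refine le_trans ?_ (le_add_of_nonneg_left this)
  gcongr with j hj
  exact mul_le_of_le_one_left (bI_nonneg _ _ _) (bI_le _ _ _)

lemma mod_le {m t : ℕ} (hm : 1 ≤ m) : ((t % m : ℕ):ℝ) ≤ m := by
  exact_mod_cast (Nat.mod_lt t hm).le

lemma W_cur_le {β : ℝ} (hβ : 0 < β) {m t : ℕ} (hm : 1 ≤ m) (ht : 1 ≤ t) {p : ℕ → ℕ} (hp : Valid t p) :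
    W β m t p (blk m (t+1)) ≤ (2+β) * m := by
  rw [W_cur β hm ht hp]
  have h1 := L_cur_le hm ht (p := p)
  have h2 := mod_le (t := t) hm
  have : (0:ℝ) ≤ if blk m (t+1) = 1 then 1 else 0 := by split_ifs <;> norm_num
  nlinarith

lemma W_cur_abs (β : ℝ) {m t : ℕ} (hm : 1 ≤ m) (ht : 1 ≤ t) {p : ℕ → ℕ} (hp : Valid t p) :
    |W β m t p (blk m (t+1)) - (1+β) * ((t % m : ℕ):ℝ)| ≤ L m t p (blk m (t+1)) := by
  rw [W_cur β hm ht hp]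
  have h : (if blk m (t+1) = 1 then (1:ℝ) else 0) ≤ L m t p (blk m (t+1)) := by
    unfold L
    exact le_add_of_nonneg_right
      (Finset.sum_nonneg fun j _ => mul_nonneg (bI_nonneg _ _ _) (bI_nonneg _ _ _))
  have : (0:ℝ) ≤ if blk m (t+1) = 1 then 1 else 0 := by split_ifs <;> norm_num
  rw [abs_le]
  constructor <;> linarith

/-! recursions -/

lemma Ev_abs {β : ℝ} (hβ : 0 < β) {t : ℕ} {F G H : (ℕ → ℕ) → ℝ}
    (h : ∀ p, Valid t p → |F p - G p| ≤ H p) : |Ev β t F - Ev β t G| ≤ Ev β t H := by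
  have h1 : Ev β t F ≤ Ev β t (fun p => G p + H p) :=
    Ev_mono hβ fun p hp => by linarith [(abs_le.mp (h p hp)).2]
  have h2 : Ev β t G ≤ Ev β t (fun p => F p + H p) :=
    Ev_mono hβ fun p hp => by linarith [(abs_le.mp (h p hp)).1]
  rw [Ev_add] at h1 h2
  rw [abs_le]
  constructor <;> linarith

lemma Ev_lin {β : ℝ} (hβ : 0 < β) {t : ℕ} (ht : 1 ≤ t) (F : (ℕ → ℕ) → ℝ) (a b : ℝ) :
    Ev β t (fun p => a * F p + b) = a * Ev β t F + b := by
  rw [Ev_add β t (fun p => a * F p) (fun _ => b), Ev_smul, Ev_const hβ ht]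

lemma mod_succ {m t : ℕ} (h : (t+1) % m ≠ 0) :
    blk m (t+1+1) = blk m (t+1) ∧ (t+1) % m = t % m + 1 := by
  have h1 : ¬ m ∣ t+1 := fun hd => h (Nat.mod_eq_zero_of_dvd hd)
  have h2 : (t+1)/m = t/m := by rw [Nat.succ_div, if_neg h1]; rfl
  have h3 := Nat.div_add_mod (t+1) m
  have h4 := Nat.div_add_mod t m
  rw [h2] at h3
  refine ⟨?_, by omega⟩
  unfold blk
  simp only [Nat.add_sub_cancel]
  rw [h2]

lemma div_S_le {β : ℝ} (hβ : 0 < β) {t : ℕ} (ht : 1 ≤ t) {c : ℝ} (hc : 0 ≤ c) :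
    c / S β t ≤ c / β / t := by
  have ht' : (1:ℝ) ≤ t := by exact_mod_cast ht
  rw [div_div]
  exact div_le_div_of_nonneg_left hc (by positivity) (S_ge ht)

lemma ell_bound {β : ℝ} (hβ : 0 < β) {m : ℕ} (hm : 1 ≤ m) :
    ∃ C : ℝ, 0 < C ∧ ∀ t, 1 ≤ t → Ev β t (fun p => L m t p (blk m (t+1))) ≤ C / t := by
  set C := 2 * ((2+β) * m / β) with hC
  have hCp : 0 ≤ C := by positivity
  have key : ∀ t, 1 ≤ t → t * Ev β t (fun p => L m t p (blk m (t+1))) ≤ (2 + C) ^ (t % m + 1) := by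
    intro t ht
    induction t, ht using Nat.le_induction with
    | base =>
      have h1 : Ev β 1 (fun p => L m 1 p (blk m (1+1))) ≤ Ev β 1 (fun _ => 1) := by
        apply Ev_mono hβ
        intro p _
        refine (L_cur_le hm le_rfl).trans ?_
        exact_mod_cast Nat.mod_le 1 m
      rw [Ev_const hβ le_rfl] at h1
      have h2 : (1:ℝ) ≤ (2 + C) ^ (1 % m + 1) := one_le_pow₀ (by linarith)
      push_cast
      linarith
    | succ t ht ih =>
      by_cases h0 : (t+1) % m = 0
      · have h1 : Ev β (t+1) (fun p => L m (t+1) p (blk m (t+1+1))) ≤ Ev β (t+1) (fun _ => 0) := by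
          apply Ev_mono hβ
          intro p _
          have := L_cur_le hm (t := t+1) (by omega) (p := p)
          rw [h0] at this
          simpa using this
        rw [Ev_const hβ (by omega)] at h1
        have h2 : (0:ℝ) ≤ (2 + C) ^ ((t+1) % m + 1) := by positivity
        exact (mul_nonpos_of_nonneg_of_nonpos (by positivity) h1).trans h2
      · obtain ⟨hb, hmod⟩ := mod_succ h0
        rw [hb, hmod]
        have htm : t + 1 ≤ (t+1) * m := Nat.le_mul_of_pos_right _ hm
        rw [Ev_step' (n := t+1) (m := m) hβ ht (by omega) _ (fun p => L m t p (blk m (t+1)))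
          (fun _ a => if a = blk m (t+1) then 1 else 0)
          (fun p _ i _ => by rw [L_upd m ht]; simp [bI])]
        have h1 : Ev β t (fun p => L m t p (blk m (t+1)) + (∑ a ∈ Finset.Icc 1 (t+1), W β m t p a *
            (if a = blk m (t+1) then 1 else 0)) / S β t)
            ≤ Ev β t (fun p => 1 * L m t p (blk m (t+1)) + ((2+β) * m) / β / t) := by
          apply Ev_mono hβ
          intro p hp
          simp only [mul_ite, mul_one, mul_zero]
          rw [Finset.sum_ite_eq', if_pos (blk_mem (by omega) htm), one_mul]
          have h2 := W_cur_le hβ hm ht hp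
          have h3 := div_le_div_of_nonneg_right h2 (S_pos hβ ht).le
          have h4 := div_S_le hβ ht (c := (2+β)*m) (by positivity)
          linarith
        rw [Ev_lin hβ ht, one_mul] at h1
        have ht' : (1:ℝ) ≤ t := by exact_mod_cast ht
        set e := Ev β t (fun p => L m t p (blk m (t+1)))
        have he : 0 ≤ e := by
          have : Ev β t (fun _ => 0) ≤ e := Ev_mono hβ fun p _ => L_nonneg _ _ _ _
          rwa [Ev_const hβ ht] at this
        have h5 : ((t+1:ℕ):ℝ) * (e + ((2+β) * m) / β / t) ≤ 2 * (t * e) + C := by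
          have e1 : ((t+1:ℕ):ℝ) ≤ 2 * t := by push_cast; linarith
          have e2 : 0 ≤ e + ((2+β) * m) / β / t := by positivity
          refine (mul_le_mul_of_nonneg_right e1 e2).trans (le_of_eq ?_)
          rw [hC]; field_simp
        have h6 : (1:ℝ) ≤ (2 + C) ^ (t % m + 1) := one_le_pow₀ (by linarith)
        calc _ ≤ ((t+1:ℕ):ℝ) * (e + ((2+β) * m) / β / t) :=
              mul_le_mul_of_nonneg_left h1 (by positivity)
          _ ≤ 2 * (t * e) + C := h5
          _ ≤ 2 * (2 + C) ^ (t % m + 1) + C * (2 + C) ^ (t % m + 1) := by nlinarith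
          _ = _ := by ring
  refine ⟨(2+C)^(m+1), by positivity, fun t ht => ?_⟩
  have ht' : (1:ℝ) ≤ t := by exact_mod_cast ht
  rw [le_div_iff₀ (by linarith), mul_comm]
  refine (key t ht).trans ?_
  exact pow_le_pow_right₀ (by linarith) (by have := Nat.mod_lt t hm; omega)

noncomputable def Q (β : ℝ) (n m t : ℕ) (p : ℕ → ℕ) : ℝ :=
  ∑ a ∈ Finset.Icc 1 n, W β m t p a * (W β m t p a + 1)

noncomputable def R (β : ℝ) (n m t : ℕ) (p : ℕ → ℕ) : ℝ :=
  ∑ a ∈ Finset.Icc 1 n, W β m t p a * L m t p a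

noncomputable def V (β : ℝ) (n m t : ℕ) (c : ℕ) (p : ℕ → ℕ) : ℝ :=
  ∑ a ∈ Finset.Icc 1 n, W β m t p a * y m t p a c

noncomputable def D (n m t : ℕ) (p : ℕ → ℕ) : ℝ :=
  ∑ a ∈ Finset.Icc 1 n, ∑ b ∈ Finset.Icc 1 n, y m t p a b * (y m t p a b - 1)

lemma Q_step {β : ℝ} (hβ : 0 < β) {n m t : ℕ} (ht : 1 ≤ t) (htn : t < n * m) :
    Ev β (t+1) (Q β n m (t+1)) = Ev β t (fun p => Q β n m t p * (1 + 2 / S β t) + (1+β)*(2+β)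
      + 2 * (1+β) * W β m t p (blk m (t+1)) * (1 + 1 / S β t)) := by
  have hc : blk m (t+1) ∈ Finset.Icc 1 n := blk_mem (by omega) (by omega)
  rw [Ev_step' (n := n) (m := m) hβ ht htn.le _
    (fun p => Q β n m t p + (2 * (1+β) * W β m t p (blk m (t+1)) + (1+β)*(2+β)))
    (fun p a => 2 * W β m t p a + 2 + 2 * (1+β) * bI m (t+1) a)]
  · apply Ev_congr
    intro p hp
    have hS := S_pos hβ ht
    have h1 : ∑ a ∈ Finset.Icc 1 n, W β m t p a * (2 * W β m t p a + 2 + 2 * (1+β) * bI m (t+1) a)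
        = 2 * Q β n m t p + 2 * (1+β) * W β m t p (blk m (t+1)) := by
      rw [← sum_bI hc (fun a => W β m t p a), Q, Finset.mul_sum, Finset.mul_sum, ← Finset.sum_add_distrib]
      exact Finset.sum_congr rfl fun a _ => by ring
    rw [h1]
    field_simp
    ring
  · intro p hp i hi
    rw [Finset.mem_Icc] at hi
    have hi' : blk m i ∈ Finset.Icc 1 n := blk_mem hi.1 (by omega)
    rw [← sum_bI hi' (fun a => 2 * W β m t p a + 2 + 2 * (1+β) * bI m (t+1) a),
      ← sum_bI hc (fun a => 2 * (1+β) * W β m t p a + (1+β)*(2+β)), Q, Q,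
      ← Finset.sum_add_distrib, ← Finset.sum_add_distrib]
    refine Finset.sum_congr rfl fun a _ => ?_
    rw [W_upd β m ht]
    linear_combination bI_sq m i a + (1+β)^2 * bI_sq m (t+1) a

noncomputable def kap (β : ℝ) (m : ℕ) : ℝ := ((1+β)*(2+β) + ((m:ℝ)-1)*(1+β)^2) / β

noncomputable def P (β : ℝ) (m t : ℕ) : ℝ := (1+β)^2 * (((t % m : ℕ):ℝ) * (((t % m : ℕ):ℝ) - m))

lemma P_succ (β : ℝ) {m : ℕ} (hm : 1 ≤ m) (t : ℕ) :
    P β m (t+1) = P β m t + (1+β)^2 * (2 * ((t % m : ℕ):ℝ) + 1 - m) := by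
  unfold P
  by_cases h0 : (t+1) % m = 0
  · have h1 : t % m + 1 = m := by
      have h2 : m ∣ t + 1 := Nat.dvd_of_mod_eq_zero h0
      have h3 : m ∣ t % m + 1 := by
        have h4 := Nat.div_add_mod t m
        have : t + 1 = m * (t/m) + (t % m + 1) := by omega
        rw [this] at h2
        exact (Nat.dvd_add_right (Dvd.intro _ rfl)).mp h2
      have := Nat.le_of_dvd (by omega) h3
      have := Nat.mod_lt t hm
      omega
    have h2 : ((t % m : ℕ):ℝ) = m - 1 := by
      have : ((t % m + 1 : ℕ):ℝ) = m := by rw [h1]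
      push_cast at this
      linarith
    rw [h0, h2]
    push_cast
    ring
  · rw [(mod_succ h0).2]
    push_cast
    ring

lemma P_abs (β : ℝ) {m : ℕ} (hm : 1 ≤ m) (t : ℕ) : |P β m t| ≤ (1+β)^2 * (m:ℝ)^2 := by
  unfold P
  rw [abs_mul, abs_of_nonneg (sq_nonneg (1+β))]
  have h1 := mod_le (t := t) hm
  have h2 : (0:ℝ) ≤ ((t % m : ℕ):ℝ) := by positivity
  refine mul_le_mul_of_nonneg_left ?_ (sq_nonneg _)
  rw [abs_le]
  constructor <;> nlinarith

lemma Q_bound {β : ℝ} (hβ : 0 < β) {m : ℕ} (hm : 1 ≤ m) :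
    ∃ K : ℝ, 0 < K ∧ ∀ n t, 1 ≤ t → t ≤ n * m →
      |Ev β t (Q β n m t) - kap β m * S β t - P β m t| ≤ K * (t:ℝ) ^ (2 / (2 + β)) := by
  obtain ⟨Cl, hCl, hl⟩ := ell_bound hβ hm
  obtain ⟨K, hK, hseq⟩ := seq_bound hβ
    (2 * (1+β) * Cl + 2 * (1+β) * ((2+β)*m) / β + ((1+β)^2 * (m:ℝ)^2 * 2) / β)
    |β * (β+1) - kap β m * S β 1 - P β m 1| (by positivity) (abs_nonneg _)
  refine ⟨K, hK, fun n t h1 h2 => ?_⟩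
  refine hseq (n*m) (fun t => |Ev β t (Q β n m t) - kap β m * S β t - P β m t|) ?_ ?_ t h1 h2
  · apply le_of_eq
    have hn : 1 ≤ n := by
      rcases Nat.eq_zero_or_pos n with h | h
      · subst h; omega
      · exact h
    rw [Ev_one β _ (β * (β+1))]
    intro p
    unfold Q W
    simp [hn]
  · clear h1 h2 t
    intro t ht htn
    have hS := S_pos hβ ht
    have ht' : (1:ℝ) ≤ t := by exact_mod_cast ht
    have h1 : |Ev β (t+1) (Q β n m (t+1)) - ((1 + 2 / S β t) * Ev β t (Q β n m t)
        + ((1+β)*(2+β) + 2*(1+β)^2 * ((t % m : ℕ):ℝ)))| ≤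
        2 * (1+β) * Ev β t (fun p => L m t p (blk m (t+1))) + 2 * (1+β) * ((2+β)*m) / β / t := by
      rw [Q_step hβ ht htn, ← Ev_lin hβ ht, ← Ev_lin hβ ht]
      apply Ev_abs hβ
      intro p hp
      have a1 := W_cur_abs β hm ht hp
      have a2 := W_cur_le hβ hm ht hp
      have a3 := W_nonneg hβ m t p (blk m (t+1))
      have a4 := div_S_le hβ ht (c := 2 * (1+β) * ((2+β)*m)) (by positivity)
      set w := W β m t p (blk m (t+1))
      have e : Q β n m t p * (1 + 2 / S β t) + (1 + β) * (2 + β) + 2 * (1 + β) * w * (1 + 1 / S β t)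
        - ((1 + 2 / S β t) * Q β n m t p + ((1 + β) * (2 + β) + 2 * (1 + β) ^ 2 * ((t % m : ℕ):ℝ)))
        = 2 * (1+β) * (w - (1+β) * ((t % m : ℕ):ℝ)) + 2 * (1+β) * w / S β t := by ring
      rw [e]
      refine (abs_add_le _ _).trans (add_le_add ?_ ?_)
      · rw [abs_mul, abs_of_nonneg (by positivity : (0:ℝ) ≤ 2 * (1+β))]
        exact mul_le_mul_of_nonneg_left a1 (by positivity)
      · rw [abs_of_nonneg (by positivity)]
        refine le_trans ?_ a4
        exact div_le_div_of_nonneg_right (mul_le_mul_of_nonneg_left a2 (by positivity)) hS.le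
    have h2 := hl t ht
    have h3 : |P β m t * 2 / S β t| ≤ ((1+β)^2 * (m:ℝ)^2 * 2) / β / t := by
      rw [abs_div, abs_mul, abs_of_pos hS, abs_of_pos (by norm_num : (0:ℝ) < 2)]
      refine le_trans ?_ (div_S_le hβ ht (by positivity))
      exact div_le_div_of_nonneg_right (mul_le_mul_of_nonneg_right (P_abs β hm t) (by norm_num)) hS.le
    set q' := Ev β (t+1) (Q β n m (t+1))
    set q := Ev β t (Q β n m t)
    have hk : kap β m * β = (1+β)*(2+β) + ((m:ℝ)-1)*(1+β)^2 := by
      unfold kap; field_simp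
    have e : q' - kap β m * S β (t+1) - P β m (t+1) =
        (q - kap β m * S β t - P β m t) * (1 + 2 / S β t)
        + (q' - ((1 + 2 / S β t) * q + ((1+β)*(2+β) + 2*(1+β)^2 * ((t % m : ℕ):ℝ))))
        + P β m t * 2 / S β t := by
      rw [P_succ β hm, S_succ]
      have : kap β m * S β t * (1 + 2 / S β t) = kap β m * S β t + 2 * kap β m := by
        field_simp
      linear_combination this - hk
    rw [e]
    refine (abs_add_le _ _).trans ?_
    refine (add_le_add_left (abs_add_le _ _) _).trans ?_
    rw [abs_mul, abs_of_nonneg (by positivity : 0 ≤ 1 + 2 / S β t)]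
    have h4 := mul_le_mul_of_nonneg_left h2 (by positivity : 0 ≤ 2 * (1+β))
    have e3 : (2 * (1+β) * Cl + 2 * (1+β) * ((2+β)*m) / β + ((1+β)^2 * (m:ℝ)^2 * 2) / β) / t
      = 2 * (1+β) * (Cl / t) + 2 * (1+β) * ((2+β)*m) / β / t + ((1+β)^2 * (m:ℝ)^2 * 2) / β / t := by
      rw [add_div, add_div]; ring
    rw [e3]
    linarith

lemma Q_lin {β : ℝ} (hβ : 0 < β) {m : ℕ} (hm : 1 ≤ m) :
    ∃ K : ℝ, 0 < K ∧ ∀ n t, 1 ≤ t → t ≤ n * m → Ev β t (Q β n m t) ≤ K * t := by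
  obtain ⟨K, hK, h⟩ := Q_bound hβ hm
  have hm' : (1:ℝ) ≤ m := by exact_mod_cast hm
  have hk : 0 ≤ kap β m := by
    unfold kap
    have : 0 ≤ (m:ℝ) - 1 := by linarith
    positivity
  refine ⟨kap β m * (2+β) + (1+β)^2 * (m:ℝ)^2 + K, by positivity, fun n t h1 h2 => ?_⟩
  have h3 := (abs_le.mp (h n t h1 h2)).2
  have h4 := (abs_le.mp (P_abs β hm t)).2
  have ht' : (1:ℝ) ≤ t := by exact_mod_cast h1
  have h5 : (t:ℝ) ^ (2 / (2 + β)) ≤ t := by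
    have := Real.rpow_le_rpow_of_exponent_le ht' (show 2 / (2+β) ≤ 1 by
      rw [div_le_one (by linarith)]; linarith)
    rwa [Real.rpow_one] at this
  have h6 : kap β m * S β t ≤ kap β m * ((2+β) * t) :=
    mul_le_mul_of_nonneg_left (by unfold S; linarith) hk
  have h7 : (1+β)^2 * (m:ℝ)^2 ≤ (1+β)^2 * (m:ℝ)^2 * t := le_mul_of_one_le_right (by positivity) ht'
  have h8 := mul_le_mul_of_nonneg_left h5 hK.le
  linarith

lemma R_bound {β : ℝ} (hβ : 0 < β) {m : ℕ} (hm : 1 ≤ m) :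
    ∃ K : ℝ, 0 < K ∧ ∀ n t, 1 ≤ t → t ≤ n * m →
      Ev β t (R β n m t) ≤ K * (t:ℝ) ^ (2 / (2 + β)) := by
  obtain ⟨Cl, hCl, hl⟩ := ell_bound hβ hm
  set B := ((2+β)*m) * ((2+β)*m + 2 + β) with hB
  obtain ⟨K, hK, hseq⟩ := seq_bound hβ ((1+β) * Cl + B / β) β (by positivity) hβ.le
  refine ⟨K, hK, fun n t h1 h2 => ?_⟩
  refine hseq (n*m) (fun t => Ev β t (R β n m t)) ?_ ?_ t h1 h2
  · apply le_of_eq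
    have hn : 1 ≤ n := by
      rcases Nat.eq_zero_or_pos n with h | h
      · subst h; omega
      · exact h
    rw [Ev_one β _ β]
    intro p
    unfold R W L
    simp [hn]
  · clear h1 h2 t
    intro t ht htn
    have hS := S_pos hβ ht
    have hc : blk m (t+1) ∈ Finset.Icc 1 n := blk_mem (by omega) (by omega)
    have ht' : (1:ℝ) ≤ t := by exact_mod_cast ht
    rw [Ev_step' (n := n) (m := m) hβ ht htn.le _
      (fun p => R β n m t p + (1+β) * L m t p (blk m (t+1)))
      (fun p a => L m t p a + bI m (t+1) a * (W β m t p a + 2 + β))]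
    · have h1 : Ev β t (fun p => R β n m t p + (1+β) * L m t p (blk m (t+1)) +
          (∑ a ∈ Finset.Icc 1 n, W β m t p a * (L m t p a + bI m (t+1) a * (W β m t p a + 2 + β))) / S β t)
          ≤ Ev β t (fun p => (1 + 2 / S β t) * R β n m t p + ((1+β) * L m t p (blk m (t+1)) + B / β / t)) := by
        apply Ev_mono hβ
        intro p hp
        have e1 : ∑ a ∈ Finset.Icc 1 n, W β m t p a * (L m t p a + bI m (t+1) a * (W β m t p a + 2 + β))
            = R β n m t p + W β m t p (blk m (t+1)) * (W β m t p (blk m (t+1)) + 2 + β) := by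
          rw [← sum_bI hc (fun a => W β m t p a * (W β m t p a + 2 + β)), R, ← Finset.sum_add_distrib]
          exact Finset.sum_congr rfl fun a _ => by ring
        rw [e1]
        have a2 := W_cur_le hβ hm ht hp
        have a3 := W_nonneg hβ m t p (blk m (t+1))
        set w := W β m t p (blk m (t+1))
        have a4 : w * (w + 2 + β) ≤ B := by
          rw [hB]
          exact mul_le_mul a2 (by linarith) (by linarith) (by positivity)
        have a5 := div_le_div_of_nonneg_right a4 hS.le
        have a6 := div_S_le hβ ht (c := B) (by positivity)
        have a7 : 0 ≤ R β n m t p :=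
          Finset.sum_nonneg fun a _ => mul_nonneg (W_nonneg hβ _ _ _ _) (L_nonneg _ _ _ _)
        have a8 : 0 ≤ R β n m t p / S β t := by positivity
        have e2 : (1 + 2 / S β t) * R β n m t p = R β n m t p + 2 * (R β n m t p / S β t) := by ring
        rw [e2, add_div]
        linarith
      refine h1.trans ?_
      rw [Ev_add β t (fun p => (1 + 2 / S β t) * R β n m t p), Ev_smul, Ev_lin hβ ht]
      have h4 := mul_le_mul_of_nonneg_left (hl t ht) (by positivity : 0 ≤ (1+β))
      have e3 : ((1+β) * Cl + B / β) / t = (1+β) * (Cl / t) + B / β / t := by rw [add_div]; ring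
      rw [e3, mul_comm (1 + 2 / S β t)]
      linarith
    · intro p hp i hi
      rw [Finset.mem_Icc] at hi
      have hi' : blk m i ∈ Finset.Icc 1 n := blk_mem hi.1 (by omega)
      rw [← sum_bI hi' (fun a => L m t p a + bI m (t+1) a * (W β m t p a + 2 + β)),
        ← sum_bI hc (fun a => L m t p a), R, R, Finset.mul_sum,
        ← Finset.sum_add_distrib, ← Finset.sum_add_distrib]
      refine Finset.sum_congr rfl fun a _ => ?_
      rw [W_upd β m ht, L_upd m ht]
      linear_combination bI m (t+1) a * bI_sq m i a + (1+β) * bI m i a * bI_sq m (t+1) a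

lemma V_bound {β : ℝ} (hβ : 0 < β) {m : ℕ} (hm : 1 ≤ m) :
    ∃ K : ℝ, 0 < K ∧ ∀ n t, 1 ≤ t → t ≤ n * m → Ev β t (V β n m t (blk m (t+1))) ≤ K := by
  obtain ⟨Kq, hKq, hq⟩ := Q_lin hβ hm
  set B := (1+β) * m + m + (1+β)*((2+β)*m)/β + Kq / β with hB
  have hBp : 0 < B := by positivity
  have hm' : (1:ℝ) ≤ m := by exact_mod_cast hm
  refine ⟨B * m, by positivity, fun n t h1 h2 => ?_⟩
  suffices Ev β t (V β n m t (blk m (t+1))) ≤ B * ((t % m : ℕ):ℝ) from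
    this.trans (mul_le_mul_of_nonneg_left (mod_le hm) hBp.le)
  have hzero : ∀ t, 1 ≤ t → t % m = 0 → Ev β t (V β n m t (blk m (t+1))) ≤ B * ((t % m : ℕ):ℝ) := by
    intro t ht h0
    rw [h0]
    have h1 : Ev β t (V β n m t (blk m (t+1))) ≤ Ev β t (fun _ => 0) := by
      apply Ev_mono hβ
      intro p _
      apply Finset.sum_nonpos
      intro a _
      have := y_cur_le hm ht (p := p) a
      rw [h0] at this
      push_cast at this
      exact mul_nonpos_of_nonneg_of_nonpos (W_nonneg hβ _ _ _ _) this
    rw [Ev_const hβ ht] at h1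
    simpa using h1
  induction t, h1 using Nat.le_induction with
  | base =>
    rw [Ev_one β _ 0]
    · positivity
    · intro p
      simp [V, y]
  | succ t ht ih =>
    by_cases h0 : (t+1) % m = 0
    · exact hzero (t+1) (by omega) h0
    obtain ⟨hb, hmod⟩ := mod_succ h0
    rw [hb, hmod]
    have ih := ih (by omega)
    have hS := S_pos hβ ht
    have hc : blk m (t+1) ∈ Finset.Icc 1 n := blk_mem (by omega) (by omega)
    have ht' : (1:ℝ) ≤ t := by exact_mod_cast ht
    rw [Ev_step' (n := n) (m := m) hβ ht (by omega) _
      (fun p => V β n m t (blk m (t+1)) p + (1+β) * y m t p (blk m (t+1)) (blk m (t+1)))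
      (fun p a => W β m t p a + y m t p a (blk m (t+1)) + 1 + (1+β) * bI m (t+1) a)]
    · have h1 : Ev β t (fun p => V β n m t (blk m (t+1)) p + (1+β) * y m t p (blk m (t+1)) (blk m (t+1)) +
          (∑ a ∈ Finset.Icc 1 n, W β m t p a *
            (W β m t p a + y m t p a (blk m (t+1)) + 1 + (1+β) * bI m (t+1) a)) / S β t)
          ≤ Ev β t (fun p => V β n m t (blk m (t+1)) p + (1 / S β t * Q β n m t p +
              ((1+β) * m + m + (1+β)*((2+β)*m)/β))) := by
        apply Ev_mono hβ
        intro p hp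
        have e1 : ∑ a ∈ Finset.Icc 1 n, W β m t p a *
            (W β m t p a + y m t p a (blk m (t+1)) + 1 + (1+β) * bI m (t+1) a)
            = Q β n m t p + V β n m t (blk m (t+1)) p + (1+β) * W β m t p (blk m (t+1)) := by
          rw [← sum_bI hc (fun a => W β m t p a), Q, V, Finset.mul_sum, ← Finset.sum_add_distrib,
            ← Finset.sum_add_distrib]
          exact Finset.sum_congr rfl fun a _ => by ring
        rw [e1]
        have a2 := W_cur_le hβ hm ht hp
        have a3 := y_cur_le hm ht (p := p) (blk m (t+1))
        have a3' := mod_le (t := t) hm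
        have a4 : V β n m t (blk m (t+1)) p ≤ m * S β t := by
          rw [← sumW_one β ht (show t ≤ n * m by omega) hp, Finset.mul_sum]
          unfold V
          refine Finset.sum_le_sum fun a _ => ?_
          rw [mul_comm]
          exact mul_le_mul_of_nonneg_right ((y_cur_le hm ht a).trans a3') (W_nonneg hβ _ _ _ _)
        have a5 : V β n m t (blk m (t+1)) p / S β t ≤ m := by
          rwa [div_le_iff₀ hS]
        have a6 : (1+β) * W β m t p (blk m (t+1)) / S β t ≤ (1+β)*((2+β)*m)/β := by
          refine div_le_div₀ (by positivity) (mul_le_mul_of_nonneg_left a2 (by positivity)) hβ ?_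
          have := S_ge (β := β) ht
          nlinarith
        have a7 : (1+β) * y m t p (blk m (t+1)) (blk m (t+1)) ≤ (1+β) * m :=
          mul_le_mul_of_nonneg_left (a3.trans a3') (by positivity)
        rw [add_div, add_div]
        have e2 : 1 / S β t * Q β n m t p = Q β n m t p / S β t := by ring
        rw [e2]
        linarith
      refine h1.trans ?_
      rw [Ev_add, Ev_lin hβ ht]
      have h3 : 1 / S β t * Ev β t (Q β n m t) ≤ Kq / β := by
        have h4 := hq n t ht (by omega)
        have h5 := S_ge (β := β) ht
        rw [one_div, inv_mul_le_iff₀ hS, mul_div_assoc', le_div_iff₀ hβ]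
        nlinarith
      have h3' : 1 / S β t * Ev β t (fun p => Q β n m t p) ≤ Kq / β := h3
      have ih' : Ev β t (fun p => V β n m t (blk m (t+1)) p) ≤ B * ((t % m : ℕ):ℝ) := ih
      push_cast
      rw [mul_add, mul_one]
      linarith
    · intro p hp i hi
      rw [Finset.mem_Icc] at hi
      have hi' : blk m i ∈ Finset.Icc 1 n := blk_mem hi.1 (by omega)
      rw [← sum_bI hi' (fun a => W β m t p a + y m t p a (blk m (t+1)) + 1 + (1+β) * bI m (t+1) a),
        ← sum_bI hc (fun a => y m t p a (blk m (t+1))), V, V, Finset.mul_sum,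
        ← Finset.sum_add_distrib, ← Finset.sum_add_distrib]
      refine Finset.sum_congr rfl fun a _ => ?_
      rw [W_upd β m ht, y_upd m ht]
      have hz : bI m (t+1) (blk m (t+1)) = 1 := by simp [bI]
      rw [hz]
      linear_combination bI_sq m i a

lemma y_nat (m t : ℕ) (p : ℕ → ℕ) (a b : ℕ) :
    y m t p a b = (((Finset.Icc 2 t).filter (fun j => blk m (p j) = a ∧ blk m j = b)).card : ℝ) := by
  rw [Finset.card_filter]
  push_cast
  unfold y bI
  refine Finset.sum_congr rfl fun j _ => ?_
  by_cases h1 : blk m (p j) = a <;> by_cases h2 : blk m j = b <;> simp [h1, h2]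

lemma yy_nonneg (m t : ℕ) (p : ℕ → ℕ) (a b : ℕ) : 0 ≤ y m t p a b * (y m t p a b - 1) := by
  rw [y_nat]
  generalize ((Finset.Icc 2 t).filter (fun j => blk m (p j) = a ∧ blk m j = b)).card = k
  rcases Nat.eq_zero_or_pos k with h | h
  · simp [h]
  · have : (1:ℝ) ≤ k := by exact_mod_cast h
    nlinarith

lemma D_nonneg (n m t : ℕ) (p : ℕ → ℕ) : 0 ≤ D n m t p :=
  Finset.sum_nonneg fun _ _ => Finset.sum_nonneg fun _ _ => yy_nonneg _ _ _ _ _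

lemma D_bound {β : ℝ} (hβ : 0 < β) {m : ℕ} (hm : 1 ≤ m) :
    ∃ K : ℝ, 0 < K ∧ ∀ n t, 1 ≤ t → t ≤ n * m →
      Ev β t (D n m t) ≤ K * (t:ℝ) ^ (2 / (2 + β)) := by
  obtain ⟨Kv, hKv, hv⟩ := V_bound hβ hm
  obtain ⟨K, hK, hseq⟩ := seq_bound hβ (2 * Kv / β) 0 (by positivity) le_rfl
  refine ⟨K, hK, fun n t h1 h2 => ?_⟩
  refine hseq (n*m) (fun t => Ev β t (D n m t)) ?_ ?_ t h1 h2
  · apply le_of_eq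
    rw [Ev_one β _ 0]
    intro p
    simp [D, y]
  · clear h1 h2 t
    intro t ht htn
    have hS := S_pos hβ ht
    have hc : blk m (t+1) ∈ Finset.Icc 1 n := blk_mem (by omega) (by omega)
    rw [Ev_step' (n := n) (m := m) hβ ht htn.le _ (fun p => D n m t p)
      (fun p a => 2 * y m t p a (blk m (t+1)))]
    · have h1 : Ev β t (fun p => D n m t p +
          (∑ a ∈ Finset.Icc 1 n, W β m t p a * (2 * y m t p a (blk m (t+1)))) / S β t)
          = Ev β t (D n m t) + 2 / S β t * Ev β t (V β n m t (blk m (t+1))) := by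
        rw [← Ev_smul, ← Ev_add]
        apply Ev_congr
        intro p _
        unfold V
        rw [Finset.mul_sum, Finset.sum_div]
        congr 1
        exact Finset.sum_congr rfl fun a _ => by ring
      rw [h1]
      have h2 := hv n t ht htn.le
      have h3 : 2 / S β t * Ev β t (V β n m t (blk m (t+1))) ≤ 2 * Kv / β / t := by
        refine le_trans ?_ (div_S_le hβ ht (by positivity))
        rw [div_mul_eq_mul_div]
        exact div_le_div_of_nonneg_right (mul_le_mul_of_nonneg_left h2 (by norm_num)) hS.le
      have h4 : 0 ≤ Ev β t (D n m t) := by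
        have : Ev β t (fun _ => 0) ≤ Ev β t (D n m t) := Ev_mono hβ fun p _ => D_nonneg _ _ _ _
        rwa [Ev_const hβ ht] at this
      have h5 : 0 ≤ Ev β t (D n m t) * (2 / S β t) := by positivity
      linarith
    · intro p hp i hi
      rw [Finset.mem_Icc] at hi
      have hi' : blk m i ∈ Finset.Icc 1 n := blk_mem hi.1 (by omega)
      rw [← sum_bI hi' (fun a => 2 * y m t p a (blk m (t+1))), D, D, ← Finset.sum_add_distrib]
      refine Finset.sum_congr rfl fun a _ => ?_
      rw [← sum_bI hc (fun b => 2 * y m t p a b), Finset.mul_sum, ← Finset.sum_add_distrib]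
      refine Finset.sum_congr rfl fun b _ => ?_
      rw [y_upd m ht]
      linear_combination bI_sq m i a * bI m (t+1) b * bI m (t+1) b + bI m i a * bI_sq m (t+1) b

/-! final reduction -/

lemma pair_sum (z : ℕ → ℝ) (a n : ℕ) (h : a ≤ n) :
    2 * ∑ b ∈ Finset.Ioc a n, ∑ c ∈ Finset.Ioc b n, z b * z c
      = (∑ b ∈ Finset.Ioc a n, z b)^2 - ∑ b ∈ Finset.Ioc a n, z b ^ 2 := by
  induction n, h using Nat.le_induction with
  | base => simp
  | succ n hn ih =>
    rw [Finset.sum_Ioc_succ_top hn, Finset.sum_Ioc_succ_top hn, Finset.sum_Ioc_succ_top hn]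
    have h1 : ∑ b ∈ Finset.Ioc a n, ∑ c ∈ Finset.Ioc b (n+1), z b * z c
        = ∑ b ∈ Finset.Ioc a n, ∑ c ∈ Finset.Ioc b n, z b * z c + (∑ b ∈ Finset.Ioc a n, z b) * z (n+1) := by
      rw [Finset.sum_mul, ← Finset.sum_add_distrib]
      refine Finset.sum_congr rfl fun b hb => ?_
      rw [Finset.mem_Ioc] at hb
      rw [Finset.sum_Ioc_succ_top (by omega)]
    rw [h1]
    simp only [Finset.Ioc_self, Finset.sum_empty]
    linear_combination ih

lemma mult_eq {n m : ℕ} (f : ParentSeq (n*m)) {a b : ℕ} (hab : a < b) :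
    (mult n m f a b : ℝ) = y m (n*m) (pval f) a b := by
  rw [y_nat]
  unfold mult
  congr 2
  apply Finset.filter_congr
  intro j hj
  rw [Finset.mem_Icc] at hj
  have h1 := valid_pval f j hj.1 hj.2
  have h2 : blk m (pval f j) ≤ blk m j := blk_mono h1.2.le
  constructor
  · rintro (⟨h3, h4⟩ | ⟨h3, h4⟩)
    · omega
    · exact ⟨h4, h3⟩
  · rintro ⟨h3, h4⟩
    exact Or.inr ⟨h4, h3⟩

noncomputable def T (n m : ℕ) (p : ℕ → ℕ) : ℝ :=
  ∑ a ∈ Finset.Icc 1 n, ∑ b ∈ Finset.Ioc a n, ∑ c ∈ Finset.Ioc b n,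
    y m (n*m) p a b * y m (n*m) p a c

lemma T_eq (β : ℝ) (n m : ℕ) :
    moriE (n * m) β (fun f => ∑ a ∈ Finset.Icc 1 n, ∑ b ∈ Finset.Ioc a n, ∑ c ∈ Finset.Ioc b n,
            (mult n m f a b : ℝ) * (mult n m f a c : ℝ)) = Ev β (n*m) (T n m) := by
  unfold Ev
  congr 1
  funext f
  unfold T
  refine Finset.sum_congr rfl fun a _ => Finset.sum_congr rfl fun b hb => Finset.sum_congr rfl fun c hc => ?_
  rw [Finset.mem_Ioc] at hb hc
  rw [mult_eq f hb.1, mult_eq f (hb.1.trans hc.1)]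

noncomputable def J (m t : ℕ) (p : ℕ → ℕ) (a : ℕ) : ℝ := ∑ j ∈ Finset.Icc 2 t, bI m (p j) a

lemma W_J (β : ℝ) {n m a : ℕ} (hm : 1 ≤ m) (hn : 1 ≤ n) (ha : a ∈ Finset.Icc 1 n) (p : ℕ → ℕ) :
    W β m (n*m) p a = J m (n*m) p a + m * (1+β) - (if a = 1 then 1 else 0) := by
  have h := count_blk hm ha
  rw [sum_Icc_two (Nat.mul_pos hn hm)] at h
  unfold W J
  rw [Finset.sum_add_distrib, ← Finset.mul_sum, ← h]
  split_ifs <;> ring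

lemma J_sum {n m : ℕ} (hm : 1 ≤ m) (hn : 1 ≤ n) {p : ℕ → ℕ} (hp : Valid (n*m) p) :
    ∑ a ∈ Finset.Icc 1 n, J m (n*m) p a = (n:ℝ) * m - 1 := by
  unfold J
  rw [Finset.sum_comm]
  have h1 : ∀ j ∈ Finset.Icc 2 (n*m), ∑ a ∈ Finset.Icc 1 n, bI m (p j) a = 1 := by
    intro j hj
    rw [Finset.mem_Icc] at hj
    have := hp j hj.1 hj.2
    have h := sum_bI (n := n) (m := m) (j := p j) (blk_mem (by omega) (by omega)) (fun _ => 1)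
    simpa using h
  rw [Finset.sum_congr rfl h1]
  have : 1 ≤ n * m := Nat.mul_pos hn hm
  simp only [Finset.sum_const, Nat.card_Icc, nsmul_eq_mul, mul_one]
  rw [Nat.cast_sub (by omega)]
  push_cast; ring

lemma I_sum {n m a : ℕ} (ha : a ∈ Finset.Icc 1 n) {p : ℕ → ℕ} (hp : Valid (n*m) p) :
    ∑ b ∈ Finset.Ioc a n, y m (n*m) p a b = J m (n*m) p a - y m (n*m) p a a := by
  rw [Finset.mem_Icc] at ha
  have h0 : Finset.Icc a n = insert a (Finset.Ioc a n) := by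
    ext x; simp only [Finset.mem_insert, Finset.mem_Icc, Finset.mem_Ioc]; omega
  have h1 : ∑ b ∈ Finset.Icc a n, y m (n*m) p a b = J m (n*m) p a := by
    unfold y J
    rw [Finset.sum_comm]
    refine Finset.sum_congr rfl fun j hj => ?_
    rw [Finset.mem_Icc] at hj
    have h2 := hp j hj.1 hj.2
    have h3 : blk m (p j) ≤ blk m j := blk_mono h2.2.le
    have h4 : blk m j ∈ Finset.Icc 1 n := blk_mem (by omega) hj.2
    rw [Finset.mem_Icc] at h4
    rw [← Finset.mul_sum]
    by_cases h5 : blk m (p j) = a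
    · unfold bI
      rw [Finset.sum_ite_eq, if_pos h5, if_pos (by rw [Finset.mem_Icc]; omega), mul_one]
    · have : bI m (p j) a = 0 := by simp [bI, h5]
      rw [this, zero_mul]
  rw [h0, Finset.sum_insert (by simp)] at h1
  linarith

lemma T_approx {β : ℝ} (hβ : 0 < β) {n m : ℕ} (hm : 1 ≤ m) (hn : 1 ≤ n) {p : ℕ → ℕ} (hp : Valid (n*m) p) :
    |2 * T n m p - (Q β n m (n*m) p - (1 + 2 * (m*(1+β))) * S β (n*m) + n * (m*(1+β))^2 - ((n:ℝ)*m - 1))|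
      ≤ (3 + 4/β) * R β n m (n*m) p + D n m (n*m) p := by
  have hN : 1 ≤ n * m := Nat.mul_pos hn hm
  have hm' : (1:ℝ) ≤ m := by exact_mod_cast hm
  set c : ℝ := m * (1+β) with hc
  have hc1 : 1 + β ≤ c := by rw [hc]; nlinarith
  have e1 : Q β n m (n*m) p - (1 + 2 * c) * S β (n*m) + n * c^2 - ((n:ℝ)*m - 1)
      = ∑ a ∈ Finset.Icc 1 n, ((W β m (n*m) p a - c)^2 - J m (n*m) p a) := by
    rw [Finset.sum_sub_distrib, J_sum hm hn hp, ← sumW_one β hN le_rfl hp, Q, Finset.mul_sum]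
    have : (n:ℝ) * c^2 = ∑ a ∈ Finset.Icc 1 n, c^2 := by simp
    rw [this, ← Finset.sum_sub_distrib, ← Finset.sum_add_distrib]
    congr 1
    exact Finset.sum_congr rfl fun a _ => by ring
  rw [e1, T, R, D, Finset.mul_sum, Finset.mul_sum, ← Finset.sum_sub_distrib, ← Finset.sum_add_distrib]
  refine (Finset.abs_sum_le_sum_abs _ _).trans (Finset.sum_le_sum fun a ha => ?_)
  have ha' := Finset.mem_Icc.mp ha
  rw [pair_sum _ a n ha'.2, I_sum ha hp]
  have hD1 : ∑ b ∈ Finset.Ioc a n, y m (n*m) p a b ^ 2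
      = ∑ b ∈ Finset.Ioc a n, y m (n*m) p a b * (y m (n*m) p a b - 1)
        + (J m (n*m) p a - y m (n*m) p a a) := by
    rw [← I_sum ha hp, ← Finset.sum_add_distrib]
    exact Finset.sum_congr rfl fun b _ => by ring
  have hD2 : ∑ b ∈ Finset.Ioc a n, y m (n*m) p a b * (y m (n*m) p a b - 1)
      ≤ ∑ b ∈ Finset.Icc 1 n, y m (n*m) p a b * (y m (n*m) p a b - 1) := by
    refine Finset.sum_le_sum_of_subset_of_nonneg ?_ fun _ _ _ => yy_nonneg _ _ _ _ _
    intro x hx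
    rw [Finset.mem_Ioc] at hx
    rw [Finset.mem_Icc]; omega
  have hD3 : 0 ≤ ∑ b ∈ Finset.Ioc a n, y m (n*m) p a b * (y m (n*m) p a b - 1) :=
    Finset.sum_nonneg fun _ _ => yy_nonneg _ _ _ _ _
  rw [hD1]
  have hW := W_J β hm hn ha p
  have hL : L m (n*m) p a = (if a = 1 then 1 else 0) + y m (n*m) p a a := rfl
  have hy := y_nonneg m (n*m) p a a
  have hyJ : y m (n*m) p a a ≤ J m (n*m) p a := by
    have h1 := I_sum ha hp
    have h2 : 0 ≤ ∑ b ∈ Finset.Ioc a n, y m (n*m) p a b := Finset.sum_nonneg fun _ _ => y_nonneg _ _ _ _ _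
    linarith
  rw [← hc] at hW
  have hd0 : (0:ℝ) ≤ if a = 1 then 1 else 0 := by split_ifs <;> norm_num
  have hd1 : (if a = 1 then (1:ℝ) else 0) ≤ 1 := by split_ifs <;> norm_num
  rw [hL]
  set δ : ℝ := if a = 1 then 1 else 0
  set w := W β m (n*m) p a
  set u := J m (n*m) p a
  set v := y m (n*m) p a a
  set d1 := ∑ b ∈ Finset.Ioc a n, y m (n*m) p a b * (y m (n*m) p a b - 1)
  set d2 := ∑ b ∈ Finset.Icc 1 n, y m (n*m) p a b * (y m (n*m) p a b - 1)
  have hwb : β ≤ w := by linarith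
  have hwu : u ≤ w := by linarith
  have hone : 1 ≤ w / β := by rwa [le_div_iff₀ hβ, one_mul]
  have hwc : w - c = u - δ := by linarith
  rw [hwc]
  have e2 : (u - v)^2 - (d1 + (u - v)) - ((u - δ)^2 - u) = (δ - v) * (2 * (u - δ) + (δ - v)) + v - d1 := by ring
  rw [e2]
  have hl0 : 0 ≤ δ + v := by linarith
  have b1 : |δ - v| ≤ δ + v := by rw [abs_le]; constructor <;> linarith
  have b2 : |2 * (u - δ) + (δ - v)| ≤ 3 * (w + w / β) := by rw [abs_le]; constructor <;> linarith
  have b3 : |(δ - v) * (2 * (u - δ) + (δ - v))| ≤ (δ + v) * (3 * (w + w / β)) := by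
    rw [abs_mul]
    exact mul_le_mul b1 b2 (abs_nonneg _) hl0
  have b4 : v ≤ (δ + v) * (w / β) := by nlinarith
  have e3 : (3 + 4 / β) * (w * (δ + v)) = (δ + v) * (3 * (w + w / β)) + (δ + v) * (w / β) := by
    ring
  rw [e3]
  obtain ⟨b5, b6⟩ := abs_le.mp b3
  rw [abs_le]
  constructor <;> linarith

end MA
/-- The total number of pairs of adjacent half-edges in `G^n_{m,β}` whose common vertex has
the smallest index is `(m(2+β)/β + m(m−1)(1+β)/β)·n + O(n^{2/(2+β)})` in expectation. -/
theorem total_adjacent_pairs_smallest_index (β : ℝ) (hβ : 0 < β) (m : ℕ) (hm : 1 ≤ m) :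
    ∃ K : ℝ, 0 < K ∧ ∀ n : ℕ, 1 ≤ n →
      |moriE (n * m) β
          (fun f => ∑ a ∈ Finset.Icc 1 n, ∑ b ∈ Finset.Ioc a n, ∑ c ∈ Finset.Ioc b n,
            (mult n m f a b : ℝ) * (mult n m f a c : ℝ))
        - ((m : ℝ) * (2 + β) / β + (m : ℝ) * ((m : ℝ) - 1) * (1 + β) / β) * (n : ℝ)|
        ≤ K * (n : ℝ) ^ (2 / (2 + β)) := by
  obtain ⟨Kq, hKq, hq⟩ := MA.Q_bound hβ hm
  obtain ⟨Kr, hKr, hr⟩ := MA.R_bound hβ hm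
  obtain ⟨Kd, hKd, hd⟩ := MA.D_bound hβ hm
  have hm' : (1:ℝ) ≤ m := by exact_mod_cast hm
  set c : ℝ := m * (1+β) with hc
  set k0 : ℝ := -2 * MA.kap β m + 2 * (1 + 2 * c) + 1 with hk0
  set K1 : ℝ := (Kq + (3 + 4/β) * Kr + Kd) * (m:ℝ) ^ (2 / (2+β)) + |k0| with hK1
  have hK1p : 0 < K1 := by positivity
  refine ⟨K1, hK1p, fun n hn => ?_⟩
  rw [MA.T_eq]
  have hN : 1 ≤ n * m := Nat.mul_pos hn hm
  have hn' : (1:ℝ) ≤ n := by exact_mod_cast hn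
  have h1 := MA.Ev_abs hβ (t := n*m) (F := fun p => 2 * MA.T n m p)
    (G := fun p => 1 * MA.Q β n m (n*m) p + (- (1 + 2 * c) * MA.S β (n*m) + n * c^2 - ((n:ℝ)*m - 1)))
    (H := fun p => (3 + 4/β) * MA.R β n m (n*m) p + MA.D n m (n*m) p)
    (fun p hp => by
      have := MA.T_approx hβ hm hn hp
      rw [← hc] at this
      convert this using 2
      ring)
  rw [MA.Ev_lin hβ hN, MA.Ev_smul, MA.Ev_add, MA.Ev_smul] at h1
  have h2 := hq n (n*m) hN le_rfl
  have hP : MA.P β m (n*m) = 0 := by simp [MA.P]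
  rw [hP, sub_zero] at h2
  have h3 := hr n (n*m) hN le_rfl
  have h4 := hd n (n*m) hN le_rfl
  have hpow : ((n*m : ℕ):ℝ) ^ (2 / (2+β)) = (m:ℝ) ^ (2 / (2+β)) * (n:ℝ) ^ (2 / (2+β)) := by
    push_cast
    rw [Real.mul_rpow (by positivity) (by positivity), mul_comm]
  rw [hpow] at h2 h3 h4
  have hone : 1 ≤ (n:ℝ) ^ (2 / (2+β)) := Real.one_le_rpow hn' (by positivity)
  change |2 * MA.Ev β (n*m) (MA.T n m) - (1 * MA.Ev β (n*m) (MA.Q β n m (n*m)) + _)| ≤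
    (3 + 4/β) * MA.Ev β (n*m) (MA.R β n m (n*m)) + MA.Ev β (n*m) (MA.D n m (n*m)) at h1
  set ET := MA.Ev β (n*m) (MA.T n m)
  set EQ := MA.Ev β (n*m) (MA.Q β n m (n*m))
  set x := (n:ℝ) ^ (2 / (2+β))
  set M := (m:ℝ) ^ (2 / (2+β))
  have hS : MA.S β (n*m) = (2+β) * (n * m) - 2 := by unfold MA.S; push_cast; ring
  have key : 2 * (ET - ((m : ℝ) * (2 + β) / β + (m : ℝ) * ((m : ℝ) - 1) * (1 + β) / β) * (n : ℝ))
      = (2 * ET - (1 * EQ + (- (1 + 2 * c) * MA.S β (n*m) + n * c^2 - ((n:ℝ)*m - 1))))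
        + (EQ - MA.kap β m * MA.S β (n*m)) + k0 := by
    rw [hk0, hS, hc]
    unfold MA.kap
    field_simp
    ring
  have hR : (3 + 4/β) * MA.Ev β (n*m) (MA.R β n m (n*m)) ≤ (3 + 4/β) * (Kr * (M * x)) :=
    mul_le_mul_of_nonneg_left h3 (by positivity)
  have h5 : |k0| ≤ |k0| * x := le_mul_of_one_le_right (abs_nonneg _) hone
  have hfin : 2 * |ET - ((m : ℝ) * (2 + β) / β + (m : ℝ) * ((m : ℝ) - 1) * (1 + β) / β) * (n : ℝ)|
      ≤ K1 * x := by
    have : (2:ℝ) = |2| := by norm_num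
    rw [this, ← abs_mul, ← this, key]
    refine (abs_add_le _ _).trans ?_
    refine (add_le_add_left (abs_add_le _ _) _).trans ?_
    rw [hK1]
    linarith
  have h0 := abs_nonneg (ET - ((m : ℝ) * (2 + β) / β + (m : ℝ) * ((m : ℝ) - 1) * (1 + β) / β) * (n : ℝ))
  linarith
end

section
/- Let β > 0 and let m ≥ 1 be an integer. There exists K > 0 depending only on m and β such that for all integers n ≥ 1 and all 1 ≤ a < b < c ≤ n, E[m(a,b)·m(b,c)] = (m²(1+β)²/(2+β)²) · (a·b^{2+β}·c^{1+β})^{−1/(2+β)} · (1+θ) for some real θ with |θ| ≤ K/a. -/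
open Finset

/-! ### Recursive expectation -/

/-- degree for plain functions -/
def dg (g : ℕ → ℕ) (t i : ℕ) : ℕ :=
  ((Finset.Icc 2 t).filter (fun j => g j = i)).card + (if 2 ≤ i then 1 else 0)

/-- normalising constant -/
noncomputable def DD (β : ℝ) (t : ℕ) : ℝ := (2 + β) * ((t : ℝ) - 1) - 2

/-- expectation by recursion (level `N+1` trees) -/
noncomputable def EE (β : ℝ) : ℕ → ((ℕ → ℕ) → ℝ) → ℝ
  | 0, X => X (fun _ => 0)
  | 1, X => X (fun _ => 0)
  | (N + 2), X => EE β (N + 1) (fun g => ∑ i ∈ Finset.Icc 1 (N + 1),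
      ((dg g (N + 1) i : ℝ) + β) / DD β (N + 2) * X (Function.update g (N + 2) i))

/-- validity -/
def VV (N : ℕ) (g : ℕ → ℕ) : Prop := ∀ j, 2 ≤ j → j ≤ N → 1 ≤ g j ∧ g j < j

lemma EE_succ (β : ℝ) (N : ℕ) (hN : 1 ≤ N) (X : (ℕ → ℕ) → ℝ) :
    EE β (N + 1) X = EE β N (fun g => ∑ i ∈ Finset.Icc 1 N,
      ((dg g N i : ℝ) + β) / DD β (N + 1) * X (Function.update g (N + 1) i)) := by
  obtain ⟨k, rfl⟩ : ∃ k, N = k + 1 := ⟨N - 1, by omega⟩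
  rfl

lemma VV_update {N : ℕ} {g : ℕ → ℕ} (hg : VV N g) {i : ℕ} (hi : i ∈ Finset.Icc 1 N) :
    VV (N + 1) (Function.update g (N + 1) i) := by
  intro j h2 hj
  rw [Finset.mem_Icc] at hi
  by_cases h : j = N + 1
  · subst h; simp; omega
  · rw [Function.update_of_ne h]; exact hg j h2 (by omega)

lemma EE_congr (β : ℝ) (N : ℕ) (hN : 1 ≤ N) (X Y : (ℕ → ℕ) → ℝ)
    (h : ∀ g, VV N g → X g = Y g) : EE β N X = EE β N Y := by
  induction N, hN using Nat.le_induction generalizing X Y with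
  | base => exact h _ (fun j h1 h2 => by omega)
  | succ N hN ih =>
    rw [EE_succ β N hN, EE_succ β N hN]
    apply ih
    intro g hg
    refine Finset.sum_congr rfl fun i hi => ?_
    rw [h _ (VV_update hg hi)]

lemma EE_smul (β : ℝ) (N : ℕ) (hN : 1 ≤ N) (c : ℝ) (X : (ℕ → ℕ) → ℝ) :
    EE β N (fun g => c * X g) = c * EE β N X := by
  induction N, hN using Nat.le_induction generalizing X with
  | base => rfl
  | succ N hN ih =>
    rw [EE_succ β N hN, EE_succ β N hN, ← ih]
    congr 1; funext g
    rw [Finset.mul_sum]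
    refine Finset.sum_congr rfl fun i hi => ?_
    ring

lemma EE_sum (β : ℝ) (N : ℕ) (hN : 1 ≤ N) {ι : Type} (S : Finset ι) (X : ι → (ℕ → ℕ) → ℝ) :
    EE β N (fun g => ∑ k ∈ S, X k g) = ∑ k ∈ S, EE β N (X k) := by
  induction N, hN using Nat.le_induction generalizing X with
  | base => rfl
  | succ N hN ih =>
    rw [EE_succ β N hN]
    simp_rw [EE_succ β N hN]
    rw [← ih]
    congr 1; funext g
    simp_rw [Finset.mul_sum]
    rw [Finset.sum_comm]

lemma EE_const (β : ℝ) (c : ℝ) : EE β 1 (fun _ => c) = c := rfl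

lemma dg_succ (g : ℕ → ℕ) (N i : ℕ) (hN : 1 ≤ N) :
    dg g (N + 1) i = dg g N i + if g (N + 1) = i then 1 else 0 := by
  unfold dg
  rw [← Finset.insert_Icc_right_eq_Icc_add_one (by omega : 2 ≤ N + 1), Finset.filter_insert]
  split_ifs <;> simp <;> omega

lemma dg_congr {g h : ℕ → ℕ} {N : ℕ} (hh : ∀ j ≤ N, g j = h j) (i : ℕ) :
    dg g N i = dg h N i := by
  unfold dg
  congr 2
  refine Finset.filter_congr fun j hj => ?_
  rw [hh j (Finset.mem_Icc.mp hj).2]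

lemma dg_update (g : ℕ → ℕ) (N i k : ℕ) :
    dg (Function.update g (N + 1) k) N i = dg g N i :=
  dg_congr (fun j hj => Function.update_of_ne (by omega) _ _) i

lemma dg_sum (g : ℕ → ℕ) (N : ℕ) (hN : 1 ≤ N) (hg : VV N g) :
    ∑ i ∈ Finset.Icc 1 N, dg g N i = 2 * (N - 1) := by
  unfold dg
  rw [Finset.sum_add_distrib]
  have h1 : ∑ i ∈ Finset.Icc 1 N, ((Finset.Icc 2 N).filter (fun j => g j = i)).card
      = (Finset.Icc 2 N).card := by
    rw [Finset.card_eq_sum_card_fiberwise (f := g) (t := Finset.Icc 1 N)]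
    intro j hj
    simp only [Finset.coe_Icc, Set.mem_Icc] at hj ⊢
    have := hg j hj.1 hj.2
    omega
  have h2 : ∑ i ∈ Finset.Icc 1 N, (if 2 ≤ i then 1 else 0) = (Finset.Icc 2 N).card := by
    rw [← Finset.sum_filter, Finset.sum_const, smul_eq_mul, mul_one]
    congr 1
    ext j; simp; omega
  rw [h1, h2, Nat.card_Icc]; omega

lemma DD_pos {β : ℝ} (hβ : 0 < β) {t : ℕ} (ht : 2 ≤ t) : β * t / 2 ≤ DD β t := by
  unfold DD
  have : (2 : ℝ) ≤ t := by exact_mod_cast ht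
  nlinarith

lemma DD_pos' {β : ℝ} (hβ : 0 < β) {t : ℕ} (ht : 2 ≤ t) : 0 < DD β t := by
  have := DD_pos hβ ht
  have : (2 : ℝ) ≤ t := by exact_mod_cast ht
  have : 0 < β * t / 2 := by positivity
  linarith

lemma wsum {β : ℝ} (hβ : 0 < β) {N : ℕ} (hN : 1 ≤ N) {g : ℕ → ℕ} (hg : VV N g) :
    ∑ i ∈ Finset.Icc 1 N, ((dg g N i : ℝ) + β) / DD β (N + 1) = 1 := by
  rw [← Finset.sum_div, div_eq_one_iff_eq (DD_pos' hβ (by omega)).ne', Finset.sum_add_distrib]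
  have h := dg_sum g N hN hg
  have h' : ∑ i ∈ Finset.Icc 1 N, (dg g N i : ℝ) = 2 * ((N : ℝ) - 1) := by
    have : ((∑ i ∈ Finset.Icc 1 N, dg g N i : ℕ) : ℝ) = ((2 * (N - 1) : ℕ) : ℝ) := by rw [h]
    push_cast [Nat.cast_sub hN] at this
    exact this
  rw [h', Finset.sum_const, Nat.card_Icc]
  unfold DD
  simp
  ring

/-- dependence on coordinates `≤ M` only -/
def Dep (M : ℕ) (X : (ℕ → ℕ) → ℝ) : Prop := ∀ g h : ℕ → ℕ, (∀ j ≤ M, g j = h j) → X g = X h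

lemma Dep.upd {M : ℕ} {X : (ℕ → ℕ) → ℝ} (hX : Dep M X) (g : ℕ → ℕ) {N : ℕ} (h : M ≤ N) (k : ℕ) :
    X (Function.update g (N + 1) k) = X g :=
  hX _ _ (fun j hj => Function.update_of_ne (by omega) _ _)

lemma EE_stab {β : ℝ} (hβ : 0 < β) {M N : ℕ} (hM : 1 ≤ M) (hMN : M ≤ N) (X : (ℕ → ℕ) → ℝ)
    (hX : Dep M X) : EE β N X = EE β M X := by
  induction N, hMN using Nat.le_induction with
  | base => rfl
  | succ N hN ih =>
    rw [EE_succ β N (by omega), ← ih]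
    refine EE_congr β N (by omega) _ _ fun g hg => ?_
    simp_rw [hX.upd g hN]
    rw [← Finset.sum_mul, wsum hβ (by omega) hg, one_mul]

lemma EE_one {β : ℝ} (hβ : 0 < β) {N : ℕ} (hN : 1 ≤ N) (c : ℝ) : EE β N (fun _ => c) = c := by
  rw [EE_stab hβ (le_refl 1) hN _ (fun _ _ _ => rfl)]; rfl

/-- hitting step -/
lemma EE_hit {β : ℝ} {N : ℕ} (hN : 1 ≤ N) (Y : (ℕ → ℕ) → ℝ)
    (hY : ∀ g k, k ≠ 0 → Y (Function.update g (N + 1) k) = Y g) {j : ℕ} (hj : 1 ≤ j) (hjN : j ≤ N) :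
    EE β (N + 1) (fun g => Y g * (if g (N + 1) = j then 1 else 0)) =
      EE β N (fun g => Y g * ((dg g N j : ℝ) + β)) / DD β (N + 1) := by
  rw [EE_succ β N hN, div_eq_inv_mul, ← EE_smul β N hN]
  congr 1; funext g
  rw [Finset.sum_eq_single j]
  · rw [hY g j (by omega)]; simp; ring
  · intro b _ hb; simp [hb]
  · intro h; simp at h; omega

/-- one step of degree growth -/
lemma EE_grow {β : ℝ} (hβ : 0 < β) {N : ℕ} (hN : 1 ≤ N) (Y : (ℕ → ℕ) → ℝ)
    (hY : Dep N Y) {j : ℕ} (hj : 1 ≤ j) (hjN : j ≤ N) :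
    EE β (N + 1) (fun g => Y g * ((dg g (N + 1) j : ℝ) + β)) =
      (1 + 1 / DD β (N + 1)) * EE β N (fun g => Y g * ((dg g N j : ℝ) + β)) := by
  rw [EE_succ β N hN, ← EE_smul β N hN]
  refine EE_congr β N hN _ _ fun g hg => ?_
  simp_rw [hY.upd g (le_refl N), dg_succ _ N _ hN, dg_update]
  have e : ∀ i ∈ Finset.Icc 1 N, ((dg g N i : ℝ) + β) / DD β (N + 1) *
      (Y g * (((dg g N j + if Function.update g (N + 1) i (N + 1) = j then 1 else 0 : ℕ) : ℝ) + β))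
      = ((dg g N i : ℝ) + β) / DD β (N + 1) * (Y g * ((dg g N j : ℝ) + β)) +
        (if i = j then ((dg g N i : ℝ) + β) / DD β (N + 1) * Y g else 0) := by
    intro i _
    rw [Function.update_self]
    split_ifs <;> push_cast <;> ring
  rw [Finset.sum_congr rfl e, Finset.sum_add_distrib, ← Finset.sum_mul, wsum hβ hN hg,
    Finset.sum_ite_eq', if_pos (Finset.mem_Icc.mpr ⟨hj, hjN⟩)]
  ring

/-- one step of degree growth, two vertices -/
lemma EE_grow2 {β : ℝ} (hβ : 0 < β) {N : ℕ} (hN : 1 ≤ N) {i j : ℕ} (hi : 1 ≤ i) (hiN : i ≤ N)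
    (hj : 1 ≤ j) (hjN : j ≤ N) (hij : i ≠ j) :
    EE β (N + 1) (fun g => ((dg g (N + 1) i : ℝ) + β) * ((dg g (N + 1) j : ℝ) + β)) =
      (1 + 2 / DD β (N + 1)) * EE β N (fun g => ((dg g N i : ℝ) + β) * ((dg g N j : ℝ) + β)) := by
  rw [EE_succ β N hN, ← EE_smul β N hN]
  refine EE_congr β N hN _ _ fun g hg => ?_
  simp_rw [dg_succ _ N _ hN, dg_update]
  have e : ∀ k ∈ Finset.Icc 1 N, ((dg g N k : ℝ) + β) / DD β (N + 1) *
      ((((dg g N i + if Function.update g (N + 1) k (N + 1) = i then 1 else 0 : ℕ) : ℝ) + β) *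
       (((dg g N j + if Function.update g (N + 1) k (N + 1) = j then 1 else 0 : ℕ) : ℝ) + β))
      = ((dg g N k : ℝ) + β) / DD β (N + 1) * (((dg g N i : ℝ) + β) * ((dg g N j : ℝ) + β)) +
        (if k = i then ((dg g N k : ℝ) + β) / DD β (N + 1) * ((dg g N j : ℝ) + β) else 0) +
        (if k = j then ((dg g N k : ℝ) + β) / DD β (N + 1) * ((dg g N i : ℝ) + β) else 0) := by
    intro k _
    rw [Function.update_self]
    by_cases h1 : k = i
    · have h2 : ¬ k = j := fun h => hij (h1.symm.trans h)
      simp only [h1, h2, if_true]; rw [if_neg hij]; push_cast; simp [hij]; ring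
    · by_cases h2 : k = j
      · simp only [h2, if_true]; rw [if_neg hij.symm]; push_cast; simp [hij.symm]; ring
      · simp [h1, h2]
  rw [Finset.sum_congr rfl e, Finset.sum_add_distrib, Finset.sum_add_distrib, ← Finset.sum_mul,
    wsum hβ hN hg, Finset.sum_ite_eq', if_pos (Finset.mem_Icc.mpr ⟨hi, hiN⟩),
    Finset.sum_ite_eq', if_pos (Finset.mem_Icc.mpr ⟨hj, hjN⟩)]
  ring

lemma dg_self {N : ℕ} {g : ℕ → ℕ} (hg : VV N g) (j : ℕ) (hj : j = N) :
    dg g N j = if 2 ≤ j then 1 else 0 := by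
  unfold dg
  rw [Finset.filter_false_of_mem, Finset.card_empty, zero_add]
  intro k hk
  rw [Finset.mem_Icc] at hk
  have := hg k hk.1 hk.2
  omega

/-! ### Link with `moriE` -/

lemma pval_valid {N : ℕ} (f : ParentSeq N) : VV N (pval f) := by
  intro j h2 hj
  unfold pval
  rw [dif_pos ⟨h2, hj⟩]
  have := (f ⟨j, Set.mem_Icc.mpr ⟨h2, hj⟩⟩).2
  simp only [Set.mem_Icc] at this
  omega

lemma deg_eq {N : ℕ} (f : ParentSeq N) (t i : ℕ) : deg f t i = dg (pval f) t i := rfl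

/-- extension of a parent sequence -/
def pext {N : ℕ} (f : ParentSeq N) (i : Set.Icc 1 N) : ParentSeq (N + 1) := fun t =>
  if h : (t : ℕ) ≤ N then f ⟨t, Set.mem_Icc.mpr ⟨(Set.mem_Icc.mp t.2).1, h⟩⟩
  else ⟨i, by
    have h1 := i.2; have h2 := t.2
    simp only [Set.mem_Icc] at h1 h2 ⊢; omega⟩

lemma pval_pext {N : ℕ} (hN : 1 ≤ N) (f : ParentSeq N) (i : Set.Icc 1 N) :
    pval (pext f i) = Function.update (pval f) (N + 1) i := by
  funext j
  by_cases hj : j = N + 1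
  · subst hj
    rw [Function.update_self]
    unfold pval
    rw [dif_pos ⟨by omega, le_refl _⟩]
    unfold pext
    rw [dif_neg (by simp)]
  · rw [Function.update_of_ne hj]
    unfold pval
    by_cases h : 2 ≤ j ∧ j ≤ N
    · rw [dif_pos ⟨h.1, by omega⟩, dif_pos h]
      unfold pext
      rw [dif_pos h.2]
    · rw [dif_neg (by omega), dif_neg h]

lemma pval_inj {N : ℕ} {f g : ParentSeq N} (h : pval f = pval g) : f = g := by
  funext t
  have ht := congrFun h t
  have h2 := Set.mem_Icc.mp t.2
  unfold pval at ht
  rw [dif_pos h2, dif_pos h2] at ht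
  exact Subtype.ext ht

lemma pext_bij {N : ℕ} (hN : 1 ≤ N) :
    Function.Bijective (fun p : ParentSeq N × Set.Icc 1 N => pext p.1 p.2) := by
  constructor
  · rintro ⟨f, i⟩ ⟨g, k⟩ h
    simp only at h
    have h' := congrArg pval h
    rw [pval_pext hN, pval_pext hN] at h'
    have hi := congrFun h' (N + 1)
    rw [Function.update_self, Function.update_self] at hi
    have hf : pval f = pval g := by
      funext j
      by_cases hj : j = N + 1
      · subst hj; unfold pval; rw [dif_neg (by omega), dif_neg (by omega)]
      · have := congrFun h' j
        rwa [Function.update_of_ne hj, Function.update_of_ne hj] at this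
    exact Prod.ext (pval_inj hf) (Subtype.ext hi)
  · intro g
    refine ⟨(fun t => g ⟨t, Set.mem_Icc.mpr ⟨(Set.mem_Icc.mp t.2).1,
      (Set.mem_Icc.mp t.2).2.trans (Nat.le_succ N)⟩⟩, ⟨g ⟨N + 1, Set.mem_Icc.mpr ⟨by omega, le_refl _⟩⟩,
        (g ⟨N + 1, Set.mem_Icc.mpr ⟨by omega, le_refl _⟩⟩).2⟩), ?_⟩
    funext t
    simp only [pext]
    by_cases h : (t : ℕ) ≤ N
    · rw [dif_pos h]
    · rw [dif_neg h]
      have h2 := Set.mem_Icc.mp t.2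
      obtain ⟨t, ht⟩ := t
      simp only at h h2
      obtain rfl : t = N + 1 := by omega
      rfl

lemma moriP_pext {N : ℕ} (hN : 1 ≤ N) (β : ℝ) (f : ParentSeq N) (i : Set.Icc 1 N) :
    moriP β (pext f i) = moriP β f * (((dg (pval f) N i : ℝ) + β) / DD β (N + 1)) := by
  unfold moriP
  rw [← Finset.insert_Icc_right_eq_Icc_add_one (by omega : 2 ≤ N + 1), Finset.prod_insert (by simp),
    mul_comm]
  congr 1
  · refine Finset.prod_congr rfl fun t ht => ?_
    rw [Finset.mem_Icc] at ht
    rw [deg_eq, deg_eq, pval_pext hN, Function.update_of_ne (by omega)]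
    rw [dg_congr (h := pval f) (fun j hj => Function.update_of_ne (by omega) _ _)]
  · rw [deg_eq, pval_pext hN, Function.update_self, Nat.add_sub_cancel, dg_update]
    rfl

lemma moriE_eq (β : ℝ) (N : ℕ) (hN : 1 ≤ N) (X : (ℕ → ℕ) → ℝ) :
    moriE N β (fun f => X (pval f)) = EE β N X := by
  induction N, hN using Nat.le_induction generalizing X with
  | base =>
    have hp : ∀ f : ParentSeq 1, pval f = fun _ => 0 := by
      intro f; funext j; unfold pval; rw [dif_neg (by omega)]
    have hs : Subsingleton (ParentSeq 1) := ⟨fun f g => pval_inj (by rw [hp, hp])⟩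
    have f0 : ParentSeq 1 := fun t => by
      have := Set.mem_Icc.mp t.2; exfalso; omega
    unfold moriE
    rw [Fintype.sum_subsingleton _ f0]
    simp [moriP, EE, hp]
  | succ N hN ih =>
    rw [EE_succ β N hN, ← ih]
    unfold moriE
    rw [← (pext_bij hN).sum_comp, Fintype.sum_prod_type]
    refine Finset.sum_congr rfl fun f _ => ?_
    rw [Finset.mul_sum, Finset.sum_subtype (Finset.Icc 1 N) (p := fun x => x ∈ Set.Icc 1 N)
      (by intro x; simp) (f := fun i => moriP β f * (((dg (pval f) N i : ℝ) + β) / DD β (N + 1) *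
        X (Function.update (pval f) (N + 1) i)))]
    refine Finset.sum_congr rfl fun i _ => ?_
    simp only
    rw [moriP_pext hN, pval_pext hN]
    ring

/-! ### Approximation calculus -/

/-- `x` and `y` are positive and equal up to a factor `exp (± ε)` -/
def Ap (ε x y : ℝ) : Prop := 0 < x ∧ 0 < y ∧ |Real.log x - Real.log y| ≤ ε

lemma Ap.mul {ε δ x y z w : ℝ} (h : Ap ε x y) (k : Ap δ z w) : Ap (ε + δ) (x * z) (y * w) := by
  obtain ⟨h1, h2, h3⟩ := h
  obtain ⟨k1, k2, k3⟩ := k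
  refine ⟨mul_pos h1 k1, mul_pos h2 k2, ?_⟩
  rw [Real.log_mul h1.ne' k1.ne', Real.log_mul h2.ne' k2.ne']
  rw [abs_le] at *
  constructor <;> linarith [h3.1, h3.2, k3.1, k3.2]

lemma Ap.inv {ε x y : ℝ} (h : Ap ε x y) : Ap ε x⁻¹ y⁻¹ := by
  obtain ⟨h1, h2, h3⟩ := h
  refine ⟨inv_pos.mpr h1, inv_pos.mpr h2, ?_⟩
  rw [Real.log_inv, Real.log_inv]
  rw [abs_le] at *
  constructor <;> linarith [h3.1, h3.2]

lemma Ap.symm {ε x y : ℝ} (h : Ap ε x y) : Ap ε y x :=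
  ⟨h.2.1, h.1, by rw [abs_sub_comm]; exact h.2.2⟩

lemma Ap.trans {ε δ x y z : ℝ} (h : Ap ε x y) (k : Ap δ y z) : Ap (ε + δ) x z := by
  obtain ⟨h1, h2, h3⟩ := h
  obtain ⟨k1, k2, k3⟩ := k
  refine ⟨h1, k2, ?_⟩
  rw [abs_le] at *
  constructor <;> linarith [h3.1, h3.2, k3.1, k3.2]

lemma Ap.mono {ε δ x y : ℝ} (h : Ap ε x y) (k : ε ≤ δ) : Ap δ x y := ⟨h.1, h.2.1, h.2.2.trans k⟩

lemma Ap.rfl' {x : ℝ} (h : 0 < x) : Ap 0 x x := ⟨h, h, by simp⟩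

lemma Ap.rpow {ε x y α : ℝ} (h : Ap ε x y) (h0 : 0 ≤ α) (h1 : α ≤ 1) : Ap ε (x ^ α) (y ^ α) := by
  refine ⟨Real.rpow_pos_of_pos h.1 _, Real.rpow_pos_of_pos h.2.1 _, ?_⟩
  rw [Real.log_rpow h.1, Real.log_rpow h.2.1, ← mul_sub, abs_mul, abs_of_nonneg h0]
  calc _ ≤ 1 * |Real.log x - Real.log y| := by gcongr
    _ ≤ ε := by rw [one_mul]; exact h.2.2

lemma Ap.bounds {ε x y : ℝ} (h : Ap ε x y) : y * Real.exp (-ε) ≤ x ∧ x ≤ y * Real.exp ε := by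
  obtain ⟨h1, h2, h3⟩ := h
  rw [abs_le] at h3
  have hx : x = y * Real.exp (Real.log x - Real.log y) := by
    rw [Real.exp_sub, Real.exp_log h1, Real.exp_log h2]; field_simp
  constructor
  · conv_rhs => rw [hx]
    gcongr; exact h3.1
  · conv_lhs => rw [hx]
    gcongr; exact h3.2

lemma Ap.near {a x y k : ℝ} (ha : 0 < a) (hx : a ≤ x) (hy : a ≤ y) (h : |x - y| ≤ k) :
    Ap (k / a) x y := by
  have key : ∀ x y : ℝ, a ≤ x → a ≤ y → |x - y| ≤ k → Real.log x - Real.log y ≤ k / a := by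
    intro x y hx hy h
    have hx0 : 0 < x := by linarith
    have hy0 : 0 < y := by linarith
    have hk : 0 ≤ k := (abs_nonneg _).trans h
    rw [← Real.log_div hx0.ne' hy0.ne']
    calc Real.log (x / y) ≤ x / y - 1 := Real.log_le_sub_one_of_pos (by positivity)
      _ = (x - y) / y := by field_simp
      _ ≤ k / y := by gcongr; exact (le_abs_self _).trans h
      _ ≤ k / a := by gcongr
  refine ⟨by linarith, by linarith, ?_⟩
  rw [abs_le]
  constructor
  · have := key y x hy hx (by rwa [abs_sub_comm]); linarith
  · exact key x y hx hy h

lemma theta_bound {C A x y : ℝ} (hC : 0 < C) (hA : 1 ≤ A) (hy : 0 < y)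
    (h1 : y * Real.exp (-(C / A)) ≤ x) (h2 : x ≤ y * Real.exp (C / A)) :
    ∃ θ : ℝ, |θ| ≤ (C * Real.exp C) / A ∧ x = y * (1 + θ) := by
  refine ⟨x / y - 1, ?_, by field_simp; ring⟩
  have hA0 : 0 < A := by linarith
  have hle : C / A ≤ C := div_le_self hC.le hA
  have e0 : 0 < C / A := by positivity
  have e1 : 1 - C / A ≤ Real.exp (-(C / A)) := by linarith [Real.add_one_le_exp (-(C / A))]
  have e2 : Real.exp (C / A) - 1 ≤ C / A * Real.exp (C / A) := by
    have h3 : Real.exp (C / A) * Real.exp (-(C / A)) = 1 := by rw [← Real.exp_add]; simp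
    nlinarith [Real.exp_pos (C / A)]
  have e3 : Real.exp (C / A) ≤ Real.exp C := Real.exp_le_exp.mpr hle
  have e4 : 1 ≤ Real.exp C := Real.one_le_exp hC.le
  have f1 : Real.exp (-(C / A)) ≤ x / y := by rw [le_div_iff₀ hy]; linarith
  have f2 : x / y ≤ Real.exp (C / A) := by rw [div_le_iff₀ hy]; linarith
  have g : C * Real.exp C / A = C / A * Real.exp C := by ring
  rw [g, abs_le]
  constructor
  · nlinarith
  · nlinarith

/-! ### Growth -/

lemma log_step {β : ℝ} (hβ : 0 < β) {N : ℕ} (hN : 1 ≤ N) :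
    |Real.log (1 + 1 / DD β (N + 1)) - (1 / (2 + β)) * (Real.log ((N : ℝ) + 1) - Real.log N)| ≤
      ((4 + β) / β + 1) * (1 / (N : ℝ) - 1 / ((N : ℝ) + 1)) := by
  have hN' : (1 : ℝ) ≤ N := by exact_mod_cast hN
  have hN0 : (0 : ℝ) < N := by linarith
  have hD : DD β (N + 1) = (2 + β) * N - 2 := by unfold DD; push_cast; ring
  have hDp : 0 < DD β (N + 1) := DD_pos' hβ (by omega)
  have hDN : β * N ≤ DD β (N + 1) := by rw [hD]; nlinarith
  set D := DD β (N + 1) with hDdef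
  have hq : 0 < 2 + β := by linarith
  have a1 : Real.log (1 + 1 / D) ≤ 1 / D := by
    have := Real.log_le_sub_one_of_pos (show 0 < 1 + 1 / D by positivity); linarith
  have a2 : 1 / (D + 1) ≤ Real.log (1 + 1 / D) := by
    have := Real.one_sub_inv_le_log_of_pos (show 0 < 1 + 1 / D by positivity)
    have e : 1 - (1 + 1 / D)⁻¹ = 1 / (D + 1) := by field_simp; ring
    linarith
  have hl : Real.log ((N : ℝ) + 1) - Real.log N = Real.log (((N : ℝ) + 1) / N) := by
    rw [Real.log_div (by positivity) hN0.ne']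
  have b1 : Real.log (((N : ℝ) + 1) / N) ≤ 1 / N := by
    have := Real.log_le_sub_one_of_pos (show 0 < ((N : ℝ) + 1) / N by positivity)
    have e : ((N : ℝ) + 1) / N - 1 = 1 / N := by field_simp; ring
    linarith
  have b2 : 1 / ((N : ℝ) + 1) ≤ Real.log (((N : ℝ) + 1) / N) := by
    have := Real.one_sub_inv_le_log_of_pos (show 0 < ((N : ℝ) + 1) / N by positivity)
    have e : 1 - (((N : ℝ) + 1) / N)⁻¹ = 1 / ((N : ℝ) + 1) := by field_simp; ring
    linarith
  have hα : 0 < 1 / (2 + β) := by positivity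
  have hα1 : 1 / (2 + β) ≤ 1 := by rw [div_le_one hq]; linarith
  have hdiff : 1 / (N : ℝ) - 1 / ((N : ℝ) + 1) = 1 / (N * ((N : ℝ) + 1)) := by field_simp; ring
  rw [hl, abs_le]
  set l := Real.log (((N : ℝ) + 1) / N)
  have dpos : 0 < 1 / (N : ℝ) - 1 / ((N : ℝ) + 1) := by rw [hdiff]; positivity
  have cpos : 0 < (4 + β) / β := by positivity
  constructor
  · have h1 : 1 / (2 + β) * (1 / ((N : ℝ) + 1)) ≤ 1 / (D + 1) := by
      rw [div_mul_div_comm, one_mul]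
      apply one_div_le_one_div_of_le (by positivity)
      rw [hD]; nlinarith
    have h2 : 1 / (2 + β) * l ≤ 1 / (2 + β) * (1 / N) := by gcongr
    nlinarith
  · have h2 : 1 / (2 + β) * (1 / ((N : ℝ) + 1)) ≤ 1 / (2 + β) * l := by gcongr
    have h1 : 1 / D - 1 / (2 + β) * (1 / ((N : ℝ) + 1)) ≤
        (4 + β) / β * (1 / (N : ℝ) - 1 / ((N : ℝ) + 1)) := by
      have e : 1 / D - 1 / (2 + β) * (1 / ((N : ℝ) + 1)) = (4 + β) / (D * ((2 + β) * (N + 1))) := by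
        field_simp; rw [hD]; ring
      rw [e, hdiff, div_mul_div_comm, mul_one]
      apply div_le_div_of_nonneg_left (by positivity) (by positivity)
      have : β * N * (1 * (N + 1)) ≤ D * ((2 + β) * (N + 1)) := by gcongr; linarith
      nlinarith
    nlinarith

lemma grow_ap {β : ℝ} (hβ : 0 < β) (e : ℕ → ℝ) {j T : ℕ} (hj : 1 ≤ j) (hjT : j ≤ T)
    (h0 : 0 < e j) (he : ∀ u, j ≤ u → e (u + 1) = (1 + 1 / DD β (u + 1)) * e u) :
    Ap (((4 + β) / β + 1) / j) (e T) (e j * ((T : ℝ) / j) ^ (1 / (2 + β))) := by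
  have hj' : (1 : ℝ) ≤ j := by exact_mod_cast hj
  have key : 0 < e T ∧ |Real.log (e T) - (Real.log (e j) +
      (1 / (2 + β)) * (Real.log T - Real.log j))| ≤
      ((4 + β) / β + 1) * (1 / (j : ℝ) - 1 / (T : ℝ)) := by
    induction T, hjT using Nat.le_induction with
    | base => simp [h0]
    | succ T hT ih =>
      have hs := log_step hβ (show 1 ≤ T by omega)
      have hD := DD_pos' hβ (show 2 ≤ T + 1 by omega)
      have hp : 0 < 1 + 1 / DD β (T + 1) := by positivity
      rw [he T hT]
      refine ⟨mul_pos hp ih.1, ?_⟩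
      rw [Real.log_mul hp.ne' ih.1.ne']
      have i2 := ih.2
      push_cast
      rw [abs_le] at *
      constructor <;> nlinarith [hs.1, hs.2, i2.1, i2.2]
  have hT : (1 : ℝ) ≤ T := by exact_mod_cast hj.trans hjT
  have hr : 0 < (T : ℝ) / j := by positivity
  have hr2 := Real.rpow_pos_of_pos hr (1 / (2 + β))
  refine ⟨key.1, mul_pos h0 hr2, ?_⟩
  rw [Real.log_mul h0.ne' hr2.ne', Real.log_rpow hr, Real.log_div (by positivity) (by positivity)]
  refine key.2.trans ?_
  have e1 : ((4 + β) / β + 1) / (j : ℝ) = ((4 + β) / β + 1) * (1 / (j : ℝ)) := by ring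
  rw [e1]
  apply mul_le_mul_of_nonneg_left _ (by positivity)
  have : 0 ≤ 1 / (T : ℝ) := by positivity
  linarith

lemma grow2_ap {β : ℝ} (hβ : 0 < β) (e : ℕ → ℝ) {j T : ℕ} {a : ℝ} (hj : 1 ≤ j) (ha : 0 < a)
    (haj : a ≤ j) (hjT : j ≤ T)
    (h0 : 0 < e j) (he : ∀ u, j ≤ u → e (u + 1) = (1 + 2 / DD β (u + 1)) * e u) :
    Ap (((T : ℝ) - j) * (4 / (β * a))) (e T) (e j) := by
  induction T, hjT using Nat.le_induction with
  | base => simpa using Ap.rfl' h0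
  | succ T hT ih =>
    have hD := DD_pos hβ (show 2 ≤ T + 1 by omega)
    have hD' := DD_pos' hβ (show 2 ≤ T + 1 by omega)
    rw [he T hT]
    have hT' : (j : ℝ) ≤ T := by exact_mod_cast hT
    have h1 : 2 / DD β (T + 1) ≤ 4 / (β * a) := by
      rw [div_le_div_iff₀ hD' (by positivity)]
      push_cast at hD
      nlinarith
    have h2 : Ap (2 / DD β (T + 1)) (1 + 2 / DD β (T + 1)) 1 := by
      have hp : 0 < 2 / DD β (T + 1) := by positivity
      refine ⟨by positivity, one_pos, ?_⟩
      rw [Real.log_one, sub_zero, abs_of_nonneg (Real.log_nonneg (by linarith))]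
      have := Real.log_le_sub_one_of_pos (show 0 < 1 + 2 / DD β (T + 1) by positivity)
      linarith
    have := h2.mul ih
    rw [one_mul] at this
    refine this.mono ?_
    push_cast
    nlinarith

/-! ### Probabilities -/

/-- the uniform error constant -/
noncomputable def LL (β : ℝ) (m : ℕ) : ℝ :=
  ((4 + β) / β + 1) + 1 / β + m * (4 / β) + m + 2 * ((4 + β) / β)

lemma LL_bd {β : ℝ} (hβ : 0 < β) (m : ℕ) : ((4 + β) / β + 1) ≤ LL β m ∧ 1 / β ≤ LL β m ∧
    m * (4 / β) ≤ LL β m ∧ (m : ℝ) ≤ LL β m ∧ 2 * ((4 + β) / β) ≤ LL β m ∧ 0 < LL β m := by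
  have h1 : 0 < (4 + β) / β := by positivity
  have h2 : 0 < 1 / β := by positivity
  have h3 : 0 ≤ m * (4 / β) := by positivity
  have h4 : (0 : ℝ) ≤ m := by positivity
  unfold LL
  refine ⟨?_, ?_, ?_, ?_, ?_, ?_⟩ <;> linarith

lemma Dep_ind (s i M : ℕ) (h : s ≤ M) : Dep M (fun g => if g s = i then (1 : ℝ) else 0) := by
  intro g h' hh
  simp only [hh s h]

lemma F_ap {β : ℝ} (hβ : 0 < β) (m : ℕ) {a : ℝ} (ha : 0 < a) {i t : ℕ} (hi : 1 ≤ i) (hai : a ≤ i)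
    (hit : i ≤ t) :
    Ap (LL β m / a + LL β m / a) (EE β t (fun g => (dg g t i : ℝ) + β))
      ((1 + β) * ((t : ℝ) / i) ^ (1 / (2 + β))) := by
  obtain ⟨l1, l2, l3, l4, l5, l0⟩ := LL_bd hβ m
  have hi' : (1 : ℝ) ≤ i := by exact_mod_cast hi
  have hb : EE β i (fun g => (dg g i i : ℝ) + β) = (if 2 ≤ i then 1 else 0) + β := by
    rw [EE_congr β i hi _ (fun _ => (if 2 ≤ i then 1 else 0) + β), EE_one hβ hi]
    intro g hg
    rw [dg_self hg i rfl]; push_cast; rfl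
  have hb2 : Ap (LL β m / a) ((if 2 ≤ i then 1 else 0) + β) (1 + β) := by
    by_cases h : 2 ≤ i
    · rw [if_pos h]
      exact (Ap.rfl' (by linarith)).mono (by positivity)
    · rw [if_neg h, zero_add]
      obtain rfl : i = 1 := by omega
      have := Ap.near hβ (le_refl β) (show β ≤ 1 + β by linarith)
        (show |β - (1 + β)| ≤ 1 by rw [abs_le]; constructor <;> linarith)
      refine this.mono ?_
      rw [le_div_iff₀ ha]
      have : 0 < 1 / β := by positivity
      push_cast at hai
      nlinarith
  have hg := grow_ap hβ (fun u => EE β u (fun g => (dg g u i : ℝ) + β)) hi hit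
    (by simp only [hb]; exact hb2.1) (by
      intro u hu
      have := EE_grow hβ (show 1 ≤ u by omega) (fun _ => 1) (fun _ _ _ => rfl) hi hu
      simpa only [one_mul] using this)
  simp only [hb] at hg
  have hr : 0 < ((t : ℝ) / i) ^ (1 / (2 + β)) := by
    have : (0 : ℝ) < t := by exact_mod_cast (by omega : 0 < t)
    positivity
  refine (hg.trans (hb2.mul (Ap.rfl' hr))).mono ?_
  have : ((4 + β) / β + 1) / (i : ℝ) ≤ LL β m / a := by gcongr
  linarith

lemma D_ap {β : ℝ} (hβ : 0 < β) (m : ℕ) {a : ℝ} (ha : 0 < a) {t : ℕ} (ht : 2 ≤ t) (hat : a ≤ t) :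
    Ap (LL β m / a) (DD β t) ((2 + β) * t) := by
  obtain ⟨l1, l2, l3, l4, l5, l0⟩ := LL_bd hβ m
  have h := DD_pos hβ ht
  have hD : DD β t = (2 + β) * t - (4 + β) := by unfold DD; ring
  have := Ap.near (a := β / 2 * a) (k := 4 + β) (x := DD β t) (y := (2 + β) * t) (by positivity)
    (by nlinarith) (by nlinarith) (by rw [hD, abs_le]; constructor <;> linarith)
  refine this.mono ?_
  have e : (4 + β) / (β / 2 * a) = 2 * ((4 + β) / β) / a := by field_simp
  rw [e]; gcongr

lemma R_ap {β : ℝ} (hβ : 0 < β) (m : ℕ) {a : ℝ} (ha : 0 < a) {i j s : ℕ} (hi : 1 ≤ i)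
    (hai : a ≤ i) (his : i < s) (hij : i < j) (hsj : s ≤ j + m) {I B : ℝ}
    (hI : Ap (LL β m / a) i I) (hB : ∀ x : ℕ, x = s ∨ x = s - 1 ∨ x = j → Ap (LL β m / a) x B) :
    Ap (8 * (LL β m / a)) (EE β (max s j)
        (fun g => (if g s = i then (1 : ℝ) else 0) * ((dg g (max s j) j : ℝ) + β)))
      ((1 + β) * ((1 + β) * (B * I⁻¹) ^ (1 / (2 + β)) * ((2 + β) * B)⁻¹)) := by
  obtain ⟨l1, l2, l3, l4, l5, l0⟩ := LL_bd hβ m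
  set δ := LL β m / a with hδ
  have hδ0 : 0 < δ := by positivity
  have hq : 0 < 2 + β := by linarith
  have hα : 0 ≤ 1 / (2 + β) := by positivity
  have hα1 : 1 / (2 + β) ≤ 1 := by rw [div_le_one hq]; linarith
  have hβ1 : 0 < 1 + β := by linarith
  have his' : (i : ℝ) ≤ s := by exact_mod_cast his.le
  have hij' : (i : ℝ) ≤ j := by exact_mod_cast hij.le
  have hDs : Ap (δ + δ) (DD β s) ((2 + β) * B) := by
    have h1 := D_ap hβ m ha (show 2 ≤ s by omega) (hai.trans his')
    have h2 := (Ap.rfl' hq).mul (hB s (Or.inl rfl))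
    refine (h1.trans h2).mono ?_
    linarith
  have hF : ∀ x : ℕ, i ≤ x → (x = s ∨ x = s - 1 ∨ x = j) →
      Ap (4 * δ) (EE β x (fun g => (dg g x i : ℝ) + β))
        ((1 + β) * (B * I⁻¹) ^ (1 / (2 + β))) := by
    intro x hx hx'
    have h1 := F_ap hβ m ha hi hai hx
    have h2 := (Ap.rfl' hβ1).mul (((hB x hx').mul hI.inv).rpow hα hα1)
    rw [← div_eq_mul_inv] at h2
    exact (h1.trans h2).mono (by linarith)
  rcases le_or_gt s j with h | h
  · rw [max_eq_right h]
    have e1 : EE β j (fun g => (if g s = i then (1 : ℝ) else 0) * ((dg g j j : ℝ) + β)) =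
        (1 + β) * (EE β (s - 1) (fun g => (dg g (s - 1) i : ℝ) + β) * (DD β s)⁻¹) := by
      rw [EE_congr β j (by omega) _ (fun g => (1 + β) * (if g s = i then (1 : ℝ) else 0)),
        EE_smul β j (by omega), EE_stab hβ (show 1 ≤ s by omega) h _ (Dep_ind s i s le_rfl)]
      · congr 1
        obtain ⟨r, rfl⟩ : ∃ r, s = r + 1 := ⟨s - 1, by omega⟩
        have := EE_hit (β := β) (show 1 ≤ r by omega) (fun _ => 1) (fun _ _ _ => rfl) hi
          (show i ≤ r by omega)
        simp only [one_mul] at this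
        rw [this, div_eq_mul_inv]; rfl
      · intro g hg
        rw [dg_self hg j rfl, if_pos (show 2 ≤ j by omega)]; push_cast; ring
    rw [e1]
    exact ((Ap.rfl' hβ1).mul ((hF (s - 1) (by omega) (by simp)).mul hDs.inv)).mono (by linarith)
  · rw [max_eq_left h.le]
    have e1 : EE β s (fun g => (if g s = i then (1 : ℝ) else 0) * ((dg g s j : ℝ) + β)) =
        EE β (s - 1) (fun g => ((dg g (s - 1) i : ℝ) + β) * ((dg g (s - 1) j : ℝ) + β)) *
          (DD β s)⁻¹ := by
      obtain ⟨r, rfl⟩ : ∃ r, s = r + 1 := ⟨s - 1, by omega⟩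
      have := EE_hit (β := β) (show 1 ≤ r by omega) (fun g => (dg g r j : ℝ) + β)
          (fun g k _ => by simp only [dg_update]) hi (show i ≤ r by omega)
      rw [Nat.add_sub_cancel, ← div_eq_mul_inv]
      simp_rw [mul_comm ((dg _ r i : ℝ) + β)]
      rw [← this]
      congr 1; funext g
      rw [dg_succ g r j (by omega)]
      by_cases hg : g (r + 1) = i
      · rw [if_pos hg, if_neg (by omega)]; push_cast; ring
      · rw [if_neg hg]; ring
    have e2 : EE β j (fun g => ((dg g j i : ℝ) + β) * ((dg g j j : ℝ) + β)) =
        (1 + β) * EE β j (fun g => (dg g j i : ℝ) + β) := by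
      rw [← EE_smul β j (by omega)]
      refine EE_congr β j (by omega) _ _ fun g hg => ?_
      rw [dg_self hg j rfl, if_pos (show 2 ≤ j by omega)]; push_cast; ring
    have hFj := (Ap.rfl' hβ1).mul (hF j hij.le (by simp))
    have hH := grow2_ap hβ
      (fun u => EE β u (fun g => ((dg g u i : ℝ) + β) * ((dg g u j : ℝ) + β)))
      (show 1 ≤ j by omega) ha (hai.trans hij') (show j ≤ s - 1 by omega)
      (by simp only [e2]; exact hFj.1)
      (fun u hu => EE_grow2 hβ (by omega) hi (by omega) (by omega) hu hij.ne)
    simp only [e2] at hH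
    have hd : (((s - 1 : ℕ) : ℝ) - j) * (4 / (β * a)) ≤ δ := by
      have h1 : ((s - 1 : ℕ) : ℝ) ≤ (j : ℝ) + m := by exact_mod_cast (by omega : s - 1 ≤ j + m)
      calc (((s - 1 : ℕ) : ℝ) - j) * (4 / (β * a)) ≤ m * (4 / (β * a)) := by gcongr; linarith
        _ = m * (4 / β) / a := by field_simp
        _ ≤ δ := by rw [hδ]; gcongr
    rw [e1, ← mul_assoc]
    exact ((hH.trans hFj).mul hDs.inv).mono (by linarith)

lemma Q_ap {β : ℝ} (hβ : 0 < β) (m : ℕ) {a : ℝ} (ha : 0 < a) {i j s t N : ℕ} (hi : 1 ≤ i)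
    (hai : a ≤ i) (his : i < s) (hij : i < j) (hsj : s ≤ j + m) (hst : s < t) (hjt : j < t)
    (htN : t ≤ N) {I B T : ℝ}
    (hI : Ap (LL β m / a) i I) (hB : ∀ x : ℕ, x = s ∨ x = s - 1 ∨ x = j → Ap (LL β m / a) x B)
    (hT : ∀ x : ℕ, x = t ∨ x = t - 1 → Ap (LL β m / a) x T) :
    Ap (13 * (LL β m / a)) (EE β N
        (fun g => (if g s = i then (1 : ℝ) else 0) * (if g t = j then (1 : ℝ) else 0)))
      ((1 + β) * ((1 + β) * (B * I⁻¹) ^ (1 / (2 + β)) * ((2 + β) * B)⁻¹) *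
        (T * B⁻¹) ^ (1 / (2 + β)) * ((2 + β) * T)⁻¹) := by
  have hR := R_ap hβ m ha hi hai his hij hsj hI hB
  obtain ⟨l1, l2, l3, l4, l5, l0⟩ := LL_bd hβ m
  set δ := LL β m / a with hδ
  have hδ0 : 0 < δ := by positivity
  have hq : 0 < 2 + β := by linarith
  have hα : 0 ≤ 1 / (2 + β) := by positivity
  have hα1 : 1 / (2 + β) ≤ 1 := by rw [div_le_one hq]; linarith
  have hit' : (i : ℝ) ≤ t := by exact_mod_cast (by omega : i ≤ t)
  have hDt : Ap (δ + δ) (DD β t) ((2 + β) * T) := by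
    have h1 := D_ap hβ m ha (show 2 ≤ t by omega) (hai.trans hit')
    have h2 := (Ap.rfl' hq).mul (hT t (Or.inl rfl))
    refine (h1.trans h2).mono ?_
    linarith
  have e1 : EE β N (fun g => (if g s = i then (1 : ℝ) else 0) * (if g t = j then (1 : ℝ) else 0)) =
      EE β (t - 1) (fun g => (if g s = i then (1 : ℝ) else 0) * ((dg g (t - 1) j : ℝ) + β)) *
        (DD β t)⁻¹ := by
    rw [EE_stab hβ (show 1 ≤ t by omega) htN]
    · obtain ⟨r, rfl⟩ : ∃ r, t = r + 1 := ⟨t - 1, by omega⟩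
      rw [EE_hit (β := β) (show 1 ≤ r by omega) _
          (fun g k _ => (Dep_ind s i r (by omega)).upd g le_rfl k) (by omega) (show j ≤ r by omega),
          div_eq_mul_inv, Nat.add_sub_cancel]
    · intro g h hh
      simp only [hh s hst.le, hh t le_rfl]
  have hu1 : 1 ≤ max s j := by omega
  have hG := grow_ap hβ (fun u => EE β u (fun g => (if g s = i then (1 : ℝ) else 0) *
      ((dg g u j : ℝ) + β))) hu1 (show max s j ≤ t - 1 by omega) hR.1
      (fun u hu => EE_grow hβ (by omega) _ (Dep_ind s i u (by omega)) (by omega) (by omega))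
  have hx : Ap δ ((max s j : ℕ) : ℝ) B := by
    apply hB
    rcases le_total s j with h | h
    · rw [max_eq_right h]; simp
    · rw [max_eq_left h]; simp
  have hxi : a ≤ ((max s j : ℕ) : ℝ) :=
    hai.trans (by exact_mod_cast (by omega : i ≤ max s j))
  have hd : ((4 + β) / β + 1) / ((max s j : ℕ) : ℝ) ≤ δ := by rw [hδ]; gcongr
  have h2 := ((hT (t - 1) (by simp)).mul hx.inv).rpow hα hα1
  rw [← div_eq_mul_inv] at h2
  rw [e1]
  refine ((hG.trans (hR.mul h2)).mul hDt.inv).mono ?_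
  linarith

/-! ### Multiplicities -/

/-- block of tree vertices -/
def Bl (m a : ℕ) : Finset ℕ := Finset.Ioc ((a - 1) * m) (a * m)

lemma Bl_card (m a : ℕ) (ha : 1 ≤ a) : (Bl m a).card = m := by
  obtain ⟨k, rfl⟩ : ∃ k, a = k + 1 := ⟨a - 1, by omega⟩
  unfold Bl
  rw [Nat.card_Ioc, Nat.add_sub_cancel, add_mul, one_mul]; omega

lemma blk_iff {m t a : ℕ} (hm : 1 ≤ m) (ht : 1 ≤ t) (ha : 1 ≤ a) : blk m t = a ↔ t ∈ Bl m a := by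
  obtain ⟨k, rfl⟩ : ∃ k, a = k + 1 := ⟨a - 1, by omega⟩
  unfold blk Bl
  rw [Finset.mem_Ioc, Nat.add_sub_cancel, add_left_inj, Nat.div_eq_iff (by omega), add_mul, one_mul]
  omega

lemma Bl_lt {m a b i s : ℕ} (hab : a < b) (hi : i ∈ Bl m a) (hs : s ∈ Bl m b) : i < s := by
  unfold Bl at *
  rw [Finset.mem_Ioc] at *
  have : a * m ≤ (b - 1) * m := Nat.mul_le_mul_right m (by omega)
  omega

/-- multiplicity for plain functions -/
def multg (n m : ℕ) (g : ℕ → ℕ) (a b : ℕ) : ℕ :=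
  ((Finset.Icc 2 (n * m)).filter (fun t =>
    (blk m t = a ∧ blk m (g t) = b) ∨ (blk m t = b ∧ blk m (g t) = a))).card

lemma multg_eq {n m : ℕ} (hm : 1 ≤ m) {g : ℕ → ℕ} (hg : VV (n * m) g) {a b : ℕ} (ha : 1 ≤ a)
    (hab : a < b) (hb : b ≤ n) :
    (multg n m g a b : ℝ) = ∑ s ∈ Bl m b, ∑ i ∈ Bl m a, if g s = i then (1 : ℝ) else 0 := by
  simp_rw [Finset.sum_ite_eq]
  rw [← Finset.sum_filter, Finset.sum_const, nsmul_eq_mul, mul_one]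
  unfold multg
  congr 2
  ext t
  rw [Finset.mem_filter, Finset.mem_filter, Finset.mem_Icc]
  constructor
  · rintro ⟨ht, h⟩
    have hgt := hg t ht.1 ht.2
    rw [blk_iff hm (by omega) ha, blk_iff hm hgt.1 (by omega), blk_iff hm (by omega) (by omega),
      blk_iff hm hgt.1 ha] at h
    rcases h with h | h
    · exact absurd (Bl_lt hab h.1 h.2) (by omega)
    · exact h
  · rintro ⟨ht, h⟩
    have h2 : 2 ≤ t ∧ t ≤ n * m := by
      have h0 := Bl_lt hab h ht
      unfold Bl at ht h
      rw [Finset.mem_Ioc] at ht h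
      have : b * m ≤ n * m := Nat.mul_le_mul_right m hb
      refine ⟨?_, by omega⟩
      have : 1 * m ≤ (b - 1) * m := Nat.mul_le_mul_right m (by omega)
      omega
    have hgt := hg t h2.1 h2.2
    refine ⟨h2, Or.inr ?_⟩
    rw [blk_iff hm (by omega) (by omega), blk_iff hm hgt.1 ha]
    exact ⟨ht, h⟩

lemma Bl_near {m a x : ℕ} (h1 : (a - 1) * m ≤ x) (h2 : x ≤ a * m) (ha : 1 ≤ a) :
    |(x : ℝ) - a * m| ≤ m := by
  obtain ⟨k, rfl⟩ : ∃ k, a = k + 1 := ⟨a - 1, by omega⟩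
  rw [Nat.add_sub_cancel] at h1
  have h1' : (k : ℝ) * m ≤ x := by exact_mod_cast h1
  have h2' : (x : ℝ) ≤ (k + 1) * m := by exact_mod_cast h2
  push_cast
  rw [abs_le]
  constructor <;> nlinarith

lemma main_alg {β : ℝ} (hβ : 0 < β) {m a b c : ℝ} (hm : 0 < m) (ha : 0 < a) (hb : 0 < b)
    (hc : 0 < c) :
    m ^ 4 * ((1 + β) * ((1 + β) * ((b * m) * (a * m)⁻¹) ^ (1 / (2 + β)) * ((2 + β) * (b * m))⁻¹) *
        ((c * m) * (b * m)⁻¹) ^ (1 / (2 + β)) * ((2 + β) * (c * m))⁻¹) =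
    (m ^ 2 * (1 + β) ^ 2 / (2 + β) ^ 2) * (a * b ^ (2 + β) * c ^ (1 + β)) ^ (-(1 / (2 + β))) := by
  have hq : 0 < 2 + β := by linarith
  have e1 : b * m * (a * m)⁻¹ = b / a := by field_simp
  have e2 : c * m * (b * m)⁻¹ = c / b := by field_simp
  rw [e1, e2, Real.div_rpow hb.le ha.le, Real.div_rpow hc.le hb.le,
    Real.mul_rpow (by positivity) (by positivity), Real.mul_rpow (by positivity) (by positivity),
    ← Real.rpow_mul hb.le, ← Real.rpow_mul hc.le]
  have e3 : (2 + β) * -(1 / (2 + β)) = -1 := by field_simp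
  have e4 : (1 + β) * -(1 / (2 + β)) = 1 / (2 + β) - 1 := by field_simp; ring
  rw [e3, e4, Real.rpow_neg ha.le, Real.rpow_neg_one, Real.rpow_sub_one hc.ne']
  have p1 : 0 < a ^ (1 / (2 + β)) := by positivity
  have p2 : 0 < b ^ (1 / (2 + β)) := by positivity
  have p3 : 0 < c ^ (1 / (2 + β)) := by positivity
  generalize a ^ (1 / (2 + β)) = x at *
  generalize b ^ (1 / (2 + β)) = y at *
  generalize c ^ (1 / (2 + β)) = z at *
  field_simp

lemma sum_const4 (A B C D : Finset ℕ) (x : ℝ) (m : ℕ) (hA : A.card = m) (hB : B.card = m)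
    (hC : C.card = m) (hD : D.card = m) :
    ∑ _s ∈ A, ∑ _i ∈ B, ∑ _t ∈ C, ∑ _j ∈ D, x = (m : ℝ) ^ 4 * x := by
  simp [hA, hB, hC, hD]; ring

/-- Expected number of pairs `(v_b,v_a), (v_c,v_b)` of adjacent half-edges in `G^n_{m,β}`
(common vertex of middle index). -/
theorem expected_adjacent_pairs_middle_index (β : ℝ) (hβ : 0 < β) (m : ℕ) (hm : 1 ≤ m) :
    ∃ K : ℝ, 0 < K ∧ ∀ n : ℕ, 1 ≤ n → ∀ a b c : ℕ, 1 ≤ a → a < b → b < c → c ≤ n →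
      ∃ θ : ℝ, |θ| ≤ K / (a : ℝ) ∧
        moriE (n * m) β (fun f => (mult n m f a b : ℝ) * (mult n m f b c : ℝ)) =
          ((m : ℝ) ^ 2 * (1 + β) ^ 2 / (2 + β) ^ 2)
            * ((a : ℝ) * (b : ℝ) ^ (2 + β) * (c : ℝ) ^ (1 + β)) ^ (-(1 / (2 + β)))
            * (1 + θ) := by
  obtain ⟨l1, l2, l3, l4, l5, l0⟩ := LL_bd hβ m
  refine ⟨13 * LL β m * Real.exp (13 * LL β m), by positivity, ?_⟩
  intro n hn a b c ha hab hbc hcn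
  have hnm : 1 ≤ n * m := Nat.mul_pos hn hm
  have ha' : (1 : ℝ) ≤ a := by exact_mod_cast ha
  have ha0 : (0 : ℝ) < a := by linarith
  have hb0 : (0 : ℝ) < b := by exact_mod_cast (by omega : 0 < b)
  have hc0 : (0 : ℝ) < c := by exact_mod_cast (by omega : 0 < c)
  have hm0 : (0 : ℝ) < m := by exact_mod_cast hm
  have hE : moriE (n * m) β (fun f => (mult n m f a b : ℝ) * (mult n m f b c : ℝ)) =
      ∑ s ∈ Bl m b, ∑ i ∈ Bl m a, ∑ t ∈ Bl m c, ∑ j ∈ Bl m b, EE β (n * m)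
        (fun g => (if g s = i then (1 : ℝ) else 0) * (if g t = j then (1 : ℝ) else 0)) := by
    have h1 := moriE_eq β (n * m) hnm (fun g => (multg n m g a b : ℝ) * (multg n m g b c : ℝ))
    refine Eq.trans h1 ?_
    rw [EE_congr β (n * m) hnm _ (fun g => ∑ s ∈ Bl m b, ∑ i ∈ Bl m a, ∑ t ∈ Bl m c, ∑ j ∈ Bl m b,
      (if g s = i then (1 : ℝ) else 0) * (if g t = j then (1 : ℝ) else 0))]
    · rw [EE_sum β _ hnm]
      refine Finset.sum_congr rfl fun s _ => ?_
      rw [EE_sum β _ hnm]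
      refine Finset.sum_congr rfl fun i _ => ?_
      rw [EE_sum β _ hnm]
      refine Finset.sum_congr rfl fun t _ => ?_
      rw [EE_sum β _ hnm]
    · intro g hg
      rw [multg_eq hm hg ha hab (by omega), multg_eq hm hg (by omega) hbc hcn]
      simp_rw [Finset.sum_mul, Finset.mul_sum]
  set M : ℝ := ((1 + β) * ((1 + β) * (((b : ℝ) * m) * ((a : ℝ) * m)⁻¹) ^ (1 / (2 + β)) *
      ((2 + β) * ((b : ℝ) * m))⁻¹) *
      (((c : ℝ) * m) * ((b : ℝ) * m)⁻¹) ^ (1 / (2 + β)) * ((2 + β) * ((c : ℝ) * m))⁻¹) with hM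
  have hM0 : 0 < M := by
    have : 0 < 2 + β := by linarith
    positivity
  have hQ : ∀ s ∈ Bl m b, ∀ i ∈ Bl m a, ∀ t ∈ Bl m c, ∀ j ∈ Bl m b,
      Ap (13 * (LL β m / a)) (EE β (n * m)
        (fun g => (if g s = i then (1 : ℝ) else 0) * (if g t = j then (1 : ℝ) else 0))) M := by
    intro s hs i hi t ht j hj
    have his := Bl_lt hab hi hs
    have hij := Bl_lt hab hi hj
    have hst := Bl_lt hbc hs ht
    have hjt := Bl_lt hbc hj ht
    have hcm : c * m ≤ n * m := Nat.mul_le_mul_right m hcn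
    have hai : a ≤ i := by
      unfold Bl at hi
      rw [Finset.mem_Ioc] at hi
      have : (a - 1) * 1 ≤ (a - 1) * m := Nat.mul_le_mul_left _ hm
      omega
    unfold Bl at hs hi ht hj
    rw [Finset.mem_Ioc] at hs hi ht hj
    have hbm : b * m = (b - 1) * m + m := by
      obtain ⟨k, rfl⟩ : ∃ k, b = k + 1 := ⟨b - 1, by omega⟩
      rw [Nat.add_sub_cancel, add_mul, one_mul]
    have near : ∀ d x : ℕ, a ≤ d → (d - 1) * m ≤ x → x ≤ d * m → a ≤ x →
        Ap (LL β m / a) (x : ℝ) ((d : ℝ) * m) := by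
      intro d x had h1 h2 h3
      have h4 : a ≤ d * m := h3.trans h2
      refine (Ap.near ha0 (by exact_mod_cast h3) (by exact_mod_cast h4)
        (Bl_near h1 h2 (by omega))).mono ?_
      gcongr
    refine Q_ap hβ m ha0 (by omega) (by exact_mod_cast hai) his hij (by omega) hst hjt (by omega)
      (near a i le_rfl (by omega) (by omega) hai) ?_ ?_
    · intro x hx
      exact near b x (by omega) (by omega) (by omega) (by omega)
    · intro x hx
      exact near c x (by omega) (by omega) (by omega) (by omega)
  have hc1 := Bl_card m a ha
  have hc2 := Bl_card m b (by omega)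
  have hc3 := Bl_card m c (by omega)
  have hrw : 13 * (LL β m / a) = 13 * LL β m / a := by ring
  rw [hrw] at hQ
  rw [hE, ← main_alg hβ hm0 ha0 hb0 hc0, ← hM]
  apply theta_bound (by positivity) ha' (by positivity)
  · rw [mul_assoc, ← sum_const4 (Bl m b) (Bl m a) (Bl m c) (Bl m b) _ m hc2 hc1 hc3 hc2]
    refine Finset.sum_le_sum fun s hs => Finset.sum_le_sum fun i hi => Finset.sum_le_sum
      fun t ht => Finset.sum_le_sum fun j hj => ?_
    exact (hQ s hs i hi t ht j hj).bounds.1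
  · rw [mul_assoc, ← sum_const4 (Bl m b) (Bl m a) (Bl m c) (Bl m b) _ m hc2 hc1 hc3 hc2]
    refine Finset.sum_le_sum fun s hs => Finset.sum_le_sum fun i hi => Finset.sum_le_sum
      fun t ht => Finset.sum_le_sum fun j hj => ?_
    exact (hQ s hs i hi t ht j hj).bounds.2
end
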